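/- Let M be a compact boundaryless smooth manifold. (i) For a smooth map f : M → S^p, the framed cobordism class of the Pontryagin manifold (f^{-1}(y), f^*w) does not depend on the choice of regular value y ∈ S^p or of positively oriented basis w of T_y S^p. (ii) Two smooth maps f, g : M → S^p are smoothly homotopic if and only if their Pontryagin manifolds are framed cobordant. Hence the Pontryagin construction gives a bijection between [M, S^p], the set of smooth maps M → S^p up to smooth homotopy, and the set Π^p_fr(M) of framed cobordism classes of compact codimension-p framed submanifolds of M. -/

import Mathlib

/-!
# Statement 17: The Pontryagin–Thom correspondence `[M, S^p] ≅ Π^p_fr(M)`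
-/

open scoped RealInnerProductSpace Topology Topology.Homotopy unitInterval
open Function Set Metric

noncomputable section

namespace Paper


variable {E : Type*} [NormedAddCommGroup E] [InnerProductSpace ℝ E]

/-- The tangent space of a subset `M ⊆ E` at `x`: the span of all velocity vectors at
`x` of curves lying in `M`. -/
def SubTangent {E' : Type*} [NormedAddCommGroup E'] [NormedSpace ℝ E']
    (M : Set E') (x : E') : Submodule ℝ E' :=
  Submodule.span ℝ {v | ∃ γ : ℝ → E', (∀ t, γ t ∈ M) ∧ γ 0 = x ∧ HasDerivAt γ v 0}

/-- Smoothness of a map on a subset: local extendability to smooth maps on open sets. -/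
def SmoothOnSet {E' G : Type*} [NormedAddCommGroup E'] [NormedSpace ℝ E']
    [NormedAddCommGroup G] [NormedSpace ℝ G] (f : E' → G) (N : Set E') : Prop :=
  ∀ x ∈ N, ∃ (U : Set E') (g : E' → G), IsOpen U ∧ x ∈ U ∧
    ContDiffOn ℝ (⊤ : ℕ∞) g U ∧ Set.EqOn f g (N ∩ U)

/-- `M` is a smooth `m`-dimensional submanifold (without boundary) of `E'`:
locally a regular level set of a smooth submersion. -/
def IsSubmanifold {E' : Type*} [NormedAddCommGroup E'] [NormedSpace ℝ E']
    (M : Set E') (m : ℕ) : Prop :=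
  ∀ x ∈ M, ∃ (U : Set E')
      (Φ : E' → EuclideanSpace ℝ (Fin (Module.finrank ℝ E' - m))),
    IsOpen U ∧ x ∈ U ∧ ContDiffOn ℝ (⊤ : ℕ∞) Φ U ∧
    (∀ y ∈ U, Function.Surjective (fderiv ℝ Φ y)) ∧
    U ∩ M = U ∩ Φ ⁻¹' {0}

/-- `L` is a derivative of `f` at `x ∈ M` along `M` (the derivative of a local smooth
extension of `f|_M`). -/
def HasDerivOn {E' G : Type*} [NormedAddCommGroup E'] [NormedSpace ℝ E']
    [NormedAddCommGroup G] [NormedSpace ℝ G]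
    (f : E' → G) (M : Set E') (x : E') (L : E' →L[ℝ] G) : Prop :=
  ∃ g : E' → G, (∀ᶠ y in nhds x, y ∈ M → f y = g y) ∧ f x = g x ∧ HasFDerivAt g L x

/-- A framing of a submanifold `N ⊆ M` of codimension `p`: a smooth field of
bases of the orthogonal complement of `T_xN` inside `T_xM`. -/
structure IsFraming (M : Set E) (N : Set E) (p : ℕ) (ν : Fin p → E → E) : Prop where
  smooth : ∀ i, SmoothOnSet (ν i) N
  mem_tangent : ∀ i, ∀ x ∈ N, ν i x ∈ SubTangent M x
  orth : ∀ i, ∀ x ∈ N, ∀ v ∈ SubTangent N x, ⟪ν i x, v⟫ = 0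
  indep : ∀ x ∈ N, LinearIndependent ℝ fun i => ν i x
  spans : ∀ x ∈ N,
    SubTangent N x ⊔ Submodule.span ℝ (Set.range fun i => ν i x) = SubTangent M x

/-- `(N, ν)` is a compact framed submanifold of `M` of codimension `p`
(`m` denotes the dimension of `M`). -/
structure IsFramedSubmanifold (M : Set E) (m : ℕ) (N : Set E) (p : ℕ)
    (ν : Fin p → E → E) : Prop where
  subset : N ⊆ M
  compact : IsCompact N
  submanifold : IsSubmanifold N (m - p)
  framing : IsFraming M N p ν

/-- The unit `p`-sphere in `ℝ^{p+1}`. -/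
def sphereSet (p : ℕ) : Set (EuclideanSpace ℝ (Fin (p + 1))) :=
  Metric.sphere 0 1

/-- `w` is a positively oriented basis of the tangent space `T_y S^p`. -/
def PosOrientedTangentBasis (p : ℕ) (y : EuclideanSpace ℝ (Fin (p + 1)))
    (w : Fin p → EuclideanSpace ℝ (Fin (p + 1))) : Prop :=
  (∀ i, ⟪y, w i⟫ = 0) ∧
  0 < Matrix.det (Matrix.of fun i j => (Fin.cons y w : Fin (p+1) → _) i j)

/-- `y` is a regular value of `f|_M`. -/
def IsRegularValue (p : ℕ) (f : E → EuclideanSpace ℝ (Fin (p + 1))) (M : Set E)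
    (y : EuclideanSpace ℝ (Fin (p + 1))) : Prop :=
  ∀ x ∈ M, f x = y → ∃ L, HasDerivOn f M x L ∧
    SubTangent (sphereSet p) y ≤ Submodule.map (L : E →ₗ[ℝ] _) (SubTangent M x)

/-- `(N, ν)` is the Pontryagin manifold `(f⁻¹(y), f^*w)` of `f`. -/
structure IsPontryaginManifold (m p : ℕ) (f : E → EuclideanSpace ℝ (Fin (p + 1)))
    (M : Set E) (y : EuclideanSpace ℝ (Fin (p + 1)))
    (w : Fin p → EuclideanSpace ℝ (Fin (p + 1)))
    (N : Set E) (ν : Fin p → E → E) : Prop where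
  framed : IsFramedSubmanifold M m N p ν
  mem_sphere : y ∈ sphereSet p
  basis : PosOrientedTangentBasis p y w
  regular : IsRegularValue p f M y
  preimage : N = {x ∈ M | f x = y}
  pullback : ∀ x ∈ N, ∃ L, HasDerivOn f M x L ∧ ∀ i, L (ν i x) = w i

/-- Smooth homotopy of maps on `M` with values in `target`. -/
def SmoothHomotopicOn {G : Type*} [NormedAddCommGroup G] [NormedSpace ℝ G]
    (M : Set E) (f g : E → G) (target : Set G) : Prop :=
  ∃ H : E × ℝ → G, SmoothOnSet H (M ×ˢ (univ : Set ℝ)) ∧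
    (∀ x ∈ M, ∀ t : ℝ, H (x, t) ∈ target) ∧
    (∀ x ∈ M, H (x, 0) = f x) ∧ (∀ x ∈ M, H (x, 1) = g x)

/-- The product inner product on `E × ℝ`. -/
def prodInner (u v : E × ℝ) : ℝ := ⟪u.1, v.1⟫ + u.2 * v.2

/-- Framed cobordism of framed submanifolds `(N, ν)`, `(N', ν')` of `M` within
`M × [0,1]`, following Milnor/Pontryagin. -/
def FramedCobordant (M : Set E) (m p : ℕ) (N : Set E) (ν : Fin p → E → E)
    (N' : Set E) (ν' : Fin p → E → E) : Prop :=
  ∃ (Xc : Set (E × ℝ)) (u : Fin p → (E × ℝ) → (E × ℝ)) (ε : ℝ),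
    0 < ε ∧ ε < 1 / 2 ∧
    IsCompact Xc ∧ Xc ⊆ M ×ˢ Icc (0 : ℝ) 1 ∧
    Xc ∩ (univ ×ˢ Iio ε) = N ×ˢ Ico (0 : ℝ) ε ∧
    Xc ∩ (univ ×ˢ Ioi (1 - ε)) = N' ×ˢ Ioc (1 - ε) 1 ∧
    IsSubmanifold (Xc ∩ (univ ×ˢ Ioo (0 : ℝ) 1)) (m - p + 1) ∧
    (∀ i, SmoothOnSet (u i) Xc) ∧
    (∀ z ∈ Xc ∩ (univ ×ˢ Ioo (0 : ℝ) 1),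
      (∀ i, u i z ∈ SubTangent (M ×ˢ (univ : Set ℝ)) z) ∧
      (∀ i, ∀ v ∈ SubTangent (Xc ∩ (univ ×ˢ Ioo (0 : ℝ) 1)) z, prodInner (u i z) v = 0) ∧
      LinearIndependent ℝ (fun i => u i z) ∧
      SubTangent (Xc ∩ (univ ×ˢ Ioo (0 : ℝ) 1)) z ⊔
          Submodule.span ℝ (Set.range fun i => u i z)
        = SubTangent (M ×ˢ (univ : Set ℝ)) z) ∧
    (∀ x t, (x, t) ∈ Xc → t < ε → ∀ i, u i (x, t) = (ν i x, 0)) ∧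
    (∀ x t, (x, t) ∈ Xc → 1 - ε < t → ∀ i, u i (x, t) = (ν' i x, 0))


variable (M : Set E) (m p : ℕ)

/-- Smooth maps `M → S^p` (ambient maps, smooth on `M`, carrying `M` into the sphere). -/
def SmoothSphereMap : Type _ :=
  {f : E → EuclideanSpace ℝ (Fin (p + 1)) //
    SmoothOnSet f M ∧ ∀ x ∈ M, f x ∈ sphereSet p}

/-- `[M, S^p]`: smooth maps up to smooth homotopy. -/
def SmoothMapClasses : Type _ :=
  Quot (fun f g : SmoothSphereMap M p => SmoothHomotopicOn M f.1 g.1 (sphereSet p))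

/-- Compact codimension-`p` framed submanifolds of `M`. -/
def FramedPair : Type _ :=
  {q : Set E × (Fin p → E → E) // IsFramedSubmanifold M m q.1 p q.2}

/-- `Π^p_fr(M)`: framed submanifolds up to framed cobordism. -/
def FramedCobordismClasses : Type _ :=
  Quot (fun a b : FramedPair M m p =>
    FramedCobordant M m p a.1.1 a.1.2 b.1.1 b.1.2)


section Part1
open scoped ContDiff
open Filter

section Basic

theorem isOpen_surj {V F : Type*} [NormedAddCommGroup V] [NormedSpace ℝ V]
    [NormedAddCommGroup F] [NormedSpace ℝ F] [FiniteDimensional ℝ V] [FiniteDimensional ℝ F] :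
    IsOpen {L : V →L[ℝ] F | Surjective L} := by
  have h := isOpen_setOfPred_nat_le_rank (𝕜 := ℝ) (E := V) (F := F) (Module.finrank ℝ F)
  convert h using 3 with L
  have h2 : Surjective L ↔ Module.finrank ℝ F ≤ Module.finrank ℝ (LinearMap.range (L : V →ₗ[ℝ] F)) := by
    constructor
    · intro hL
      have : LinearMap.range (L : V →ₗ[ℝ] F) = ⊤ := LinearMap.range_eq_top.2 hL
      rw [this, finrank_top]
    · intro hL
      have : LinearMap.range (L : V →ₗ[ℝ] F) = ⊤ :=
        Submodule.eq_top_of_finrank_eq (le_antisymm (Submodule.finrank_le _) hL)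
      exact LinearMap.range_eq_top.1 this
  rw [h2, LinearMap.rank, ← Module.finrank_eq_rank]
  exact Nat.cast_le.symm

theorem exists_smooth_inverse {V W : Type*} [NormedAddCommGroup V] [NormedSpace ℝ V]
    [NormedAddCommGroup W] [NormedSpace ℝ W] [FiniteDimensional ℝ V] [FiniteDimensional ℝ W]
    {U : Set V} (hU : IsOpen U) {θ : V → W} (hθ : ContDiffOn ℝ ∞ θ U) {x : V} (hx : x ∈ U)
    (hb : Bijective (fderiv ℝ θ x)) :
    ∃ e : OpenPartialHomeomorph V W, x ∈ e.source ∧ e.source ⊆ U ∧ (∀ z, e z = θ z) ∧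
      ContDiffOn ℝ ∞ e.symm e.target := by
  have := FiniteDimensional.complete ℝ V
  have := FiniteDimensional.complete ℝ W
  have hat : ContDiffAt ℝ ∞ θ x := hθ.contDiffAt (hU.mem_nhds hx)
  let A : V ≃L[ℝ] W := ContinuousLinearEquiv.ofBijective (fderiv ℝ θ x)
    (LinearMap.ker_eq_bot.2 hb.1) (LinearMap.range_eq_top.2 hb.2)
  have hA : (A : V →L[ℝ] W) = fderiv ℝ θ x := by ext v; rfl
  have hd : HasFDerivAt θ (A : V →L[ℝ] W) x := by
    rw [hA]; exact (hat.differentiableAt (by simp)).hasFDerivAt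
  let e0 := hat.toOpenPartialHomeomorph θ hd (by simp)
  have hcont : ContinuousOn (fderiv ℝ θ) U := hθ.continuousOn_fderiv_of_isOpen hU (by simp)
  have hO : IsOpen (U ∩ fderiv ℝ θ ⁻¹' range ((↑) : (V ≃L[ℝ] W) → V →L[ℝ] W)) :=
    hcont.isOpen_inter_preimage hU ContinuousLinearEquiv.isOpen
  set O := U ∩ fderiv ℝ θ ⁻¹' range ((↑) : (V ≃L[ℝ] W) → V →L[ℝ] W) with hOdef
  have hsrc : (e0.restrOpen O hO).source = e0.source ∩ O := rfl
  have he0 : ∀ z, e0 z = θ z := fun z => rfl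
  refine ⟨e0.restrOpen O hO, ?_, ?_, fun z => rfl, ?_⟩
  · rw [hsrc]
    exact ⟨hat.mem_toOpenPartialHomeomorph_source hd (by simp), hx, A, hA⟩
  · rw [hsrc]; exact fun z hz => hz.2.1
  · intro w hw
    have hz : (e0.restrOpen O hO).symm w ∈ (e0.restrOpen O hO).source :=
      (e0.restrOpen O hO).map_target hw
    rw [hsrc] at hz
    obtain ⟨A', hA'⟩ := hz.2.2
    have h1 : ContDiffAt ℝ ∞ θ ((e0.restrOpen O hO).symm w) :=
      hθ.contDiffAt (hU.mem_nhds hz.2.1)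
    refine (OpenPartialHomeomorph.contDiffAt_symm (f₀' := A') (e0.restrOpen O hO) hw ?_ h1).contDiffWithinAt
    rw [hA']
    exact (h1.differentiableAt (by simp)).hasFDerivAt

theorem exists_param {V F : Type*} [NormedAddCommGroup V] [NormedSpace ℝ V]
    [NormedAddCommGroup F] [NormedSpace ℝ F] [FiniteDimensional ℝ V] [FiniteDimensional ℝ F]
    {U : Set V} (hU : IsOpen U) {Φ : V → F} (hΦ : ContDiffOn ℝ ∞ Φ U) {x : V} (hx : x ∈ U)
    (hs : Surjective (fderiv ℝ Φ x)) :
    ∃ (Q : V →L[ℝ] LinearMap.ker (fderiv ℝ Φ x : V →ₗ[ℝ] F))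
      (e : OpenPartialHomeomorph V (F × LinearMap.ker (fderiv ℝ Φ x : V →ₗ[ℝ] F))),
      (∀ k : LinearMap.ker (fderiv ℝ Φ x : V →ₗ[ℝ] F), Q k = k) ∧ x ∈ e.source ∧ e.source ⊆ U ∧
      (∀ z, e z = (Φ z, Q (z - x))) ∧ ContDiffOn ℝ ∞ e.symm e.target := by
  set K := LinearMap.ker (fderiv ℝ Φ x : V →ₗ[ℝ] F) with hK
  obtain ⟨Q, hQ⟩ := Submodule.ClosedComplemented.of_finiteDimensional K
  have hsm : ContDiffOn ℝ ∞ (fun z => (Φ z, Q (z - x))) U :=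
    hΦ.prodMk (Q.contDiff.comp (contDiff_id.sub contDiff_const)).contDiffOn
  have hd : HasFDerivAt (fun z => (Φ z, Q (z - x))) ((fderiv ℝ Φ x).prod Q) x := by
    refine HasFDerivAt.prodMk ?_ ?_
    · exact ((hΦ.contDiffAt (hU.mem_nhds hx)).differentiableAt (by simp)).hasFDerivAt
    · exact Q.hasFDerivAt.comp x ((hasFDerivAt_id x).sub_const x)
  have hb : Bijective (fderiv ℝ (fun z => (Φ z, Q (z - x))) x) := by
    rw [hd.fderiv]
    constructor
    · refine (injective_iff_map_eq_zero _).2 fun v hv => ?_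
      have h1 : fderiv ℝ Φ x v = 0 := congrArg Prod.fst hv
      have h2 : Q v = 0 := congrArg Prod.snd hv
      have h3 := hQ ⟨v, h1⟩
      have : (⟨v, h1⟩ : K) = 0 := by rw [← h3]; exact h2
      exact congrArg Subtype.val this
    · rintro ⟨a, k⟩
      obtain ⟨v, hv⟩ := hs a
      refine ⟨v - (Q v : V) + k, ?_⟩
      have e1 : fderiv ℝ Φ x (Q v : V) = 0 := (Q v).2
      have e2 : fderiv ℝ Φ x (k : V) = 0 := k.2
      ext1
      · simp [hv, e1, e2]
      · simp [hQ]
  obtain ⟨e, h1, h2, h3, h4⟩ := exists_smooth_inverse hU hsm hx hb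
  exact ⟨Q, e, hQ, h1, h2, h3, h4⟩

/-- Saddle point operator for the orthogonal right inverse. -/
def kkt {V F : Type*} [NormedAddCommGroup V] [NormedSpace ℝ V]
    [NormedAddCommGroup F] [NormedSpace ℝ F] (B : V →L[ℝ] V →L[ℝ] ℝ) (A : V →L[ℝ] F) :
    (V × (F →L[ℝ] ℝ)) →L[ℝ] ((V →L[ℝ] ℝ) × F) :=
  (ContinuousLinearMap.inl ℝ (V →L[ℝ] ℝ) F).comp
    ((B.comp (ContinuousLinearMap.fst ℝ V (F →L[ℝ] ℝ))) -
    (((ContinuousLinearMap.compL ℝ V F ℝ).flip A).comp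
      (ContinuousLinearMap.snd ℝ V (F →L[ℝ] ℝ)))) +
  (ContinuousLinearMap.inr ℝ (V →L[ℝ] ℝ) F).comp
    (A.comp (ContinuousLinearMap.fst ℝ V (F →L[ℝ] ℝ)))

theorem kkt_apply {V F : Type*} [NormedAddCommGroup V] [NormedSpace ℝ V]
    [NormedAddCommGroup F] [NormedSpace ℝ F] (B : V →L[ℝ] V →L[ℝ] ℝ) (A : V →L[ℝ] F)
    (u : V) (l : F →L[ℝ] ℝ) : kkt B A (u, l) = (B u - l.comp A, A u) := by
  simp [kkt]

theorem contDiff_kkt {V F : Type*} [NormedAddCommGroup V] [NormedSpace ℝ V]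
    [NormedAddCommGroup F] [NormedSpace ℝ F] (B : V →L[ℝ] V →L[ℝ] ℝ) :
    ContDiff ℝ ∞ (fun A : V →L[ℝ] F => kkt B A) := by
  unfold kkt
  fun_prop

theorem kkt_bijective {V F : Type*} [NormedAddCommGroup V] [NormedSpace ℝ V]
    [NormedAddCommGroup F] [NormedSpace ℝ F] [FiniteDimensional ℝ V] [FiniteDimensional ℝ F]
    {B : V →L[ℝ] V →L[ℝ] ℝ} (hB : ∀ u, B u u = 0 → u = 0) {A : V →L[ℝ] F}
    (hA : Surjective A) : Bijective (kkt B A) := by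
  have hinj : Injective (kkt B A) := by
    refine (injective_iff_map_eq_zero _).2 ?_
    rintro ⟨u, l⟩ h
    rw [kkt_apply] at h
    have h1 : B u - l.comp A = 0 := congrArg Prod.fst h
    have h2 : A u = 0 := congrArg Prod.snd h
    have h3 : B u u = 0 := by
      have := congrArg (fun T : V →L[ℝ] ℝ => T u) h1
      simpa [h2] using this
    have hu := hB u h3
    subst hu
    have h4 : l = 0 := by
      ext w
      obtain ⟨v, rfl⟩ := hA w
      have := congrArg (fun T : V →L[ℝ] ℝ => T v) h1
      simpa using this
    rw [h4]; rfl
  refine ⟨hinj, ?_⟩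
  have hd : ∀ (G : Type _) [NormedAddCommGroup G] [NormedSpace ℝ G] [FiniteDimensional ℝ G],
      Module.finrank ℝ (G →L[ℝ] ℝ) = Module.finrank ℝ G := by
    intro G _ _ _
    rw [← (LinearMap.toContinuousLinearMap (𝕜 := ℝ) (E := G) (F' := ℝ)).finrank_eq]
    exact Subspace.dual_finrank_eq
  have hdF : Module.finrank ℝ (F →L[ℝ] ℝ) = Module.finrank ℝ F := by
    rw [← (LinearMap.toContinuousLinearMap (𝕜 := ℝ) (E := F) (F' := ℝ)).finrank_eq]
    exact Subspace.dual_finrank_eq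
  have key := LinearMap.injective_iff_surjective_of_finrank_eq_finrank
    (f := (kkt B A : (V × (F →L[ℝ] ℝ)) →ₗ[ℝ] ((V →L[ℝ] ℝ) × F)))
    (by rw [Module.finrank_prod, Module.finrank_prod, hdF, hd V])
  exact key.1 hinj

/-- The `B`-orthogonal right inverse of `A` applied to `c`. -/
def orthInv {V F : Type*} [NormedAddCommGroup V] [NormedSpace ℝ V]
    [NormedAddCommGroup F] [NormedSpace ℝ F] (B : V →L[ℝ] V →L[ℝ] ℝ) (A : V →L[ℝ] F) (c : F) : V :=
  ((kkt B A).inverse (0, c)).1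

theorem orthInv_spec {V F : Type*} [NormedAddCommGroup V] [NormedSpace ℝ V]
    [NormedAddCommGroup F] [NormedSpace ℝ F] [FiniteDimensional ℝ V] [FiniteDimensional ℝ F]
    {B : V →L[ℝ] V →L[ℝ] ℝ} (hB : ∀ u, B u u = 0 → u = 0) {A : V →L[ℝ] F}
    (hA : Surjective A) (c : F) :
    A (orthInv B A c) = c ∧ (∀ v, A v = 0 → B (orthInv B A c) v = 0) ∧
    ContDiffAt ℝ ∞ (fun A' => orthInv B A' c) A := by
  have hb := kkt_bijective hB hA
  let T : (V × (F →L[ℝ] ℝ)) ≃L[ℝ] ((V →L[ℝ] ℝ) × F) := ContinuousLinearEquiv.ofBijective (kkt B A)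
    (LinearMap.ker_eq_bot.2 hb.1) (LinearMap.range_eq_top.2 hb.2)
  have hT : (T : (V × (F →L[ℝ] ℝ)) →L[ℝ] ((V →L[ℝ] ℝ) × F)) = kkt B A := by ext v <;> rfl
  have hinv : (kkt B A).inverse = (T.symm : ((V →L[ℝ] ℝ) × F) →L[ℝ] (V × (F →L[ℝ] ℝ))) := by
    rw [← hT, ContinuousLinearMap.inverse_equiv]
  have h := T.apply_symm_apply (0, c)
  have h' : kkt B A (T.symm (0, c)) = (0, c) := by rw [← hT]; exact h
  have hu : orthInv B A c = (T.symm (0, c)).1 := by rw [orthInv, hinv]; rfl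
  rw [← Prod.mk.eta (p := T.symm (0, c)), kkt_apply] at h'
  have h1 := congrArg Prod.fst h'
  have h2 := congrArg Prod.snd h'
  simp only at h1 h2
  refine ⟨by rw [hu]; exact h2, fun v hv => ?_, ?_⟩
  · rw [hu]
    have := congrArg (fun T : V →L[ℝ] ℝ => T v) h1
    simpa [hv] using this
  · unfold orthInv
    have hc : ContDiffAt ℝ ∞ (fun A' : V →L[ℝ] F => (kkt B A').inverse) A := by
      have := contDiffAt_map_inverse (𝕜 := ℝ) (n := ∞) T
      rw [hT] at this
      exact this.comp A (contDiff_kkt B).contDiffAt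
    exact contDiff_fst.contDiffAt.comp A (hc.clm_apply contDiffAt_const)

end Basic
end Part1

section Part2
open scoped ContDiff
open Filter

section Sard
open MeasureTheory

/-- A locally smooth function agrees near a point with a globally smooth one. -/
theorem exists_global_ext {V F : Type*} [NormedAddCommGroup V] [NormedSpace ℝ V]
    [FiniteDimensional ℝ V] [NormedAddCommGroup F] [NormedSpace ℝ F]
    {U : Set V} (hU : IsOpen U) {g : V → F} (hg : ContDiffOn ℝ ∞ g U) {x : V} (hx : x ∈ U) :
    ∃ g' : V → F, ContDiff ℝ ∞ g' ∧ ∀ᶠ z in 𝓝 x, g' z = g z := by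
  obtain ⟨r, hr, hrU⟩ := Metric.isOpen_iff.1 hU x hx
  let b : ContDiffBump x := ⟨r / 4, r / 2, by linarith, by linarith⟩
  refine ⟨fun z => b z • g z, ?_, ?_⟩
  · rw [contDiff_iff_contDiffAt]
    intro z
    by_cases hz : z ∈ U
    · exact b.contDiff.contDiffAt.smul (hg.contDiffAt (hU.mem_nhds hz))
    · have hz' : z ∉ tsupport b := by
        rw [b.tsupport_eq]
        intro h
        exact hz (hrU (closedBall_subset_ball (by change r / 2 < r; linarith) h))
      have h0 : b =ᶠ[𝓝 z] 0 := notMem_tsupport_iff_eventuallyEq.1 hz'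
      refine (contDiffAt_const (c := (0 : F))).congr_of_eventuallyEq ?_
      filter_upwards [h0] with y hy
      simp [hy]
  · filter_upwards [b.eventuallyEq_one] with z hz
    simp [hz]

theorem null_of_locally {V W : Type*} [TopologicalSpace V] [SecondCountableTopology V]
    [MeasurableSpace W] (μ : Measure W) (f : V → W) (C : Set V)
    (h : ∀ x ∈ C, ∃ u ∈ 𝓝 x, μ (f '' (u ∩ C)) = 0) : μ (f '' C) = 0 := by
  choose! u hu hμ using h
  obtain ⟨t, htC, htc, hcov⟩ := TopologicalSpace.countable_cover_nhdsWithin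
    (f := u) (s := C) (fun x hx => mem_nhdsWithin_of_mem_nhds (hu x hx))
  have h1 : f '' C ⊆ ⋃ x ∈ t, f '' (u x ∩ C) := by
    rintro _ ⟨z, hz, rfl⟩
    obtain ⟨x, hx, hzx⟩ := mem_iUnion₂.1 (hcov hz)
    exact mem_iUnion₂.2 ⟨x, hx, z, ⟨hzx, hz⟩, rfl⟩
  refine measure_mono_null h1 ?_
  rw [measure_biUnion_null_iff htc]
  exact fun x hx => hμ x (htC hx)

theorem flat_bound {V : Type} [NormedAddCommGroup V] [NormedSpace ℝ V] [FiniteDimensional ℝ V]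
    (x0 : V) (n : ℕ) : ∀ (F : Type) [NormedAddCommGroup F] [NormedSpace ℝ F] (G : V → F),
    ContDiff ℝ ∞ G → ∃ C : ℝ, 0 ≤ C ∧ ∀ x ∈ ball x0 1, ∀ y ∈ ball x0 1,
      (∀ i, 1 ≤ i → i ≤ n → iteratedFDeriv ℝ i G x = 0) → ‖G y - G x‖ ≤ C * ‖y - x‖ ^ (n + 1) := by
  induction n with
  | zero =>
    intro F _ _ G hG
    have hc : Continuous (fun z => ‖fderiv ℝ G z‖) := (hG.continuous_fderiv (by simp)).norm
    obtain ⟨C, hC⟩ := (isCompact_closedBall x0 1).bddAbove_image hc.continuousOn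
    have hC' : ∀ z ∈ ball x0 1, ‖fderiv ℝ G z‖ ≤ C := fun z hz =>
      hC ⟨z, ball_subset_closedBall hz, rfl⟩
    refine ⟨C, (norm_nonneg _).trans (hC' x0 (mem_ball_self one_pos)), fun x hx y hy _ => ?_⟩
    rw [zero_add, pow_one]
    exact (convex_ball x0 1).norm_image_sub_le_of_norm_fderiv_le (𝕜 := ℝ)
      (fun z _ => hG.differentiable (by simp) z) hC' hx hy
  | succ n ih =>
    intro F _ _ G hG
    obtain ⟨C, hC0, hC⟩ := ih (V →L[ℝ] F) (fderiv ℝ G) (hG.fderiv_right (by simp))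
    refine ⟨C, hC0, fun x hx y hy hflat => ?_⟩
    have h0 : fderiv ℝ G x = 0 := by
      have h1 := hflat 1 le_rfl (by omega)
      have h2 := norm_iteratedFDeriv_fderiv (𝕜 := ℝ) (f := G) (x := x) (n := 0)
      rw [norm_iteratedFDeriv_zero, zero_add, h1, norm_zero] at h2
      exact norm_eq_zero.1 h2
    have hfl : ∀ i, 1 ≤ i → i ≤ n → iteratedFDeriv ℝ i (fderiv ℝ G) x = 0 := by
      intro i h1 h2
      rw [← norm_eq_zero, norm_iteratedFDeriv_fderiv, hflat (i + 1) (by omega) (by omega), norm_zero]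
    have hseg : ∀ z ∈ segment ℝ x y, ‖fderiv ℝ G z‖ ≤ C * ‖y - x‖ ^ (n + 1) := by
      intro z hz
      have hzb : z ∈ ball x0 1 := (convex_ball x0 1).segment_subset hx hy hz
      have := hC x hx z hzb hfl
      rw [h0, sub_zero] at this
      refine this.trans ?_
      have : ‖z - x‖ ≤ ‖y - x‖ := by
        rw [segment_eq_image'] at hz
        obtain ⟨θ, hθ, rfl⟩ := hz
        rw [add_sub_cancel_left, norm_smul, Real.norm_of_nonneg hθ.1]
        exact mul_le_of_le_one_left (norm_nonneg _) hθ.2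
      gcongr
    have := (convex_segment x y).norm_image_sub_le_of_norm_fderiv_le (𝕜 := ℝ)
      (fun z _ => hG.differentiable (by simp) z) hseg (left_mem_segment ℝ x y)
      (right_mem_segment ℝ x y)
    calc _ ≤ _ := this
      _ = _ := by ring

theorem flat_null {V : Type} [NormedAddCommGroup V] [NormedSpace ℝ V] [FiniteDimensional ℝ V]
    (g : V → ℝ) (hg : ContDiff ℝ ∞ g) :
    volume (g '' {x | ∀ i, 1 ≤ i → i ≤ Module.finrank ℝ V + 1 → iteratedFDeriv ℝ i g x = 0}) = 0 := by
  set d := Module.finrank ℝ V with hd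
  apply null_of_locally
  intro x0 _
  refine ⟨ball x0 1, ball_mem_nhds _ one_pos, ?_⟩
  obtain ⟨C, hC0, hC⟩ := flat_bound x0 (d + 1) ℝ g hg
  set S := ball x0 1 ∩ {x | ∀ i, 1 ≤ i → i ≤ d + 1 → iteratedFDeriv ℝ i g x = 0} with hS
  have hH : HolderOnWith (NNReal.mk C hC0) ((d + 2 : ℕ) : NNReal) g S := by
    intro x hx y hy
    have h1 := hC x hx.1 y hy.1 hx.2
    rw [edist_comm, edist_comm x y, edist_dist, edist_dist, dist_eq_norm, dist_eq_norm]
    have e : (((d + 2 : ℕ) : NNReal) : ℝ) = ((d + 2 : ℕ) : ℝ) := by simp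
    rw [e, ENNReal.rpow_natCast, ← ENNReal.ofReal_pow (norm_nonneg _)]
    have e2 : ((NNReal.mk C hC0 : NNReal) : ENNReal) = ENNReal.ofReal C := by
      rw [ENNReal.ofReal_eq_coe_nnreal hC0]
    rw [e2, ← ENNReal.ofReal_mul hC0]
    exact ENNReal.ofReal_le_ofReal h1
  have hdim : dimH (g '' S) < ((1 : NNReal) : ENNReal) := by
    calc dimH (g '' S) ≤ dimH S / ((d + 2 : ℕ) : NNReal) := hH.dimH_image_le (by positivity)
      _ ≤ (d : ENNReal) / ((d + 2 : ℕ) : NNReal) := by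
        gcongr
        rw [hd, ← Real.dimH_univ_eq_finrank V]
        exact dimH_mono (subset_univ _)
      _ < _ := by
        rw [ENNReal.coe_one]
        refine ENNReal.div_lt_of_lt_mul ?_
        rw [one_mul]
        push_cast
        norm_cast
        omega
  have := hausdorffMeasure_of_dimH_lt hdim
  rw [NNReal.coe_one, hausdorffMeasure_real] at this
  exact this

theorem sard_scalar (d : ℕ) : ∀ (V : Type) [NormedAddCommGroup V] [NormedSpace ℝ V]
    [FiniteDimensional ℝ V], Module.finrank ℝ V = d → ∀ (g : V → ℝ), ContDiff ℝ ∞ g →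
    volume (g '' {x | fderiv ℝ g x = 0}) = 0 := by
  induction d with
  | zero =>
    intro V _ _ _ hV g hg
    have : Subsingleton V := Module.finrank_zero_iff.1 hV
    have : (g '' {x | fderiv ℝ g x = 0}).Subsingleton :=
      (Set.subsingleton_of_subsingleton).image g
    exact this.measure_zero _
  | succ d ih =>
    intro V _ _ _ hV g hg
    let A : ℕ → Set V := fun j => {x | ∀ i, 1 ≤ i → i ≤ j → iteratedFDeriv ℝ i g x = 0}
    have hstep : ∀ j, 1 ≤ j → volume (g '' (A j \ A (j + 1))) = 0 := by
      intro j hj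
      apply null_of_locally
      rintro x ⟨hx, hx'⟩
      have hne : iteratedFDeriv ℝ (j + 1) g x ≠ 0 := by
        intro h0
        apply hx'
        intro i h1 h2
        rcases Nat.lt_or_ge i (j + 1) with h | h
        · exact hx i h1 (by omega)
        · rw [show i = j + 1 by omega]; exact h0
      set W := iteratedFDeriv ℝ j g with hW
      have hWs : ContDiff ℝ ∞ W := hg.iteratedFDeriv_right (m := ∞) (i := j) (by exact_mod_cast le_top)
      have hW1 : fderiv ℝ W x ≠ 0 := by
        intro h; apply hne; ext mm; rw [iteratedFDeriv_succ_apply_left, ← hW, h]; rfl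
      obtain ⟨v, hv⟩ : ∃ v, fderiv ℝ W x v ≠ 0 := by
        by_contra! h
        exact hW1 (ContinuousLinearMap.ext h)
      obtain ⟨l, hl⟩ := SeparatingDual.exists_ne_zero (R := ℝ) hv
      let w : V → ℝ := fun z => l (W z)
      have hw : ContDiff ℝ ∞ w := l.contDiff.comp hWs
      have hwd : fderiv ℝ w x v ≠ 0 := by
        have : HasFDerivAt w (l.comp (fderiv ℝ W x)) x :=
          l.hasFDerivAt.comp x (hWs.differentiable (by simp) x).hasFDerivAt
        rw [this.fderiv]; exact hl
      have hsurj : Surjective (fderiv ℝ w x) := by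
        intro c
        refine ⟨(c / fderiv ℝ w x v) • v, ?_⟩
        rw [map_smul, smul_eq_mul, div_mul_cancel₀ _ hwd]
      obtain ⟨K, hKdef⟩ : ∃ K, K = LinearMap.ker (fderiv ℝ w x : V →ₗ[ℝ] ℝ) := ⟨_, rfl⟩
      have hep := exists_param isOpen_univ hw.contDiffOn (mem_univ x) hsurj
      rw [← hKdef] at hep
      obtain ⟨Q, e, hQ, hxe, -, he, hes⟩ := hep
      have hwA : ∀ z ∈ A j, w z = 0 := by
        intro z hz
        change l (iteratedFDeriv ℝ j g z) = 0
        rw [hz j hj le_rfl, map_zero]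
      have hwx := hwA x hx
      let ψ : K → V := fun k => e.symm (0, k)
      let O : Set K := (fun k : K => ((0 : ℝ), k)) ⁻¹' e.target
      have hO : IsOpen O := e.open_target.preimage (by fun_prop)
      have hψ : ContDiffOn ℝ ∞ ψ O :=
        hes.comp (contDiff_prodMk_right (0 : ℝ)).contDiffOn (fun k hk => hk)
      have h0O : (0 : K) ∈ O := by
        have : e x = (0, 0) := by rw [he, hwx]; simp
        change ((0 : ℝ), (0 : K)) ∈ e.target
        rw [← this]; exact e.map_source hxe
      obtain ⟨h, hh, hheq⟩ := exists_global_ext hO (hg.comp_contDiffOn hψ) h0O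
      obtain ⟨O', hO'sub, hO'open, h0O'⟩ := _root_.eventually_nhds_iff.1 hheq
      have hfin : Module.finrank ℝ K = d := by
        have h1 := LinearMap.finrank_range_add_finrank_ker (fderiv ℝ w x : V →ₗ[ℝ] ℝ)
        have h2 : LinearMap.range (fderiv ℝ w x : V →ₗ[ℝ] ℝ) = ⊤ := LinearMap.range_eq_top.2 hsurj
        rw [h2, finrank_top, Module.finrank_self, hV] at h1
        rw [← hKdef] at h1
        omega
      have hnull := ih K hfin h hh
      refine ⟨e.source ∩ {z | Q (z - x) ∈ {k | k ∈ O' ∩ O}}, ?_, measure_mono_null ?_ hnull⟩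
      · refine inter_mem (e.open_source.mem_nhds hxe) ?_
        have hc : Continuous (fun z => Q (z - x)) := by fun_prop
        refine (hO'open.inter hO).preimage hc |>.mem_nhds ?_
        change Q (x - x) ∈ O' ∩ O
        rw [sub_self, map_zero]; exact ⟨h0O', h0O⟩
      · rintro _ ⟨z, ⟨⟨hze, hzO⟩, hzA, -⟩, rfl⟩
        have hz' : Q (z - x) ∈ O' ∩ O := hzO
        have hez : e z = (0, Q (z - x)) := by rw [he, hwA z hzA]
        have hψz : ψ (Q (z - x)) = z := by
          change e.symm (0, Q (z - x)) = z
          rw [← hez, e.left_inv hze]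
        refine ⟨Q (z - x), ?_, ?_⟩
        · have hev : h =ᶠ[𝓝 (Q (z - x))] (g ∘ ψ) := by
            filter_upwards [hO'open.mem_nhds hz'.1] with k hk using hO'sub k hk
          change fderiv ℝ h (Q (z - x)) = 0
          rw [hev.fderiv_eq]
          have hgz : fderiv ℝ g z = 0 := by
            have h2 := norm_iteratedFDeriv_fderiv (𝕜 := ℝ) (f := g) (x := z) (n := 0)
            rw [norm_iteratedFDeriv_zero, zero_add, hzA 1 le_rfl hj, norm_zero] at h2
            exact norm_eq_zero.1 h2
          rw [fderiv_comp _ (hg.differentiable (by simp) _)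
            ((hψ.contDiffAt (hO.mem_nhds hz'.2)).differentiableAt (by simp)), hψz, hgz]
          simp
        · rw [hO'sub _ hz'.1, comp_apply, hψz]
    have hcov : {x | fderiv ℝ g x = 0} ⊆ A (Module.finrank ℝ V + 1) ∪ ⋃ j ∈ {j : ℕ | 1 ≤ j}, (A j \ A (j + 1)) := by
      intro x hx
      by_contra hcon
      rw [mem_union, not_or, mem_iUnion₂] at hcon
      obtain ⟨hc1, hc2⟩ := hcon
      have hall : ∀ j, 1 ≤ j → x ∈ A j := by
        intro j hj
        induction j, hj using Nat.le_induction with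
        | base =>
          intro i h1 h2
          have : i = 0 + 1 := by omega
          subst this
          rw [← norm_eq_zero, ← norm_iteratedFDeriv_fderiv, norm_iteratedFDeriv_zero, norm_eq_zero]
          exact hx
        | succ j hj ihj =>
          by_contra hne
          exact hc2 ⟨j, hj, ihj, hne⟩
      exact hc1 (hall _ (by omega))
    refine measure_mono_null (image_mono hcov) ?_
    rw [image_union, measure_union_null_iff, image_iUnion₂]
    refine ⟨flat_null g hg, ?_⟩
    rw [measure_biUnion_null_iff (Set.to_countable _)]
    exact fun j hj => hstep j hj

end Sard
end Part2

section Part3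
open scoped ContDiff
open Filter

section SardVec
open MeasureTheory

theorem sard_zero_part (k : ℕ) (V : Type) [NormedAddCommGroup V] [NormedSpace ℝ V]
    [FiniteDimensional ℝ V] (U : Set V) (hU : IsOpen U) (f : V → Fin (k + 1) → ℝ)
    (hf : ContDiffOn ℝ ∞ f U) : volume (f '' {x | x ∈ U ∧ fderiv ℝ f x = 0}) = 0 := by
  apply null_of_locally
  rintro x ⟨hxU, hx0⟩
  have hf0 : ContDiffOn ℝ ∞ (fun z => f z 0) U := (contDiffOn_pi.1 hf) 0
  obtain ⟨g, hg, hge⟩ := exists_global_ext hU hf0 hxU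
  obtain ⟨O, hO, hOo, hxO⟩ := _root_.eventually_nhds_iff.1 hge
  refine ⟨O, hOo.mem_nhds hxO, ?_⟩
  have hnull := sard_scalar _ V rfl g hg
  refine measure_mono_null ?_ (Measure.pi_eval_preimage_null (fun _ : Fin (k + 1) => (volume : Measure ℝ)) (i := 0) hnull)
  rintro _ ⟨z, ⟨hzO, hzU, hz0⟩, rfl⟩
  refine ⟨z, ?_, hO z hzO⟩
  have hev : g =ᶠ[𝓝 z] (fun z => f z 0) := by
    filter_upwards [hOo.mem_nhds hzO] with y hy using hO y hy
  change fderiv ℝ g z = 0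
  rw [hev.fderiv_eq]
  have hd : HasFDerivAt f (fderiv ℝ f z) z :=
    ((hf.contDiffAt (hU.mem_nhds hzU)).differentiableAt (by simp)).hasFDerivAt
  have := (hasFDerivAt_pi'.1 hd) 0
  rw [this.fderiv, hz0]; ext; simp

theorem sard (k : ℕ) : ∀ (V : Type) [NormedAddCommGroup V] [NormedSpace ℝ V]
    [FiniteDimensional ℝ V] (U : Set V), IsOpen U → ∀ (f : V → Fin k → ℝ), ContDiffOn ℝ ∞ f U →
    volume (f '' {x | x ∈ U ∧ ¬ Surjective (fderiv ℝ f x)}) = 0 := by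
  induction k with
  | zero =>
    intro V _ _ _ U hU f hf
    have : {x | x ∈ U ∧ ¬ Surjective (fderiv ℝ f x)} = ∅ := by
      ext x
      simp only [mem_ofPred_eq, mem_empty_iff_false, iff_false, not_and, not_not]
      intro _ c
      exact ⟨0, Subsingleton.elim _ _⟩
    rw [this]; simp
  | succ k ih =>
    intro V _ _ _ U hU f hf
    have hfd : ∀ z ∈ U, HasFDerivAt f (fderiv ℝ f z) z := fun z hz =>
      ((hf.contDiffAt (hU.mem_nhds hz)).differentiableAt (by simp)).hasFDerivAt
    let C := {x | x ∈ U ∧ ¬ Surjective (fderiv ℝ f x)}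
    have hcov : C ⊆ {x | x ∈ U ∧ fderiv ℝ f x = 0} ∪ (C \ {x | x ∈ U ∧ fderiv ℝ f x = 0}) := by
      intro x hx
      by_cases h : x ∈ {x | x ∈ U ∧ fderiv ℝ f x = 0}
      · exact Or.inl h
      · exact Or.inr ⟨hx, h⟩
    refine measure_mono_null (image_mono hcov) ?_
    rw [image_union, measure_union_null_iff]
    refine ⟨sard_zero_part k V U hU f hf, ?_⟩
    apply null_of_locally
    rintro x ⟨⟨hxU, hxs⟩, hxn⟩
    have hne : fderiv ℝ f x ≠ 0 := fun h => hxn ⟨hxU, h⟩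
    obtain ⟨v, hv⟩ : ∃ v, fderiv ℝ f x v ≠ 0 := by
      by_contra! h
      exact hne (ContinuousLinearMap.ext h)
    obtain ⟨i, hi⟩ : ∃ i, fderiv ℝ f x v i ≠ 0 := by
      by_contra! h
      exact hv (funext h)
    let w : V → ℝ := fun z => f z i
    have hw : ContDiffOn ℝ ∞ w U := (contDiffOn_pi.1 hf) i
    have hwd : fderiv ℝ w x v = fderiv ℝ f x v i := by
      rw [((hasFDerivAt_pi'.1 (hfd x hxU)) i).fderiv]; rfl
    have hsurj : Surjective (fderiv ℝ w x) := by
      intro c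
      refine ⟨(c / fderiv ℝ w x v) • v, ?_⟩
      rw [map_smul, smul_eq_mul, div_mul_cancel₀ _ (by rw [hwd]; exact hi)]
    obtain ⟨K, hKdef⟩ : ∃ K, K = LinearMap.ker (fderiv ℝ w x : V →ₗ[ℝ] ℝ) := ⟨_, rfl⟩
    have hep := exists_param hU hw hxU hsurj
    rw [← hKdef] at hep
    obtain ⟨Q, e, hQ, hxe, heU, he, hes⟩ := hep
    obtain ⟨r, hr, hrB⟩ := Metric.isOpen_iff.1 e.open_source x hxe
    have hBe : closedBall x (r / 2) ⊆ e.source :=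
      (closedBall_subset_ball (by linarith)).trans hrB
    refine ⟨closedBall x (r / 2), closedBall_mem_nhds _ (by positivity), ?_⟩
    let S := f '' (closedBall x (r / 2) ∩ {z | ¬ Surjective (fderiv ℝ f z)})
    have hScomp : IsCompact S := by
      have hcl : IsClosed (closedBall x (r / 2) ∩ {z | ¬ Surjective (fderiv ℝ f z)}) := by
        have hc : ContinuousOn (fderiv ℝ f) (closedBall x (r / 2)) :=
          (hf.continuousOn_fderiv_of_isOpen hU (by simp)).mono (hBe.trans heU)
        have hcs : IsClosed {L : V →L[ℝ] (Fin (k + 1) → ℝ) | ¬ Surjective L} :=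
          (isOpen_surj (V := V) (F := Fin (k + 1) → ℝ)).isClosed_compl
        exact hc.preimage_isClosed_of_isClosed isClosed_closedBall hcs
      have hcomp : IsCompact (closedBall x (r / 2) ∩ {z | ¬ Surjective (fderiv ℝ f z)}) :=
        (isCompact_closedBall x (r / 2)).of_isClosed_subset hcl inter_subset_left
      exact hcomp.image_of_continuousOn
        (hf.continuousOn.mono (inter_subset_left.trans (hBe.trans heU)))
    have hSnull : volume S = 0 := by
      let T := MeasurableEquiv.piFinSuccAbove (fun _ : Fin (k + 1) => ℝ) i
      have hT := (volume_preserving_piFinSuccAbove (fun _ : Fin (k + 1) => ℝ) i).symm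
      rw [← hT.measure_preimage_equiv S, Measure.volume_eq_prod,
        Measure.measure_prod_null (T.symm.measurable hScomp.measurableSet)]
      refine Eventually.of_forall fun t => ?_
      let O : Set K := (fun κ : K => (t, κ)) ⁻¹' e.target
      have hO : IsOpen O := e.open_target.preimage (by fun_prop)
      let h : K → Fin k → ℝ := fun κ j => f (e.symm (t, κ)) (i.succAbove j)
      have hψt : ContDiffOn ℝ ∞ (fun κ : K => e.symm (t, κ)) O :=
        hes.comp (contDiff_prodMk_right t).contDiffOn (fun k hk => hk)
      have hfψ : ContDiffOn ℝ ∞ (fun κ : K => f (e.symm (t, κ))) O :=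
        hf.comp hψt (fun κ hκ => heU (e.map_target hκ))
      have hh : ContDiffOn ℝ ∞ h O :=
        contDiffOn_pi.2 fun j => (contDiffOn_pi.1 hfψ) (i.succAbove j)
      refine measure_mono_null ?_ (ih K O hO h hh)
      intro ρ hρ
      obtain ⟨z, ⟨hzB, hzs⟩, hzρ⟩ : T.symm (t, ρ) ∈ S := hρ
      have hze := hBe hzB
      have hzt : f z i = t := by rw [hzρ]; exact Fin.insertNth_apply_same (α := fun _ => ℝ) i t ρ
      have hzr : ∀ j, f z (i.succAbove j) = ρ j := fun j => by
        rw [hzρ]; exact Fin.insertNth_apply_succAbove (α := fun _ => ℝ) i t ρ j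
      have hez : e z = (t, Q (z - x)) := by rw [he, ← hzt]
      have hsz : e.symm (t, Q (z - x)) = z := by rw [← hez, e.left_inv hze]
      have hmem : (t, Q (z - x)) ∈ e.target := by rw [← hez]; exact e.map_source hze
      refine ⟨Q (z - x), ⟨hmem, ?_⟩, funext fun j => ?_⟩
      · intro hsur
        apply hzs
        have hsd : HasFDerivAt e.symm (fderiv ℝ e.symm (t, Q (z - x))) (t, Q (z - x)) :=
          ((hes.contDiffAt (e.open_target.mem_nhds hmem)).differentiableAt (by simp)).hasFDerivAt
        have hfz : HasFDerivAt f (fderiv ℝ f z) (e.symm (t, Q (z - x))) := by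
          rw [hsz]; exact hfd z (heU hze)
        have hD := hfz.comp _ hsd
        set D := (fderiv ℝ f z).comp (fderiv ℝ e.symm (t, Q (z - x))) with hDdef
        have hD1 : ∀ a, D a i = a.1 := by
          intro a
          have h1 := (hasFDerivAt_pi'.1 hD) i
          have h2 : HasFDerivAt (fun y : ℝ × K => y.1) (ContinuousLinearMap.fst ℝ ℝ K) (t, Q (z - x)) :=
            hasFDerivAt_fst
          have h3 : (fun y => (f ∘ e.symm) y i) =ᶠ[𝓝 (t, Q (z - x))] (fun y : ℝ × K => y.1) := by
            filter_upwards [e.open_target.mem_nhds hmem] with y hy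
            have := e.right_inv hy
            rw [he] at this
            exact congrArg Prod.fst this
          have h4 := h1.unique (h2.congr_of_eventuallyEq h3)
          exact congrArg (fun L : (ℝ × K) →L[ℝ] ℝ => L a) h4
        have hD2 : ∀ b j, D (0, b) (i.succAbove j) = fderiv ℝ h (Q (z - x)) b j := by
          intro b j
          have h1 : HasFDerivAt (fun κ : K => (t, κ)) (ContinuousLinearMap.inr ℝ ℝ K) (Q (z - x)) :=
            hasFDerivAt_prodMk_right t _
          have h2 := hD.comp (Q (z - x)) h1
          have h3 := (hasFDerivAt_pi'.1 h2) (i.succAbove j)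
          have h4 : HasFDerivAt h (fderiv ℝ h (Q (z - x))) (Q (z - x)) :=
            ((hh.contDiffAt (hO.mem_nhds hmem)).differentiableAt (by simp)).hasFDerivAt
          have h5 := (hasFDerivAt_pi'.1 h4) j
          have h6 := h3.unique h5
          exact congrArg (fun L : K →L[ℝ] ℝ => L b) h6
        intro c
        obtain ⟨b, hb⟩ := hsur (fun j => c (i.succAbove j) - D (c i, 0) (i.succAbove j))
        refine ⟨fderiv ℝ e.symm (t, Q (z - x)) (c i, b), ?_⟩
        change D (c i, b) = c
        funext l
        have hsplit : ((c i, b) : ℝ × K) = (c i, 0) + (0, b) := by simp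
        refine Fin.succAboveCases i ?_ (fun j => ?_) l
        · rw [hD1]
        · rw [hsplit, map_add, Pi.add_apply, hD2, hb]; ring
      · change f (e.symm (t, Q (z - x))) (i.succAbove j) = ρ j
        rw [hsz, hzr]
    refine measure_mono_null ?_ hSnull
    rintro _ ⟨z, ⟨hz1, ⟨_, hz2⟩, _⟩, rfl⟩
    exact ⟨z, ⟨hz1, hz2⟩, rfl⟩

end SardVec
end Part3

section Part4
open scoped ContDiff
open Filter

section Tangent

/-- Local defining function of a subset. -/
structure LocDef {V F : Type*} [NormedAddCommGroup V] [NormedSpace ℝ V]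
    [NormedAddCommGroup F] [NormedSpace ℝ F] (M : Set V) (U : Set V) (Φ : V → F) : Prop where
  isOpen : IsOpen U
  smooth : ContDiffOn ℝ ∞ Φ U
  surj : ∀ z ∈ U, Surjective (fderiv ℝ Φ z)
  mem_iff : ∀ z ∈ U, z ∈ M ↔ Φ z = 0

variable {V F : Type*} [NormedAddCommGroup V] [NormedSpace ℝ V]
    [NormedAddCommGroup F] [NormedSpace ℝ F]

theorem LocDef.hasFDerivAt {M U : Set V} {Φ : V → F} (h : LocDef M U Φ) {x : V} (hx : x ∈ U) :
    HasFDerivAt Φ (fderiv ℝ Φ x) x :=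
  ((h.smooth.contDiffAt (h.isOpen.mem_nhds hx)).differentiableAt (by simp)).hasFDerivAt

theorem LocDef.comp {G : Type*} [NormedAddCommGroup G] [NormedSpace ℝ G]
    {M U : Set V} {Φ : V → F} (h : LocDef M U Φ) (L : F ≃L[ℝ] G) :
    LocDef M U (fun z => L (Φ z)) := by
  refine ⟨h.isOpen, L.contDiff.comp_contDiffOn h.smooth, fun z hz => ?_, fun z hz => ?_⟩
  · have : HasFDerivAt (fun z => L (Φ z)) ((L : F →L[ℝ] G).comp (fderiv ℝ Φ z)) z :=
      (L : F →L[ℝ] G).hasFDerivAt.comp z (h.hasFDerivAt hz)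
    rw [this.fderiv]
    exact L.surjective.comp (h.surj z hz)
  · rw [h.mem_iff z hz]; simp

theorem LocDef.restr {M U U' : Set V} {Φ : V → F} (h : LocDef M U Φ) (hU' : IsOpen U')
    (hs : U' ⊆ U) : LocDef M U' Φ :=
  ⟨hU', h.smooth.mono hs, fun z hz => h.surj z (hs hz), fun z hz => h.mem_iff z (hs hz)⟩

theorem LocDef.congr_set {M M' U : Set V} {Φ : V → F} (h : LocDef M U Φ)
    (hs : ∀ z ∈ U, z ∈ M' ↔ z ∈ M) : LocDef M' U Φ :=
  ⟨h.isOpen, h.smooth, h.surj, fun z hz => by rw [hs z hz, h.mem_iff z hz]⟩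

/-- Submanifold of unspecified dimension. -/
def IsMfd (M : Set V) : Prop :=
  ∀ x ∈ M, ∃ (k : ℕ) (U : Set V) (Φ : V → EuclideanSpace ℝ (Fin k)), x ∈ U ∧ LocDef M U Φ

theorem LocDef.of_def {M U : Set V} {Φ : V → F} (hU : IsOpen U) (hΦ : ContDiffOn ℝ (⊤ : ℕ∞) Φ U)
    (hs : ∀ y ∈ U, Function.Surjective (fderiv ℝ Φ y)) (he : U ∩ M = U ∩ Φ ⁻¹' {0}) :
    LocDef M U Φ := by
  refine ⟨hU, hΦ, hs, fun z hz => ?_⟩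
  have : z ∈ U ∩ M ↔ z ∈ U ∩ Φ ⁻¹' {0} := by rw [he]
  simpa [hz] using this

theorem LocDef.to_def {M U : Set V} {Φ : V → F} (h : LocDef M U Φ) :
    U ∩ M = U ∩ Φ ⁻¹' {0} := by
  ext z
  constructor
  · rintro ⟨h1, h2⟩; exact ⟨h1, (h.mem_iff z h1).1 h2⟩
  · rintro ⟨h1, h2⟩; exact ⟨h1, (h.mem_iff z h1).2 h2⟩

theorem IsSubmanifold.isMfd {M : Set V} {m : ℕ} (h : IsSubmanifold M m) : IsMfd M := by
  intro x hx
  obtain ⟨U, Φ, h1, h2, h3, h4, h5⟩ := h x hx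
  exact ⟨_, U, Φ, h2, LocDef.of_def h1 h3 h4 h5⟩

/-- Build `IsSubmanifold` from local definitions with codomain of the right dimension. -/
theorem isSubmanifold_of {M : Set V} {m : ℕ} {k : ℕ} (hk : Module.finrank ℝ V - m = k)
    (h : ∀ x ∈ M, ∃ (U : Set V) (F : Type) (_ : NormedAddCommGroup F) (_ : NormedSpace ℝ F)
      (_ : FiniteDimensional ℝ F)
      (Φ : V → F), Module.finrank ℝ F = k ∧ x ∈ U ∧ LocDef M U Φ) : IsSubmanifold M m := by
  intro x hx
  obtain ⟨U, F, _, _, _, Φ, hF, hxU, hL⟩ := h x hx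
  let L : F ≃L[ℝ] EuclideanSpace ℝ (Fin (Module.finrank ℝ V - m)) :=
    ContinuousLinearEquiv.ofFinrankEq (by rw [hF]; simp [hk])
  have h2 := hL.comp L
  exact ⟨U, _, h2.isOpen, hxU, h2.smooth, h2.surj, h2.to_def⟩

theorem LocDef.tangent [FiniteDimensional ℝ V] [FiniteDimensional ℝ F]
    {M U : Set V} {Φ : V → F} (h : LocDef M U Φ) {x : V} (hx : x ∈ U) (hM : x ∈ M) :
    SubTangent M x = LinearMap.ker (fderiv ℝ Φ x : V →ₗ[ℝ] F) := by
  apply le_antisymm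
  · refine Submodule.span_le.2 ?_
    rintro v ⟨γ, hγ, hγ0, hγd⟩
    have hc : Tendsto γ (𝓝 0) (𝓝 x) := by rw [← hγ0]; exact hγd.continuousAt
    have h1 : (fun t => Φ (γ t)) =ᶠ[𝓝 0] (fun _ => (0 : F)) := by
      filter_upwards [hc (h.isOpen.mem_nhds hx)] with t ht
      exact (h.mem_iff _ ht).1 (hγ t)
    have h2 : HasDerivAt (fun t => Φ (γ t)) (fderiv ℝ Φ x v) 0 := by
      have h3 : HasFDerivAt Φ (fderiv ℝ Φ x) (γ 0) := by rw [hγ0]; exact h.hasFDerivAt hx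
      exact h3.comp_hasDerivAt 0 hγd
    have h3 : HasDerivAt (fun t => Φ (γ t)) (0 : F) 0 :=
      (hasDerivAt_const (0 : ℝ) (0 : F)).congr_of_eventuallyEq h1
    exact h2.unique h3
  · intro k hk
    obtain ⟨Q, e, hQ, hxe, heU, he, hes⟩ := exists_param h.isOpen h.smooth hx (h.surj x hx)
    apply Submodule.subset_span
    have hΦx : Φ x = 0 := (h.mem_iff x hx).1 hM
    have hex : e x = (0, 0) := by rw [he, hΦx]; simp
    let κ : LinearMap.ker (fderiv ℝ Φ x : V →ₗ[ℝ] F) := ⟨k, hk⟩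
    have hmem0 : ((0 : F), (0 : LinearMap.ker (fderiv ℝ Φ x : V →ₗ[ℝ] F))) ∈ e.target := by
      rw [← hex]; exact e.map_source hxe
    have hes0 : e.symm (0, 0) = x := by rw [← hex, e.left_inv hxe]
    classical
    let γ : ℝ → V := fun t => if ((0 : F), t • κ) ∈ e.target then e.symm (0, t • κ) else x
    have hev : ∀ᶠ t : ℝ in 𝓝 0, ((0 : F), t • κ) ∈ e.target := by
      have hc : Continuous (fun t : ℝ => ((0 : F), t • κ)) := by fun_prop
      refine hc.continuousAt (e.open_target.mem_nhds ?_)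
      simpa using hmem0
    have hpt : ∀ t : ℝ, ((0 : F), t • κ) ∈ e.target →
        Φ (e.symm (0, t • κ)) = 0 ∧ Q (e.symm (0, t • κ) - x) = t • κ := by
      intro t ht
      have := e.right_inv ht
      rw [he] at this
      exact ⟨congrArg Prod.fst this, congrArg Prod.snd this⟩
    have hγeq : γ =ᶠ[𝓝 0] fun t => e.symm (0, t • κ) := by
      filter_upwards [hev] with t ht
      exact if_pos ht
    refine ⟨γ, fun t => ?_, ?_, ?_⟩
    · by_cases ht : ((0 : F), t • κ) ∈ e.target
      · have h1 : γ t = e.symm (0, t • κ) := if_pos ht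
        rw [h1, h.mem_iff _ (heU (e.map_target ht))]
        exact (hpt t ht).1
      · have h1 : γ t = x := if_neg ht
        rw [h1]; exact hM
    · have h1 := hγeq.self_of_nhds
      rw [h1]; simp [hes0]
    · have hsd : HasFDerivAt e.symm (fderiv ℝ e.symm (0, 0)) (0, (0 : ℝ) • κ) := by
        rw [zero_smul]
        exact ((hes.contDiffAt (e.open_target.mem_nhds hmem0)).differentiableAt (by simp)).hasFDerivAt
      have hl : HasDerivAt (fun t : ℝ => ((0 : F), t • κ)) ((0 : F), κ) 0 := by
        have h2 : HasDerivAt (fun t : ℝ => t • κ) ((1 : ℝ) • κ) 0 := (hasDerivAt_id (0:ℝ)).smul_const κ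
        rw [one_smul] at h2
        exact (hasDerivAt_const (0:ℝ) (0:F)).prodMk h2
      have hd := hsd.comp_hasDerivAt (0 : ℝ) hl
      set v := fderiv ℝ e.symm (0, 0) (0, κ) with hv
      have hd' : HasDerivAt γ v 0 := hd.congr_of_eventuallyEq hγeq
      have hγ0 : γ 0 = x := by rw [hγeq.self_of_nhds]; simp [hes0]
      have hv1 : fderiv ℝ Φ x v = 0 := by
        have h3 : HasFDerivAt Φ (fderiv ℝ Φ x) (γ 0) := by rw [hγ0]; exact h.hasFDerivAt hx
        have h4 := h3.comp_hasDerivAt 0 hd'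
        refine h4.unique ((hasDerivAt_const (0 : ℝ) (0 : F)).congr_of_eventuallyEq ?_)
        filter_upwards [hev, hγeq] with t ht ht2
        rw [comp_apply, ht2]; exact (hpt t ht).1
      have hv2 : Q v = κ := by
        have h4 : HasDerivAt (fun t => Q (γ t - x)) (Q v) 0 :=
          Q.hasFDerivAt.comp_hasDerivAt 0 (hd'.sub_const x)
        have h2 : HasDerivAt (fun t : ℝ => t • κ) ((1 : ℝ) • κ) 0 := (hasDerivAt_id (0:ℝ)).smul_const κ
        rw [one_smul] at h2
        refine h4.unique (h2.congr_of_eventuallyEq ?_)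
        filter_upwards [hev, hγeq] with t ht ht2
        rw [ht2]; exact (hpt t ht).2
      have hv3 := hQ ⟨v, hv1⟩
      have : v = k := by
        have h5 : (⟨v, hv1⟩ : LinearMap.ker (fderiv ℝ Φ x : V →ₗ[ℝ] F)) = κ := by rw [← hv3]; exact hv2
        exact congrArg Subtype.val h5
      rw [← this]; exact hd'

theorem subTangent_mono_of_eventually {M N : Set V} {x : V} (hx : x ∈ N)
    (h : ∀ᶠ z in 𝓝 x, z ∈ M → z ∈ N) : SubTangent M x ≤ SubTangent N x := by
  classical
  refine Submodule.span_le.2 ?_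
  rintro v ⟨γ, hγ, hγ0, hγd⟩
  apply Submodule.subset_span
  have hc : Tendsto γ (𝓝 0) (𝓝 x) := by rw [← hγ0]; exact hγd.continuousAt
  have hev : ∀ᶠ t in 𝓝 0, γ t ∈ N := by
    filter_upwards [hc h] with t ht using ht (hγ t)
  refine ⟨fun t => if γ t ∈ N then γ t else x, fun t => ?_, ?_, ?_⟩
  · dsimp only; split_ifs with h1
    · exact h1
    · exact hx
  · simp [hγ0]
  · refine hγd.congr_of_eventuallyEq ?_
    filter_upwards [hev] with t ht
    simp [ht]

theorem hasDerivOn_unique {G : Type*} [NormedAddCommGroup G] [NormedSpace ℝ G] {f : V → G}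
    {M : Set V} {x : V} {L L' : V →L[ℝ] G} (h : HasDerivOn f M x L) (h' : HasDerivOn f M x L')
    {v : V} (hv : v ∈ SubTangent M x) : L v = L' v := by
  have key : ∀ {L : V →L[ℝ] G}, HasDerivOn f M x L → ∀ γ : ℝ → V, ∀ v, (∀ t, γ t ∈ M) → γ 0 = x →
      HasDerivAt γ v 0 → HasDerivAt (fun t => f (γ t)) (L v) 0 := by
    rintro L ⟨g, hg, hgx, hgd⟩ γ v hγ hγ0 hγd
    have hc : Tendsto γ (𝓝 0) (𝓝 x) := by rw [← hγ0]; exact hγd.continuousAt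
    have h3 : HasFDerivAt g L (γ 0) := by rw [hγ0]; exact hgd
    refine (h3.comp_hasDerivAt 0 hγd).congr_of_eventuallyEq ?_
    filter_upwards [hc hg] with t ht using ht (hγ t)
  have : SubTangent M x ≤ LinearMap.eqLocus (L : V →ₗ[ℝ] G) (L' : V →ₗ[ℝ] G) := by
    refine Submodule.span_le.2 ?_
    rintro v ⟨γ, hγ, hγ0, hγd⟩
    exact (key h γ v hγ hγ0 hγd).unique (key h' γ v hγ hγ0 hγd)
  exact this hv

theorem hasDerivOn_of_eqOn {G : Type*} [NormedAddCommGroup G] [NormedSpace ℝ G] {f g : V → G}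
    {M : Set V} {x : V} (hx : x ∈ M) {L : V →L[ℝ] G} (h : EqOn f g M) (hg : HasFDerivAt g L x) :
    HasDerivOn f M x L :=
  ⟨g, Eventually.of_forall fun _ hz => h hz, h hx, hg⟩

theorem LocDef.prod_univ {M U : Set V} {Φ : V → F} (h : LocDef M U Φ) :
    LocDef (M ×ˢ (univ : Set ℝ)) (U ×ˢ (univ : Set ℝ)) (fun z : V × ℝ => Φ z.1) := by
  refine ⟨h.isOpen.prod isOpen_univ, h.smooth.comp contDiff_fst.contDiffOn fun z hz => hz.1,
    fun z hz => ?_, fun z hz => ?_⟩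
  · have : HasFDerivAt (fun z : V × ℝ => Φ z.1)
      ((fderiv ℝ Φ z.1).comp (ContinuousLinearMap.fst ℝ V ℝ)) z :=
      (h.hasFDerivAt hz.1).comp z hasFDerivAt_fst
    rw [this.fderiv]
    exact (h.surj z.1 hz.1).comp Prod.fst_surjective
  · simp [h.mem_iff z.1 hz.1]

theorem IsMfd.prod_univ {M : Set V} (h : IsMfd M) : IsMfd (M ×ˢ (univ : Set ℝ)) := by
  rintro ⟨x, t⟩ ⟨hx, -⟩
  obtain ⟨k, U, Φ, hxU, hL⟩ := h x hx
  exact ⟨k, _, _, mk_mem_prod hxU (mem_univ t), hL.prod_univ⟩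

theorem mem_subTangent_prod [FiniteDimensional ℝ V] {M : Set V} (h : IsMfd M) {x : V} {t : ℝ}
    (hx : x ∈ M) (v : V × ℝ) :
    v ∈ SubTangent (M ×ˢ (univ : Set ℝ)) (x, t) ↔ v.1 ∈ SubTangent M x := by
  obtain ⟨k, U, Φ, hxU, hL⟩ := h x hx
  rw [hL.tangent hxU hx, hL.prod_univ.tangent (x := (x, t)) (mk_mem_prod hxU (mem_univ t)) (mk_mem_prod hx (mem_univ t))]
  have : HasFDerivAt (fun z : V × ℝ => Φ z.1)
      ((fderiv ℝ Φ x).comp (ContinuousLinearMap.fst ℝ V ℝ)) (x, t) :=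
      (hL.hasFDerivAt hxU).comp (x, t) hasFDerivAt_fst
  rw [this.fderiv]
  simp [LinearMap.mem_ker]

end Tangent

section SardMfd
open MeasureTheory

theorem sard_univ {V : Type*} [NormedAddCommGroup V] [NormedSpace ℝ V]
    [FiniteDimensional ℝ V] {k : ℕ} {U : Set V} (hU : IsOpen U) {f : V → Fin k → ℝ}
    (hf : ContDiffOn ℝ ∞ f U) :
    volume (f '' {x | x ∈ U ∧ ¬ Surjective (fderiv ℝ f x)}) = 0 := by
  let T : V ≃L[ℝ] EuclideanSpace ℝ (Fin (Module.finrank ℝ V)) := toEuclidean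
  have h := sard k _ (T.symm ⁻¹' U) (hU.preimage T.symm.continuous) (fun z => f (T.symm z))
    (hf.comp T.symm.contDiff.contDiffOn fun z hz => hz)
  refine measure_mono_null ?_ h
  rintro _ ⟨x, ⟨hx, hxs⟩, rfl⟩
  refine ⟨T x, ⟨by simpa using hx, fun hs => hxs ?_⟩, by simp⟩
  have hd : HasFDerivAt (fun z => f (T.symm z)) ((fderiv ℝ f x).comp
      (T.symm : EuclideanSpace ℝ (Fin (Module.finrank ℝ V)) →L[ℝ] V)) (T x) := by
    have h1 : HasFDerivAt f (fderiv ℝ f x) (T.symm (T x)) := by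
      rw [T.symm_apply_apply]
      exact ((hf.contDiffAt (hU.mem_nhds hx)).differentiableAt (by simp)).hasFDerivAt
    exact h1.comp (T x) T.symm.hasFDerivAt
  rw [hd.fderiv] at hs
  intro c
  obtain ⟨b, hb⟩ := hs c
  exact ⟨T.symm b, hb⟩

theorem sard_mfd {V : Type*} [NormedAddCommGroup V] [NormedSpace ℝ V]
    [FiniteDimensional ℝ V] {p : ℕ} {M Og : Set V} (hM : IsMfd M) (hOg : IsOpen Og)
    {Θ : V → EuclideanSpace ℝ (Fin p)} (hΘ : ContDiffOn ℝ ∞ Θ Og) :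
    ∃ q, ∀ x ∈ M, x ∈ Og → Θ x = q → ∀ c, ∃ v ∈ SubTangent M x, fderiv ℝ Θ x v = c := by
  let T : EuclideanSpace ℝ (Fin p) ≃L[ℝ] (Fin p → ℝ) := EuclideanSpace.equiv (Fin p) ℝ
  let Cr := {x | x ∈ M ∧ x ∈ Og ∧ ¬ ∀ c, ∃ v ∈ SubTangent M x, fderiv ℝ Θ x v = c}
  have hnull : volume ((fun z => T (Θ z)) '' Cr) = 0 := by
    apply null_of_locally
    rintro x ⟨hxM, hxOg, hxc⟩
    obtain ⟨k, U, Φ, hxU, hL⟩ := hM x hxM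
    obtain ⟨Q, e, hQ, hxe, heU, he, hes⟩ := exists_param hL.isOpen hL.smooth hxU (hL.surj x hxU)
    refine ⟨e.source, e.open_source.mem_nhds hxe, ?_⟩
    let ψ : LinearMap.ker (fderiv ℝ Φ x : V →ₗ[ℝ] EuclideanSpace ℝ (Fin k)) → V := fun κ => e.symm (0, κ)
    let O0 : Set (LinearMap.ker (fderiv ℝ Φ x : V →ₗ[ℝ] EuclideanSpace ℝ (Fin k))) :=
      (fun κ : LinearMap.ker (fderiv ℝ Φ x : V →ₗ[ℝ] EuclideanSpace ℝ (Fin k)) => ((0 : EuclideanSpace ℝ (Fin k)), κ)) ⁻¹' e.target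
    have hO0 : IsOpen O0 := e.open_target.preimage (by fun_prop)
    have hψ : ContDiffOn ℝ ∞ ψ O0 := hes.comp (contDiff_prodMk_right _).contDiffOn fun κ hκ => hκ
    have hO : IsOpen (O0 ∩ ψ ⁻¹' Og) := hψ.continuousOn.isOpen_inter_preimage hO0 hOg
    have hΘψ : ContDiffOn ℝ ∞ (fun κ => Θ (ψ κ)) (O0 ∩ ψ ⁻¹' Og) :=
      hΘ.comp (hψ.mono inter_subset_left) fun κ hκ => hκ.2
    have hh : ContDiffOn ℝ ∞ (fun κ => T (Θ (ψ κ))) (O0 ∩ ψ ⁻¹' Og) := T.contDiff.comp_contDiffOn hΘψ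
    refine measure_mono_null ?_ (sard_univ hO hh)
    rintro _ ⟨z, ⟨hze, hzM, hzOg, hzc⟩, rfl⟩
    have hΦz : Φ z = 0 := (hL.mem_iff z (heU hze)).1 hzM
    have hez : e z = (0, Q (z - x)) := by rw [he, hΦz]
    have hψz : ψ (Q (z - x)) = z := by
      change e.symm (0, Q (z - x)) = z
      rw [← hez, e.left_inv hze]
    have hmem : ((0 : EuclideanSpace ℝ (Fin k)), Q (z - x)) ∈ e.target := by
      rw [← hez]; exact e.map_source hze
    refine ⟨Q (z - x), ⟨⟨hmem, ?_⟩, fun hs => hzc fun c => ?_⟩, ?_⟩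
    · change ψ _ ∈ Og; rw [hψz]; exact hzOg
    · have hψd : HasFDerivAt ψ (fderiv ℝ ψ (Q (z - x))) (Q (z - x)) :=
        ((hψ.contDiffAt (hO0.mem_nhds hmem)).differentiableAt (by simp)).hasFDerivAt
      have hΘd : HasFDerivAt Θ (fderiv ℝ Θ z) (ψ (Q (z - x))) := by
        rw [hψz]
        exact ((hΘ.contDiffAt (hOg.mem_nhds hzOg)).differentiableAt (by simp)).hasFDerivAt
      have hTd := (T : EuclideanSpace ℝ (Fin p) →L[ℝ] (Fin p → ℝ)).hasFDerivAt.comp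
        (Q (z - x)) (hΘd.comp (Q (z - x)) hψd)
      have hTd' := hTd.fderiv
      change fderiv ℝ (fun κ => T (Θ (ψ κ))) _ = _ at hTd'
      rw [hTd'] at hs
      obtain ⟨b, hb⟩ := hs (T c)
      refine ⟨fderiv ℝ ψ (Q (z - x)) b, ?_, T.injective hb⟩
      rw [hL.tangent (heU hze) hzM, LinearMap.mem_ker]
      have hΦd : HasFDerivAt Φ (fderiv ℝ Φ z) (ψ (Q (z - x))) := by
        rw [hψz]; exact hL.hasFDerivAt (heU hze)
      have h1 := hΦd.comp (Q (z - x)) hψd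
      have h2 : HasFDerivAt (Φ ∘ ψ) (0 : _ →L[ℝ] EuclideanSpace ℝ (Fin k)) (Q (z - x)) := by
        refine (hasFDerivAt_const (0 : EuclideanSpace ℝ (Fin k)) _).congr_of_eventuallyEq ?_
        filter_upwards [hO0.mem_nhds hmem] with κ hκ
        have := e.right_inv hκ
        rw [he] at this
        exact congrArg Prod.fst this
      exact congrArg (fun L : _ →L[ℝ] EuclideanSpace ℝ (Fin k) => L b) (h1.unique h2)
    · simp only [hψz]
  obtain ⟨q, hq⟩ := (measure_eq_zero_iff_ae_notMem.1 hnull).exists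
  refine ⟨T.symm q, fun x hxM hxOg hx => ?_⟩
  by_contra hcon
  exact hq ⟨x, ⟨hxM, hxOg, hcon⟩, by simp [hx]⟩

end SardMfd
end Part4

section Part5
open scoped ContDiff
open Filter

section Ext

variable {V G : Type*} [NormedAddCommGroup V] [NormedSpace ℝ V]
    [NormedAddCommGroup G] [NormedSpace ℝ G]

open scoped Manifold in
theorem SmoothOnSet.exists_global [FiniteDimensional ℝ V] {f : V → G} {N : Set V}
    (hf : SmoothOnSet f N) (hN : IsClosed N) : ∃ g : V → G, ContDiff ℝ ∞ g ∧ EqOn f g N := by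
  classical
  let t : V → Set G := fun x => if x ∈ N then {f x} else univ
  have ht : ∀ x, Convex ℝ (t x) := by
    intro x
    by_cases hx : x ∈ N
    · simp [t, hx]
    · simp [t, hx, convex_univ]
  have hloc : ∀ x : V, ∃ U ∈ 𝓝 x, ∃ g : V → G, ContMDiffOn 𝓘(ℝ, V) 𝓘(ℝ, G) ∞ g U ∧ ∀ y ∈ U, g y ∈ t y := by
    intro x
    by_cases hx : x ∈ N
    · obtain ⟨U, g, hU, hxU, hg, he⟩ := hf x hx
      refine ⟨U, hU.mem_nhds hxU, g, hg.contMDiffOn, fun y hy => ?_⟩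
      by_cases hyN : y ∈ N
      · simp only [t, hyN, if_true, mem_singleton_iff]
        exact (he ⟨hyN, hy⟩).symm
      · simp [t, hyN]
    · refine ⟨Nᶜ, hN.isOpen_compl.mem_nhds hx, fun _ => 0, contMDiffOn_const, fun y hy => ?_⟩
      have : y ∉ N := hy
      simp [t, this]
  obtain ⟨g, hg⟩ := exists_contMDiffMap_forall_mem_convex_of_local (n := (⊤ : ℕ∞)) 𝓘(ℝ, V) ht hloc
  refine ⟨g, g.contMDiff.contDiff, fun x hx => ?_⟩
  have := hg x
  simp only [t, hx, if_true, mem_singleton_iff] at this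
  exact this.symm

theorem smoothOnSet_of_contDiff {f g : V → G} {N : Set V} (hg : ContDiff ℝ ∞ g)
    (h : EqOn f g N) : SmoothOnSet f N :=
  fun _ _ => ⟨univ, g, isOpen_univ, mem_univ _, hg.contDiffOn, fun _ hz => h hz.1⟩

theorem SmoothOnSet.mono {f : V → G} {N N' : Set V} (h : SmoothOnSet f N) (hs : N' ⊆ N) :
    SmoothOnSet f N' := fun x hx => by
  obtain ⟨U, g, h1, h2, h3, h4⟩ := h x (hs hx)
  exact ⟨U, g, h1, h2, h3, h4.mono (inter_subset_inter_left _ hs)⟩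

end Ext

section Dim

variable {E : Type*} [NormedAddCommGroup E] [NormedSpace ℝ E]

theorem compact_open_case {M : Set E} (hM : IsOpen M) (hc : IsCompact M) (hne : M.Nonempty) :
    Subsingleton E := by
  have hu : M = univ := IsClopen.eq_univ ⟨hc.isClosed, hM⟩ hne
  by_contra h
  rw [not_subsingleton_iff_nontrivial] at h
  have := NormedSpace.noncompactSpace ℝ E
  exact noncompact_univ E (hu ▸ hc)

theorem isOpen_of_le {M : Set E} {m : ℕ} (hM : IsSubmanifold M m)
    (h : Module.finrank ℝ E ≤ m) : IsOpen M := by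
  rw [isOpen_iff_mem_nhds]
  intro x hx
  obtain ⟨U, Φ, hU, hxU, -, -, he⟩ := hM x hx
  filter_upwards [hU.mem_nhds hxU] with z hz
  have hsub : Subsingleton (EuclideanSpace ℝ (Fin (Module.finrank ℝ E - m))) := by
    rw [Nat.sub_eq_zero_of_le h]; infer_instance
  have : z ∈ U ∩ M := by rw [he]; exact ⟨hz, Subsingleton.elim _ _⟩
  exact this.2

theorem dim_dichotomy {M : Set E} {m : ℕ} (hM : IsSubmanifold M m) (hc : IsCompact M)
    (hne : M.Nonempty) : m ≤ Module.finrank ℝ E ∨ Module.finrank ℝ E = 0 := by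
  by_cases h : m ≤ Module.finrank ℝ E
  · exact Or.inl h
  · right
    have := compact_open_case (isOpen_of_le hM (by omega)) hc hne
    exact Module.finrank_zero_of_subsingleton

theorem finiteDimensional_or_empty {M : Set E} {m : ℕ} (hM : IsSubmanifold M m) (hc : IsCompact M) :
    FiniteDimensional ℝ E ∨ M = ∅ := by
  by_cases h : FiniteDimensional ℝ E
  · exact Or.inl h
  · right
    by_contra hne
    replace hne := Set.nonempty_iff_ne_empty.2 hne
    have h0 : Module.finrank ℝ E = 0 := Module.finrank_of_not_finite h
    have := compact_open_case (isOpen_of_le hM (by omega)) hc hne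
    exact h inferInstance

end Dim

section Level
set_option linter.unusedSectionVars false

variable {V F : Type*} [NormedAddCommGroup V] [NormedSpace ℝ V] [FiniteDimensional ℝ V]
    [NormedAddCommGroup F] [NormedSpace ℝ F] [FiniteDimensional ℝ F] {p : ℕ}

/-- The zero set of `ζ` on `M ∩ Og`. -/
def levelSet (M Og : Set V) (ζ : V → EuclideanSpace ℝ (Fin p)) : Set V :=
  {x | x ∈ M ∧ x ∈ Og ∧ ζ x = 0}

/-- Regularity of the zero set. -/
def RegLevel (M Og : Set V) (ζ : V → EuclideanSpace ℝ (Fin p)) : Prop :=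
  ∀ x ∈ levelSet M Og ζ, ∀ c, ∃ v ∈ SubTangent M x, fderiv ℝ ζ x v = c

theorem level_locDef {M Og : Set V} (hO : IsOpen Og) {ζ : V → EuclideanSpace ℝ (Fin p)}
    (hζ : ContDiff ℝ ∞ ζ) (hreg : RegLevel M Og ζ) {x : V} (hx : x ∈ levelSet M Og ζ)
    {U : Set V} {Φ : V → F} (hxU : x ∈ U) (hL : LocDef M U Φ) :
    ∃ U' ⊆ U, x ∈ U' ∧ LocDef (levelSet M Og ζ) U' (fun z => (Φ z, ζ z)) ∧
      ∀ z ∈ U', fderiv ℝ (fun z => (Φ z, ζ z)) z = (fderiv ℝ Φ z).prod (fderiv ℝ ζ z) := by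
  have hd : ∀ z ∈ U, HasFDerivAt (fun z => (Φ z, ζ z)) ((fderiv ℝ Φ z).prod (fderiv ℝ ζ z)) z :=
    fun z hz => (hL.hasFDerivAt hz).prodMk (hζ.differentiable (by simp) z).hasFDerivAt
  have hs : ContDiffOn ℝ ∞ (fun z => (Φ z, ζ z)) U := hL.smooth.prodMk hζ.contDiffOn
  have hc : ContinuousOn (fderiv ℝ (fun z => (Φ z, ζ z))) U :=
    hs.continuousOn_fderiv_of_isOpen hL.isOpen (by simp)
  have hopen := hc.isOpen_inter_preimage hL.isOpen
    (isOpen_surj (V := V) (F := F × EuclideanSpace ℝ (Fin p)))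
  refine ⟨(U ∩ fderiv ℝ (fun z => (Φ z, ζ z)) ⁻¹' {L | Surjective L}) ∩ Og,
    fun z hz => hz.1.1, ⟨⟨hxU, ?_⟩, hx.2.1⟩, ⟨hopen.inter hO, hs.mono fun z hz => hz.1.1,
    fun z hz => hz.1.2, fun z hz => ?_⟩, fun z hz => (hd z hz.1.1).fderiv⟩
  · change Surjective (fderiv ℝ (fun z => (Φ z, ζ z)) x)
    rw [(hd x hxU).fderiv]
    rintro ⟨a, c⟩
    obtain ⟨v0, hv0⟩ := hL.surj x hxU a
    obtain ⟨v1, hv1, hv1'⟩ := hreg x hx (c - fderiv ℝ ζ x v0)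
    rw [hL.tangent hxU hx.1, LinearMap.mem_ker] at hv1
    refine ⟨v0 + v1, ?_⟩
    have hv1'' : fderiv ℝ Φ x v1 = 0 := hv1
    simp [hv0, hv1', hv1'']
  · have h1 := hL.mem_iff z hz.1.1
    have h2 : z ∈ Og := hz.2
    simp [levelSet, h1, h2, Prod.ext_iff]

theorem level_tangent {M Og : Set V} (hM : IsMfd M) (hO : IsOpen Og)
    {ζ : V → EuclideanSpace ℝ (Fin p)}
    (hζ : ContDiff ℝ ∞ ζ) (hreg : RegLevel M Og ζ) {x : V} (hx : x ∈ levelSet M Og ζ) (v : V) :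
    v ∈ SubTangent (levelSet M Og ζ) x ↔ v ∈ SubTangent M x ∧ fderiv ℝ ζ x v = 0 := by
  obtain ⟨k, U, Φ, hxU, hL⟩ := hM x hx.1
  obtain ⟨U', hU', hxU', hL', hd⟩ := level_locDef hO hζ hreg hx hxU hL
  rw [hL'.tangent hxU' hx, hL.tangent hxU hx.1, hd x hxU']
  simp [LinearMap.mem_ker]

theorem level_unique {M Og : Set V} (hM : IsMfd M) (hO : IsOpen Og)
    {ζ : V → EuclideanSpace ℝ (Fin p)} {B : V →L[ℝ] V →L[ℝ] ℝ} (hB : ∀ u, B u u = 0 → u = 0)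
    (hζ : ContDiff ℝ ∞ ζ) (hreg : RegLevel M Og ζ) {x : V} (hx : x ∈ levelSet M Og ζ) {u v : V}
    (hu : u ∈ SubTangent M x) (hv : v ∈ SubTangent M x)
    (hu' : ∀ k ∈ SubTangent (levelSet M Og ζ) x, B u k = 0)
    (hv' : ∀ k ∈ SubTangent (levelSet M Og ζ) x, B v k = 0)
    (he : fderiv ℝ ζ x u = fderiv ℝ ζ x v) : u = v := by
  have hd : u - v ∈ SubTangent (levelSet M Og ζ) x := by
    rw [level_tangent hM hO hζ hreg hx]
    exact ⟨Submodule.sub_mem _ hu hv, by rw [map_sub, he, sub_self]⟩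
  have h0 := hB (u - v) (by rw [map_sub B, sub_apply, hu' _ hd, hv' _ hd, sub_zero])
  exact sub_eq_zero.1 h0

theorem level_frame {M Og : Set V} (hM : IsMfd M) (hO : IsOpen Og)
    {ζ : V → EuclideanSpace ℝ (Fin p)} {B : V →L[ℝ] V →L[ℝ] ℝ} (hB : ∀ u, B u u = 0 → u = 0)
    (hζ : ContDiff ℝ ∞ ζ) (hreg : RegLevel M Og ζ) :
    ∃ u : Fin p → V → V, (∀ i, SmoothOnSet (u i) (levelSet M Og ζ)) ∧
      ∀ x ∈ levelSet M Og ζ, ∀ i, u i x ∈ SubTangent M x ∧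
        (∀ v ∈ SubTangent (levelSet M Og ζ) x, B (u i x) v = 0) ∧
        fderiv ℝ ζ x (u i x) = EuclideanSpace.single i 1 := by
  classical
  have hloc : ∀ x ∈ levelSet M Og ζ, ∃ (U : Set V) (g : Fin p → V → V), IsOpen U ∧ x ∈ U ∧
      (∀ i, ContDiffOn ℝ ∞ (g i) U) ∧ ∀ z ∈ U, z ∈ levelSet M Og ζ → ∀ i, g i z ∈ SubTangent M z ∧
        (∀ v ∈ SubTangent (levelSet M Og ζ) z, B (g i z) v = 0) ∧
        fderiv ℝ ζ z (g i z) = EuclideanSpace.single i 1 := by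
    intro x hx
    obtain ⟨k, U, Φ, hxU, hL⟩ := hM x hx.1
    obtain ⟨U', hU', hxU', hL', hd⟩ := level_locDef hO hζ hreg hx hxU hL
    refine ⟨U', fun i z => orthInv B (fderiv ℝ (fun z => (Φ z, ζ z)) z)
      ((0 : EuclideanSpace ℝ (Fin k)), (EuclideanSpace.single i (1 : ℝ) : EuclideanSpace ℝ (Fin p))),
      hL'.isOpen, hxU', ?_, ?_⟩
    · intro i z hz
      have h1 := (orthInv_spec hB (hL'.surj z hz) ((0 : EuclideanSpace ℝ (Fin k)),
        (EuclideanSpace.single i (1 : ℝ) : EuclideanSpace ℝ (Fin p)))).2.2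
      have h2 : ContDiffAt ℝ ∞ (fderiv ℝ (fun z => (Φ z, ζ z))) z :=
        (hL'.smooth.contDiffAt (hL'.isOpen.mem_nhds hz)).fderiv_right (by simp)
      exact (h1.comp z h2).contDiffWithinAt
    · intro z hz hzl i
      obtain ⟨h1, h2, -⟩ := orthInv_spec hB (hL'.surj z hz) ((0 : EuclideanSpace ℝ (Fin k)),
        (EuclideanSpace.single i (1 : ℝ) : EuclideanSpace ℝ (Fin p)))
      refine ⟨?_, ?_, ?_⟩
      · rw [hL.tangent (hU' hz) hzl.1, LinearMap.mem_ker]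
        have h1' := congrArg Prod.fst h1
        rw [hd z hz] at h1'
        dsimp only
        rw [hd z hz]
        exact h1'
      · intro v hv
        rw [hL'.tangent hz hzl, LinearMap.mem_ker] at hv
        exact h2 v hv
      · have h1' := congrArg Prod.snd h1
        rw [hd z hz] at h1'
        dsimp only
        rw [hd z hz]
        exact h1'
  choose! U g hU hxU hg hspec using hloc
  refine ⟨fun i x => g x i x, fun i x hx => ⟨U x, g x i, hU x hx, hxU x hx, hg x hx i, ?_⟩, ?_⟩
  · rintro z ⟨hz, hzU⟩
    have h1 := hspec z hz z (hxU z hz) hz i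
    have h2 := hspec x hx z hzU hz i
    exact level_unique hM hO hB hζ hreg hz h1.1 h2.1 h1.2.1 h2.2.1 (h1.2.2.trans h2.2.2.symm)
  · intro x hx i
    exact hspec x hx x (hxU x hx) hx i

theorem frame_indep {u : Fin p → V} {A : V →L[ℝ] EuclideanSpace ℝ (Fin p)}
    (h : ∀ i, A (u i) = EuclideanSpace.single i 1) : LinearIndependent ℝ u := by
  have : LinearIndependent ℝ (fun i => (A : V →ₗ[ℝ] EuclideanSpace ℝ (Fin p)) (u i)) := by
    have hb := (EuclideanSpace.basisFun (Fin p) ℝ).toBasis.linearIndependent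
    have e : (fun i => (A : V →ₗ[ℝ] EuclideanSpace ℝ (Fin p)) (u i)) =
        ⇑(EuclideanSpace.basisFun (Fin p) ℝ).toBasis := by
      ext1 i
      simp [h]
    rw [e]
    exact hb
  exact LinearIndependent.of_comp (A : V →ₗ[ℝ] EuclideanSpace ℝ (Fin p)) this

theorem eucl_sum_single (c : EuclideanSpace ℝ (Fin p)) :
    ∑ i, c i • (EuclideanSpace.single i (1 : ℝ) : EuclideanSpace ℝ (Fin p)) = c := by
  have := (EuclideanSpace.basisFun (Fin p) ℝ).toBasis.sum_repr c
  simpa using this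

theorem frame_spans {T T' : Submodule ℝ V} {u : Fin p → V} {A : V →L[ℝ] EuclideanSpace ℝ (Fin p)}
    (hT : ∀ v, v ∈ T' ↔ v ∈ T ∧ A v = 0) (hu : ∀ i, u i ∈ T)
    (h : ∀ i, A (u i) = EuclideanSpace.single i 1) :
    T' ⊔ Submodule.span ℝ (Set.range u) = T := by
  apply le_antisymm
  · refine sup_le (fun v hv => ((hT v).1 hv).1) (Submodule.span_le.2 ?_)
    rintro _ ⟨i, rfl⟩; exact hu i
  · intro v hv
    have hsum : ∑ i, A v i • u i ∈ Submodule.span ℝ (Set.range u) :=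
      Submodule.sum_mem _ fun i _ => Submodule.smul_mem _ _ (Submodule.subset_span ⟨i, rfl⟩)
    have hsumT : ∑ i, A v i • u i ∈ T :=
      Submodule.sum_mem _ fun i _ => Submodule.smul_mem _ _ (hu i)
    have h1 : v - ∑ i, A v i • u i ∈ T' := by
      rw [hT]
      refine ⟨Submodule.sub_mem _ hv hsumT, ?_⟩
      rw [map_sub, map_sum]
      simp only [map_smul, h]
      rw [eucl_sum_single, sub_self]
    rw [← sub_add_cancel v (∑ i, A v i • u i)]
    exact Submodule.add_mem_sup h1 hsum

end Level
end Part5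

section Part6
open scoped ContDiff
open Filter

/-- Euclidean space. -/
abbrev Eu (n : ℕ) := EuclideanSpace ℝ (Fin n)

section Coords
variable {p : ℕ}

/-- Coordinates dual to the basis `y, w`. -/
structure Coords (y : Eu (p + 1)) (w : Fin p → Eu (p + 1)) (η : Eu (p + 1) →L[ℝ] ℝ)
    (τ : Eu (p + 1) →L[ℝ] Eu p) : Prop where
  ηy : η y = 1
  ηw : ∀ i, η (w i) = 0
  τy : τ y = 0
  τw : ∀ i, τ (w i) = EuclideanSpace.single i 1
  decomp : ∀ v, v = η v • y + ∑ i, τ v i • w i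

theorem exists_coords {y : Eu (p + 1)} {w : Fin p → Eu (p + 1)}
    (h : (Matrix.of fun i j => (Fin.cons y w : Fin (p+1) → Eu (p + 1)) i j).det ≠ 0) :
    ∃ η τ, Coords y w η τ := by
  have hli : LinearIndependent ℝ (Fin.cons y w : Fin (p+1) → Eu (p + 1)) := by
    have h1 : LinearIndependent ℝ (fun i => (WithLp.linearEquiv 2 ℝ (Fin (p+1) → ℝ) :
        Eu (p + 1) →ₗ[ℝ] (Fin (p+1) → ℝ)) ((Fin.cons y w : Fin (p+1) → Eu (p + 1)) i)) := by
      have := Matrix.linearIndependent_rows_iff_isUnit.2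
        ((Matrix.isUnit_iff_isUnit_det _).2 (isUnit_iff_ne_zero.2 h))
      exact this
    exact LinearIndependent.of_comp _ h1
  let b := basisOfLinearIndependentOfCardEqFinrank hli (by simp)
  have hb : ∀ i, b i = (Fin.cons y w : Fin (p+1) → Eu (p + 1)) i := by
    intro i; simp [b]
  have hby : b 0 = y := by rw [hb]; rfl
  have hbw : ∀ i : Fin p, b i.succ = w i := by intro i; rw [hb]; rfl
  let η : Eu (p + 1) →L[ℝ] ℝ := LinearMap.toContinuousLinearMap (b.coord 0)
  let τ' : Eu (p + 1) →ₗ[ℝ] (Fin p → ℝ) := LinearMap.pi fun i => b.coord i.succ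
  let τ : Eu (p + 1) →L[ℝ] Eu p := LinearMap.toContinuousLinearMap
    (((WithLp.linearEquiv 2 ℝ (Fin p → ℝ)).symm : (Fin p → ℝ) →ₗ[ℝ] Eu p) ∘ₗ τ')
  have hτ : ∀ v i, τ v i = b.coord i.succ v := fun v i => rfl
  have hη : ∀ v, η v = b.coord 0 v := fun v => rfl
  refine ⟨η, τ, ?_, ?_, ?_, ?_, ?_⟩
  · rw [hη, ← hby]; simp
  · intro i; rw [hη, ← hbw]; simp
  · ext i; rw [hτ, ← hby]; simp [Finsupp.single_apply, (Fin.succ_ne_zero i).symm]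
  · intro i; ext j; rw [hτ, ← hbw]
    simp [Finsupp.single_apply, Pi.single_apply, eq_comm]
  · intro v
    conv_lhs => rw [← b.sum_repr v]
    rw [Fin.sum_univ_succ, hby]
    simp only [hbw, hτ, hη, Module.Basis.coord_apply]

theorem Coords.eq_iff {y : Eu (p + 1)} {w : Fin p → Eu (p + 1)} {η : Eu (p + 1) →L[ℝ] ℝ}
    {τ : Eu (p + 1) →L[ℝ] Eu p} (h : Coords y w η τ) (hy : y ∈ sphereSet p) {v : Eu (p + 1)}
    (hv : v ∈ sphereSet p) : v = y ↔ 0 < η v ∧ τ v = 0 := by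
  constructor
  · rintro rfl; exact ⟨by rw [h.ηy]; exact one_pos, h.τy⟩
  · rintro ⟨h1, h2⟩
    have h3 := h.decomp v
    rw [h2] at h3
    simp only [PiLp.zero_apply, zero_smul, Finset.sum_const_zero, add_zero] at h3
    have h4 : ‖v‖ = 1 := by simpa [sphereSet] using hv
    have h5 : ‖y‖ = 1 := by simpa [sphereSet] using hy
    rw [h3, norm_smul, h5, mul_one, Real.norm_of_nonneg h1.le] at h4
    rw [h3, h4, one_smul]

theorem Coords.eq_zero {y : Eu (p + 1)} {w : Fin p → Eu (p + 1)} {η : Eu (p + 1) →L[ℝ] ℝ}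
    {τ : Eu (p + 1) →L[ℝ] Eu p} (h : Coords y w η τ) {v : Eu (p + 1)} (h1 : η v = 0) (h2 : τ v = 0) :
    v = 0 := by
  have := h.decomp v
  rw [h1, h2] at this
  simpa using this

theorem mem_sphere_tangent {y : Eu (p + 1)} (hy : y ∈ sphereSet p) (u : Eu (p + 1)) :
    u ∈ SubTangent (sphereSet p) y ↔ ⟪y, u⟫ = 0 := by
  have hd : ∀ z : Eu (p + 1), HasFDerivAt (fun z : Eu (p + 1) => ‖z‖ ^ 2 - 1) (2 • innerSL ℝ z) z := by
    intro z
    have := (hasStrictFDerivAt_norm_sq z).hasFDerivAt.sub_const 1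
    exact this
  have hL : LocDef (sphereSet p) {z | z ≠ 0} (fun z : Eu (p + 1) => ‖z‖ ^ 2 - 1) := by
    refine ⟨isOpen_ne, ((contDiff_norm_sq ℝ).sub contDiff_const).contDiffOn, fun z hz => ?_, fun z hz => ?_⟩
    · rw [(hd z).fderiv]
      intro c
      have hz' : ‖z‖ ^ 2 ≠ 0 := by
        have : ‖z‖ ≠ 0 := norm_ne_zero_iff.2 hz
        positivity
      refine ⟨(c / (2 * ‖z‖ ^ 2)) • z, ?_⟩
      simp only [map_smul, smul_apply, coe_innerSL_apply, real_inner_self_eq_norm_sq,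
        smul_eq_mul, nsmul_eq_mul]
      have hz0 : ‖z‖ ≠ 0 := norm_ne_zero_iff.2 hz
      field_simp
      try simp
      try field_simp
    · have h0 := norm_nonneg z
      simp only [sphereSet, mem_sphere_iff_norm, sub_zero]
      constructor
      · intro h; rw [h]; norm_num
      · intro h; nlinarith
  have hy0 : y ≠ 0 := by
    rintro rfl
    simp [sphereSet] at hy
  rw [hL.tangent hy0 hy, LinearMap.mem_ker, (hd y).fderiv]
  simp

end Coords

section Pont

variable {E : Type*} [NormedAddCommGroup E] [InnerProductSpace ℝ E] {m p : ℕ}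

theorem innerSL_posdef (u : E) (h : innerSL ℝ u u = 0) : u = 0 := by
  simpa using h

/-- Product inner product as a continuous bilinear map. -/
def prodB (E : Type*) [NormedAddCommGroup E] [InnerProductSpace ℝ E] :
    (E × ℝ) →L[ℝ] (E × ℝ) →L[ℝ] ℝ :=
  (show (E × ℝ) →L[ℝ] (E × ℝ) →L[ℝ] ℝ from (innerSL ℝ : E →L[ℝ] E →L[ℝ] ℝ).bilinearComp
    (ContinuousLinearMap.fst ℝ E ℝ) (ContinuousLinearMap.fst ℝ E ℝ)) +
  (ContinuousLinearMap.mul ℝ ℝ).bilinearComp (ContinuousLinearMap.snd ℝ E ℝ)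
    (ContinuousLinearMap.snd ℝ E ℝ)

theorem prodB_apply (u v : E × ℝ) : prodB E u v = prodInner u v := by
  simp [prodB, prodInner]

theorem prodB_posdef (u : E × ℝ) (h : prodB E u u = 0) : u = 0 := by
  rw [prodB_apply, prodInner] at h
  have h1 : 0 ≤ ⟪u.1, u.1⟫ := real_inner_self_nonneg
  have h2 : 0 ≤ u.2 * u.2 := mul_self_nonneg _
  have h3 : ⟪u.1, u.1⟫ = 0 := by linarith
  have h4 : u.2 * u.2 = 0 := by linarith
  ext1
  · exact inner_self_eq_zero.1 h3
  · exact mul_self_eq_zero.1 h4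

variable [FiniteDimensional ℝ E]

theorem codim_arith {n m p : ℕ} (h : m ≤ n ∨ n = 0) (h2 : (n - m) + p ≤ n) :
    n - (m - p) = (n - m) + p := by omega

theorem finrank_le_of_surj {V F : Type*} [NormedAddCommGroup V] [NormedSpace ℝ V]
    [NormedAddCommGroup F] [NormedSpace ℝ F] [FiniteDimensional ℝ V] {A : V →L[ℝ] F}
    (h : Surjective A) : Module.finrank ℝ F ≤ Module.finrank ℝ V :=
  LinearMap.finrank_le_finrank_of_surjective (f := (A : V →ₗ[ℝ] F)) h

/-- Data of a map near `y`. -/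
theorem pont_of_reg {M : Set E} (hM : IsSubmanifold M m) (hMc : IsCompact M)
    {f F : E → Eu (p + 1)} (hF : ContDiff ℝ ∞ F) (hfF : EqOn f F M)
    (hfs : ∀ x ∈ M, f x ∈ sphereSet p) {y : Eu (p + 1)} {w : Fin p → Eu (p + 1)}
    (hy : y ∈ sphereSet p) (hw : PosOrientedTangentBasis p y w)
    {η : Eu (p + 1) →L[ℝ] ℝ} {τ : Eu (p + 1) →L[ℝ] Eu p} (hc : Coords y w η τ)
    (hreg : RegLevel M {z | 0 < η (F z)} (fun z => τ (F z))) :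
    ∃ N ν, IsPontryaginManifold m p f M y w N ν := by
  have hO : IsOpen {z | 0 < η (F z)} := isOpen_lt continuous_const (η.continuous.comp hF.continuous)
  have hζ : ContDiff ℝ ∞ (fun z => τ (F z)) := τ.contDiff.comp hF
  have hζd : ∀ z, fderiv ℝ (fun z => τ (F z)) z = τ.comp (fderiv ℝ F z) := fun z =>
    (τ.hasFDerivAt.comp z (hF.differentiable (by simp) z).hasFDerivAt).fderiv
  obtain ⟨ν, hνs, hν⟩ := level_frame hM.isMfd hO innerSL_posdef hζ hreg
  have hN : levelSet M {z | 0 < η (F z)} (fun z => τ (F z)) = {x ∈ M | f x = y} := by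
    ext x
    simp only [levelSet, mem_ofPred_eq]
    refine and_congr_right fun hx => ?_
    rw [← hfF hx, hc.eq_iff hy (hfs x hx)]
  have hyL : ∀ x ∈ M, f x = y → ∀ v ∈ SubTangent M x, ⟪y, fderiv ℝ F x v⟫ = 0 := by
    intro x hx hxy v hv
    have h1 : HasFDerivAt (fun z => ⟪F z, F z⟫) _ x :=
      (hF.differentiable (by simp) x).hasFDerivAt.inner ℝ (hF.differentiable (by simp) x).hasFDerivAt
    have h2 : HasDerivOn (fun _ : E => (1 : ℝ)) M x _ := hasDerivOn_of_eqOn hx (fun z hz => by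
      have : ‖f z‖ = 1 := by simpa [sphereSet] using hfs z hz
      rw [← hfF hz, real_inner_self_eq_norm_sq, this]; norm_num) h1
    have h3 : HasDerivOn (fun _ : E => (1 : ℝ)) M x (0 : E →L[ℝ] ℝ) :=
      hasDerivOn_of_eqOn hx (fun z hz => rfl) (hasFDerivAt_const (1 : ℝ) x)
    have h4 := hasDerivOn_unique h2 h3 hv
    have hFx : F x = y := by rw [← hfF hx, hxy]
    simp [fderivInnerCLM_apply, hFx, real_inner_comm] at h4
    exact h4
  have hker : ∀ u : Eu (p + 1), ⟪y, u⟫ = 0 → τ u = 0 → u = 0 := by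
    intro u h1 h2
    have h3 := hc.decomp u
    rw [h2] at h3
    simp only [PiLp.zero_apply, zero_smul, Finset.sum_const_zero, add_zero] at h3
    have h5 : ‖y‖ = 1 := by simpa [sphereSet] using hy
    rw [h3, inner_smul_right, real_inner_self_eq_norm_sq, h5] at h1
    have : η u = 0 := by simpa using h1
    rw [h3, this, zero_smul]
  refine ⟨levelSet M {z | 0 < η (F z)} (fun z => τ (F z)), ν, ⟨⟨?_, ?_, ?_, ⟨hνs, ?_, ?_, ?_, ?_⟩⟩,
    hy, hw, ?_, hN, ?_⟩⟩
  · exact fun x hx => hx.1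
  · rw [hN]
    have : {x ∈ M | f x = y} = M ∩ F ⁻¹' {y} := by
      ext x
      constructor
      · rintro ⟨h1, h2⟩; exact ⟨h1, by rw [mem_preimage, ← hfF h1]; exact h2⟩
      · rintro ⟨h1, h2⟩; exact ⟨h1, by rw [hfF h1]; exact h2⟩
    rw [this]
    exact hMc.inter_right (isClosed_singleton.preimage hF.continuous)
  · rcases (levelSet M {z | 0 < η (F z)} (fun z => τ (F z))).eq_empty_or_nonempty with h0 | ⟨x0, hx0⟩
    · rw [h0]; intro x hx; exact absurd hx (notMem_empty x)
    have hdim := dim_dichotomy hM hMc ⟨x0, hx0.1⟩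
    have key : ∀ x ∈ levelSet M {z | 0 < η (F z)} (fun z => τ (F z)), ∃ (U : Set E)
        (Φ : E → Eu (Module.finrank ℝ E - m) × Eu p), x ∈ U ∧
        LocDef (levelSet M {z | 0 < η (F z)} (fun z => τ (F z))) U Φ := by
      intro x hx
      obtain ⟨U, Φ, h1, h2, h3, h4, h5⟩ := hM x hx.1
      obtain ⟨U', -, h6, h7, -⟩ := level_locDef hO hζ hreg hx h2 (LocDef.of_def h1 h3 h4 h5)
      exact ⟨U', _, h6, h7⟩
    have hle : (Module.finrank ℝ E - m) + p ≤ Module.finrank ℝ E := by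
      obtain ⟨U, Φ, h1, h2⟩ := key x0 hx0
      have := finrank_le_of_surj (h2.surj x0 h1)
      simpa using this
    refine isSubmanifold_of (codim_arith hdim hle) fun x hx => ?_
    obtain ⟨U, Φ, h1, h2⟩ := key x hx
    exact ⟨U, _, inferInstance, inferInstance, inferInstance, Φ, by simp, h1, h2⟩
  · exact fun i x hx => (hν x hx i).1
  · exact fun i x hx v hv => (hν x hx i).2.1 v hv
  · exact fun x hx => frame_indep fun i => (hν x hx i).2.2
  · exact fun x hx => frame_spans (level_tangent hM.isMfd hO hζ hreg hx) (fun i => (hν x hx i).1)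
      fun i => (hν x hx i).2.2
  · intro x hx hxy
    refine ⟨fderiv ℝ F x, hasDerivOn_of_eqOn hx hfF (hF.differentiable (by simp) x).hasFDerivAt, ?_⟩
    intro u hu
    rw [mem_sphere_tangent hy] at hu
    have hxN : x ∈ levelSet M {z | 0 < η (F z)} (fun z => τ (F z)) := by rw [hN]; exact ⟨hx, hxy⟩
    obtain ⟨v, hv, hv'⟩ := hreg x hxN (τ u)
    refine ⟨v, hv, ?_⟩
    rw [hζd] at hv'
    have h1 : ⟪y, fderiv ℝ F x v - u⟫ = 0 := by rw [inner_sub_right, hyL x hx hxy v hv, hu, sub_zero]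
    have h2 : τ (fderiv ℝ F x v - u) = 0 := by
      rw [map_sub]; exact sub_eq_zero.2 hv'
    exact sub_eq_zero.1 (hker _ h1 h2)
  · intro x hx
    have hx' : x ∈ M ∧ f x = y := by rw [hN] at hx; exact hx
    refine ⟨fderiv ℝ F x, hasDerivOn_of_eqOn hx'.1 hfF (hF.differentiable (by simp) x).hasFDerivAt,
      fun i => ?_⟩
    have h1 := hν x hx i
    have h2 := h1.2.2
    rw [hζd] at h2
    refine sub_eq_zero.1 (hker _ ?_ ?_)
    · rw [inner_sub_right, hyL x hx'.1 hx'.2 _ h1.1, hw.1 i, sub_zero]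
    · rw [map_sub, hc.τw]; exact sub_eq_zero.2 h2

theorem pont_reg {M : Set E} {f F : E → Eu (p + 1)} (hF : ContDiff ℝ ∞ F) (hfF : EqOn f F M)
    (hfs : ∀ x ∈ M, f x ∈ sphereSet p) {y : Eu (p + 1)} {w : Fin p → Eu (p + 1)} {N : Set E}
    {ν : Fin p → E → E} (h : IsPontryaginManifold m p f M y w N ν)
    {η : Eu (p + 1) →L[ℝ] ℝ} {τ : Eu (p + 1) →L[ℝ] Eu p} (hc : Coords y w η τ) :
    N = levelSet M {z | 0 < η (F z)} (fun z => τ (F z)) ∧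
    RegLevel M {z | 0 < η (F z)} (fun z => τ (F z)) ∧
    ∀ x ∈ N, ∀ i, fderiv ℝ F x (ν i x) = w i := by
  have hN : N = levelSet M {z | 0 < η (F z)} (fun z => τ (F z)) := by
    rw [h.preimage]
    ext x
    simp only [levelSet, mem_ofPred_eq]
    refine and_congr_right fun hx => ?_
    rw [← hfF hx, hc.eq_iff h.mem_sphere (hfs x hx)]
  have h3 : ∀ x ∈ N, ∀ i, fderiv ℝ F x (ν i x) = w i := by
    intro x hx i
    obtain ⟨L, hL, hLi⟩ := h.pullback x hx
    rw [← hLi i]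
    exact hasDerivOn_unique (hasDerivOn_of_eqOn (h.framed.subset hx) hfF
      (hF.differentiable (by simp) x).hasFDerivAt) hL (h.framed.framing.mem_tangent i x hx)
  refine ⟨hN, fun x hx c => ?_, h3⟩
  rw [← hN] at hx
  refine ⟨∑ i, c i • ν i x, Submodule.sum_mem _ fun i _ => Submodule.smul_mem _ _
    (h.framed.framing.mem_tangent i x hx), ?_⟩
  have hζd : fderiv ℝ (fun z => τ (F z)) x = τ.comp (fderiv ℝ F x) :=
    (τ.hasFDerivAt.comp x (hF.differentiable (by simp) x).hasFDerivAt).fderiv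
  rw [hζd, ContinuousLinearMap.comp_apply, map_sum, map_sum]
  simp only [map_smul, h3 x hx, hc.τw]
  exact eucl_sum_single c

end Pont
end Part6

section Part7
open scoped ContDiff
open Filter

section LA

theorem sard_quot {V : Type*} [NormedAddCommGroup V] [NormedSpace ℝ V] [FiniteDimensional ℝ V]
    {p : ℕ} {M : Set V} (hM : IsMfd M) {H : V → ℝ} {T : V → Eu p}
    (hH : ContDiff ℝ ∞ H) (hT : ContDiff ℝ ∞ T) :
    ∃ q : Eu p, ∀ x ∈ M, 0 < H x → T x = H x • q → ∀ c, ∃ v ∈ SubTangent M x,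
      fderiv ℝ T x v - fderiv ℝ H x v • q = c := by
  have hO : IsOpen {x | 0 < H x} := isOpen_lt continuous_const hH.continuous
  obtain ⟨q, hq⟩ := sard_mfd (Θ := fun x => (H x)⁻¹ • T x) hM hO
    ((hH.contDiffOn.inv fun x hx => ne_of_gt hx).smul hT.contDiffOn)
  refine ⟨q, fun x hx hHx hTx c => ?_⟩
  have hΘ : (H x)⁻¹ • T x = q := by rw [hTx, smul_smul, inv_mul_cancel₀ hHx.ne', one_smul]
  obtain ⟨v, hv, hv'⟩ := hq x hx hHx hΘ ((H x)⁻¹ • c)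
  refine ⟨v, hv, ?_⟩
  have hHd := (hH.differentiable (by simp) x).hasFDerivAt
  have hTd := (hT.differentiable (by simp) x).hasFDerivAt
  have hΘd : DifferentiableAt ℝ (fun x => (H x)⁻¹ • T x) x :=
    (hHd.differentiableAt.inv hHx.ne').smul hTd.differentiableAt
  have h1 : HasFDerivAt T _ x := (hHd.smul hΘd.hasFDerivAt).congr_of_eventuallyEq (by
    filter_upwards [hO.mem_nhds hHx] with z hz
    have : H z ≠ 0 := ne_of_gt hz
    simp [this])
  rw [h1.fderiv]
  simp only [add_apply, smul_apply, ContinuousLinearMap.smulRight_apply, hv', hΘ]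
  rw [smul_smul, mul_inv_cancel₀ hHx.ne', one_smul]
  abel

variable {p : ℕ}

/-- First standard basis vector. -/
def e0 (p : ℕ) : Eu (p + 1) := EuclideanSpace.single 0 1
/-- Remaining standard basis vectors. -/
def eS (p : ℕ) (i : Fin p) : Eu (p + 1) := EuclideanSpace.single i.succ 1

theorem e0_mem : e0 p ∈ sphereSet p := by simp [e0, sphereSet]

theorem e_det : (Matrix.of fun i j => (Fin.cons (e0 p) (eS p) : Fin (p+1) → Eu (p + 1)) i j).det = 1 := by
  have : (Matrix.of fun i j => (Fin.cons (e0 p) (eS p) : Fin (p+1) → Eu (p + 1)) i j) = 1 := by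
    ext i j
    refine Fin.cases ?_ (fun i => ?_) i
    · simp [e0, Matrix.one_apply, Pi.single_apply, eq_comm]
    · simp [eS, Matrix.one_apply, Pi.single_apply, eq_comm]
  rw [this, Matrix.det_one]

theorem e_basis : PosOrientedTangentBasis p (e0 p) (eS p) :=
  ⟨fun i => by simp [e0, eS, EuclideanSpace.inner_single_left, (Fin.succ_ne_zero i).symm], by
    rw [e_det]; exact one_pos⟩

theorem basis_of_q {y : Eu (p + 1)} (hy : y ∈ sphereSet p) (h0 : 0 < y 0) :
    PosOrientedTangentBasis p y fun i => eS p i - ⟪eS p i, y⟫ • y := by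
  have h5 : ‖y‖ = 1 := by simpa [sphereSet] using hy
  refine ⟨fun i => ?_, ?_⟩
  · rw [inner_sub_right, inner_smul_right, real_inner_self_eq_norm_sq, h5, real_inner_comm]
    ring
  · have h1 : (Matrix.of fun i j => (Fin.cons y (fun i => eS p i - ⟪eS p i, y⟫ • y) :
        Fin (p+1) → Eu (p + 1)) i j).det =
        (Matrix.of fun i j => (Fin.cons y (eS p) : Fin (p+1) → Eu (p + 1)) i j).det := by
      refine Matrix.det_eq_of_forall_row_eq_smul_add_const
        (Fin.cons 0 fun i => - ⟪eS p i, y⟫) 0 (by simp) ?_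
      intro i j
      refine Fin.cases ?_ (fun i => ?_) i
      · simp
      · simp [sub_eq_add_neg]
    rw [h1, Matrix.det_of_upperTriangular]
    · rw [Fin.prod_univ_succ]
      simpa [eS] using h0
    · intro i j hij
      revert hij
      refine Fin.cases ?_ (fun i => ?_) i
      · intro hij; exact absurd hij (Fin.not_lt_zero _)
      · intro hij
        have : j ≠ i.succ := ne_of_lt hij
        simp [eS, Pi.single_apply, this]

variable {E : Type*} [NormedAddCommGroup E] [InnerProductSpace ℝ E] {m : ℕ} [FiniteDimensional ℝ E]

theorem exists_pont {M : Set E} (hM : IsSubmanifold M m) (hMc : IsCompact M)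
    {f : E → Eu (p + 1)} (hf : SmoothOnSet f M)
    (hfs : ∀ x ∈ M, f x ∈ sphereSet p) : ∃ y w N ν, IsPontryaginManifold m p f M y w N ν := by
  obtain ⟨F, hF, hfF⟩ := hf.exists_global hMc.isClosed
  obtain ⟨η₀, τ₀, hc₀⟩ := exists_coords (p := p) (y := e0 p) (w := eS p) (by rw [e_det]; exact one_ne_zero)
  have hFd : ∀ x, HasFDerivAt F (fderiv ℝ F x) x := fun x => (hF.differentiable (by simp) x).hasFDerivAt
  obtain ⟨q, hq⟩ := sard_quot (H := fun x => η₀ (F x)) (T := fun x => τ₀ (F x)) hM.isMfd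
    (η₀.contDiff.comp hF) (τ₀.contDiff.comp hF)
  have hd1 : ∀ x, fderiv ℝ (fun x => η₀ (F x)) x = η₀.comp (fderiv ℝ F x) := fun x =>
    (η₀.hasFDerivAt.comp x (hFd x)).fderiv
  have hd2 : ∀ x, fderiv ℝ (fun x => τ₀ (F x)) x = τ₀.comp (fderiv ℝ F x) := fun x =>
    (τ₀.hasFDerivAt.comp x (hFd x)).fderiv
  let z : Eu (p + 1) := e0 p + ∑ i, q i • eS p i
  have hz0 : z 0 = 1 := by simp [z, e0, eS]
  have hzη : η₀ z = 1 := by simp [z, hc₀.ηy, hc₀.ηw]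
  have hzτ : τ₀ z = q := by simp [z, hc₀.τy, hc₀.τw, eucl_sum_single]
  have hzn : 0 < ‖z‖ := norm_pos_iff.2 (by rintro h; rw [h] at hz0; simp at hz0)
  let y : Eu (p + 1) := ‖z‖⁻¹ • z
  have hzy : z = ‖z‖ • y := by simp [y, smul_smul, hzn.ne']
  have hy : y ∈ sphereSet p := by simp [y, sphereSet, norm_smul, hzn.ne']
  have hw := basis_of_q (p := p) (y := y) hy (by simp [y, hz0, hzn])
  obtain ⟨η, τ, hc⟩ := exists_coords hw.2.ne'
  have hτz : τ z = 0 := by rw [hzy, map_smul, hc.τy, smul_zero]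
  have := pont_of_reg hM hMc hF hfF hfs hy hw hc (by
    rintro x ⟨hx, hxη, hxτ⟩ c
    simp only [mem_ofPred_eq] at hxη
    dsimp only at hxτ
    have hFx : F x = (η (F x) * ‖z‖⁻¹) • z := by
      conv_lhs => rw [hc.decomp (F x), hxτ]
      simp [y, smul_smul]
    have h1 : η₀ (F x) = η (F x) * ‖z‖⁻¹ := by rw [hFx, map_smul, hzη, ← hFx]; simp
    have h2 : τ₀ (F x) = η₀ (F x) • q := by rw [h1]; conv_lhs => rw [hFx, map_smul, hzτ]
    let u : Eu (p + 1) := ∑ i, c i • (eS p i - ⟪eS p i, y⟫ • y)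
    have hu : τ u = c := by
      simp only [u, map_sum, map_smul, hc.τw, eucl_sum_single]
    obtain ⟨v, hv, hv'⟩ := hq x hx (by rw [h1]; positivity) h2 (τ₀ u - η₀ u • q)
    refine ⟨v, hv, ?_⟩
    have hd3 : fderiv ℝ (fun x => τ (F x)) x = τ.comp (fderiv ℝ F x) :=
      (τ.hasFDerivAt.comp x (hFd x)).fderiv
    rw [hd3, ContinuousLinearMap.comp_apply]
    rw [hd1, hd2] at hv'
    simp only [ContinuousLinearMap.comp_apply] at hv'
    have h3 : fderiv ℝ F x v = u + (η₀ (fderiv ℝ F x v - u)) • z := by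
      have : fderiv ℝ F x v - u - (η₀ (fderiv ℝ F x v - u)) • z = 0 := by
        apply hc₀.eq_zero
        · simp [hzη]
        · simp only [map_sub, map_smul, hzτ]
          rw [sub_smul]
          rw [← sub_eq_zero] at hv'
          rw [← hv']
          abel
      rw [sub_sub, sub_eq_zero] at this
      exact this
    rw [h3, map_add, map_smul, hτz, hu, smul_zero, add_zero])
  obtain ⟨N, ν, h⟩ := this
  exact ⟨y, _, N, ν, h⟩

end LA
end Part7

section Part8
open scoped ContDiff
open Filter

section GLsec
variable {n : ℕ}

/-- Matrices joined to the identity by a smooth path of invertible matrices. -/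
def GLPath (A : Matrix (Fin n) (Fin n) ℝ) : Prop :=
  ∃ γ : ℝ → Matrix (Fin n) (Fin n) ℝ, (∀ i j, ContDiff ℝ ∞ fun t => γ t i j) ∧
    (∀ t ≤ 0, γ t = 1) ∧ (∀ t, 1 ≤ t → γ t = A) ∧ ∀ t, (γ t).det ≠ 0

theorem GLPath.mul {A B : Matrix (Fin n) (Fin n) ℝ} (hA : GLPath A) (hB : GLPath B) :
    GLPath (A * B) := by
  obtain ⟨γ, h1, h2, h3, h4⟩ := hA
  obtain ⟨δ, k1, k2, k3, k4⟩ := hB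
  refine ⟨fun t => γ t * δ t, fun i j => ?_, fun t ht => ?_, fun t ht => ?_, fun t => ?_⟩
  · simp only [Matrix.mul_apply]
    exact ContDiff.sum fun k _ => (h1 i k).mul (k1 k j)
  · simp [h2 t ht, k2 t ht]
  · simp [h3 t ht, k3 t ht]
  · simp [h4 t, k4 t]

theorem GLPath.one : GLPath (1 : Matrix (Fin n) (Fin n) ℝ) :=
  ⟨fun _ => 1, fun _ _ => contDiff_const, fun _ _ => rfl, fun _ _ => rfl, fun _ => by simp⟩

theorem GLPath.line {A : Matrix (Fin n) (Fin n) ℝ}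
    (h : ∀ t : ℝ, 0 ≤ t → t ≤ 1 → (1 + t • (A - 1)).det ≠ 0) : GLPath A := by
  refine ⟨fun t => 1 + Real.smoothTransition t • (A - 1), fun i j => ?_, fun t ht => ?_, fun t ht => ?_,
    fun t => h _ (Real.smoothTransition.nonneg t) (Real.smoothTransition.le_one t)⟩
  · simp only [Matrix.add_apply, Matrix.smul_apply, smul_eq_mul]
    exact contDiff_const.add (Real.smoothTransition.contDiff.mul contDiff_const)
  · simp only []
    rw [Real.smoothTransition.zero_of_nonpos ht]; simp
  · simp only []
    rw [Real.smoothTransition.one_of_one_le ht]; simp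

theorem GLPath.transvection {i j : Fin n} (hij : i ≠ j) (c : ℝ) : GLPath (Matrix.transvection i j c) := by
  apply GLPath.line
  intro t _ _
  have : 1 + t • (Matrix.transvection i j c - 1) = Matrix.transvection i j (t * c) := by
    simp [Matrix.transvection, Matrix.smul_single]
  rw [this, Matrix.det_transvection_of_ne i j hij]
  exact one_ne_zero

theorem GLPath.pos_diag {D : Fin n → ℝ} (hD : ∀ i, 0 < D i) : GLPath (Matrix.diagonal D) := by
  apply GLPath.line
  intro t h0 h1
  have : 1 + t • (Matrix.diagonal D - 1) = Matrix.diagonal fun i => 1 + t * (D i - 1) := by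
    rw [← Matrix.diagonal_one, Matrix.diagonal_sub, ← Matrix.diagonal_smul, Matrix.diagonal_add]
    rfl
  rw [this, Matrix.det_diagonal]
  refine (Finset.prod_pos fun i _ => ?_).ne'
  rcases h0.eq_or_lt with h | h
  · rw [← h]; simp
  · have := mul_pos h (hD i); nlinarith

theorem ring_flip {R : Type*} [Ring R] {e f : R} (h1 : e * e = 0) (h2 : f * f = 0)
    (h3 : e * f * e = e) (h4 : f * e * f = f) :
    ((1 + e) * (1 + -f) * (1 + e)) * ((1 + e) * (1 + -f) * (1 + e)) = 1 - 2 * (e * f) - 2 * (f * e) := by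
  have hw : (1 + e) * (1 + -f) * (1 + e) = 1 + e - f - e * f - f * e := by
    have : (1 + e) * (1 + -f) * (1 + e) = 1 + 2 * e - f - e * f - f * e + e * e - e * f * e := by
      noncomm_ring
    rw [this, h1, h3]; noncomm_ring
  rw [hw]
  have : (1 + e - f - e * f - f * e) * (1 + e - f - e * f - f * e) =
      1 + 2 * e - 2 * f - 3 * (e * f) - 3 * (f * e) + e * e + f * f - e * e * f - 2 * (e * f * e)
      + 2 * (f * e * f)
       + (e * f * e) * f + (f * e * f) * e + f * (f * e) - f * (e * e) + e * (f * f) + e * f * f * e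
       + f * (e * e) * f - e * (f * f) + f * f * e - f * (f * e)
       + e * (f * f) := by
    noncomm_ring
  rw [this, h3, h4, h1, h2, ← mul_assoc f f e, h2, mul_assoc e f f, h2]
  noncomm_ring

theorem GLPath.flip {i j : Fin n} (hij : i ≠ j) :
    GLPath (Matrix.diagonal fun k => if k = i ∨ k = j then (-1 : ℝ) else 1) := by
  have h := ring_flip (e := Matrix.single i j (1 : ℝ)) (f := Matrix.single j i (1 : ℝ))
    (Matrix.single_mul_single_of_ne _ _ _ _ hij.symm _) (Matrix.single_mul_single_of_ne _ _ _ _ hij _)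
    (by simp) (by simp)
  have h1 : GLPath (1 + Matrix.single i j (1 : ℝ)) := GLPath.transvection hij 1
  have h2 : GLPath (1 + -Matrix.single j i (1 : ℝ)) := by
    have := GLPath.transvection hij.symm (-1)
    rwa [Matrix.transvection, show Matrix.single j i (-1 : ℝ) = - Matrix.single j i (1 : ℝ) by
      ext a b; simp [Matrix.single_apply]; split_ifs <;> simp] at this
  have h3 := ((h1.mul h2).mul h1).mul ((h1.mul h2).mul h1)
  rw [h] at h3
  convert h3 using 1
  rw [Matrix.single_mul_single_same, Matrix.single_mul_single_same, mul_one]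
  ext a b
  by_cases hab : a = b
  · subst hab
    by_cases hai : a = i
    · subst hai; simp [two_mul, Matrix.single_apply, hij.symm]
    · by_cases haj : a = j
      · subst haj; simp [two_mul, Matrix.single_apply, hij]
      · simp [two_mul, Matrix.single_apply, hai, haj, Ne.symm hai, Ne.symm haj]
  · have : ∀ k, ¬ (k = a ∧ k = b) := fun k hk => hab (hk.1.symm.trans hk.2)
    simp [two_mul, Matrix.single_apply, hab, this]

theorem GLPath.diag : ∀ (N : ℕ) (D : Fin n → ℝ), (Finset.univ.filter fun i => D i < 0).card ≤ N →
    0 < ∏ i, D i → GLPath (Matrix.diagonal D) := by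
  intro N
  induction N with
  | zero =>
    intro D hN hD
    apply GLPath.pos_diag
    intro i
    have h1 : ¬ D i < 0 := by
      intro h
      have : i ∈ (Finset.univ.filter fun i => D i < 0) := by simp [h]
      rw [Finset.card_eq_zero.1 (Nat.le_zero.1 hN)] at this
      simp at this
    have h2 : D i ≠ 0 := fun h => hD.ne' (Finset.prod_eq_zero (Finset.mem_univ i) h)
    exact lt_of_le_of_ne (not_lt.1 h1) h2.symm
  | succ N ih =>
    intro D hN hD
    by_cases h0 : ∃ i, D i < 0
    · obtain ⟨i, hi⟩ := h0
      have h1 : ∃ j, j ≠ i ∧ D j < 0 := by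
        by_contra! hcon
        rw [← Finset.mul_prod_erase Finset.univ D (Finset.mem_univ i)] at hD
        have := Finset.prod_nonneg (s := Finset.univ.erase i) (f := D)
          fun j hj => hcon j (Finset.ne_of_mem_erase hj)
        nlinarith
      obtain ⟨j, hji, hj⟩ := h1
      let s : Fin n → ℝ := fun k => if k = i ∨ k = j then (-1 : ℝ) else 1
      have hs : Matrix.diagonal D = Matrix.diagonal (fun k => D k * s k) * Matrix.diagonal s := by
        rw [Matrix.diagonal_mul_diagonal]
        congr 1; ext k; simp only [s]; split_ifs <;> simp
      rw [hs]
      refine GLPath.mul (ih _ ?_ ?_) (GLPath.flip hji.symm)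
      · have hlt : (Finset.univ.filter fun k => D k * s k < 0).card <
            (Finset.univ.filter fun k => D k < 0).card := by
          apply Finset.card_lt_card
          rw [Finset.ssubset_iff_of_subset]
          · refine ⟨i, by simpa using hi, ?_⟩
            simp [s, hi.le]
          · intro k
            simp only [Finset.mem_filter, Finset.mem_univ, true_and, s]
            split_ifs with hk
            · intro h
              rcases hk with rfl | rfl <;> linarith
            · simp
        omega
      · rw [Finset.prod_mul_distrib]
        have : ∏ k, s k = 1 := by
          have := (GLPath.flip hji.symm)
          rw [← Finset.mul_prod_erase Finset.univ s (Finset.mem_univ i),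
            ← Finset.mul_prod_erase (Finset.univ.erase i) s (Finset.mem_erase.2 ⟨hji, Finset.mem_univ j⟩),
            Finset.prod_eq_one]
          · simp [s]
          · intro k hk
            simp only [Finset.mem_erase] at hk
            simp [s, hk.1, hk.2.1]
        rw [this, mul_one]; exact hD
    · push Not at h0
      refine GLPath.pos_diag fun i => lt_of_le_of_ne (h0 i) ?_
      exact fun h => hD.ne' (Finset.prod_eq_zero (Finset.mem_univ i) h.symm)

theorem GLPath.list (L : List (Matrix.TransvectionStruct (Fin n) ℝ)) :
    GLPath (L.map Matrix.TransvectionStruct.toMatrix).prod := by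
  induction L with
  | nil => exact GLPath.one
  | cons a L ih =>
    rw [List.map_cons, List.prod_cons]
    exact GLPath.mul (GLPath.transvection a.hij a.c) ih

theorem GLPath.of_det {A : Matrix (Fin n) (Fin n) ℝ} (hA : 0 < A.det) : GLPath A := by
  obtain ⟨L, L', D, h⟩ := Matrix.Pivot.exists_list_transvec_mul_diagonal_mul_list_transvec A
  rw [h]
  refine ((GLPath.list L).mul (GLPath.diag _ D le_rfl ?_)).mul (GLPath.list L')
  rw [h] at hA
  simpa [Matrix.TransvectionStruct.det_toMatrix_prod] using hA

/-- Smooth family of isomorphisms joining a positive basis to another. -/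
theorem exists_iso_path {p : ℕ} {b b' : Fin (p + 1) → Eu (p + 1)}
    (hb : 0 < (Matrix.of fun i j => b i j).det) (hb' : 0 < (Matrix.of fun i j => b' i j).det) :
    ∃ P : ℝ → Eu (p + 1) →L[ℝ] Eu (p + 1),
      ContDiff ℝ ∞ (fun z : ℝ × Eu (p + 1) => P z.1 z.2) ∧ (∀ t ≤ 0, ∀ v, P t v = v) ∧
      (∀ t, 1 ≤ t → P t = P 1) ∧ (∀ i, P 1 (b' i) = b i) ∧ ∀ t v, P t v = 0 → v = 0 := by
  let B : Matrix (Fin (p+1)) (Fin (p+1)) ℝ := Matrix.of fun i j => b i j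
  let B' : Matrix (Fin (p+1)) (Fin (p+1)) ℝ := Matrix.of fun i j => b' i j
  have hu : IsUnit B'.det := isUnit_iff_ne_zero.2 hb'.ne'
  have hdet : 0 < ((B'⁻¹ * B).transpose).det := by
    rw [Matrix.det_transpose, Matrix.det_mul, Matrix.det_nonsing_inv, Ring.inverse_eq_inv']
    exact mul_pos (inv_pos.2 hb') hb
  obtain ⟨γ, h1, h2, h3, h4⟩ := GLPath.of_det hdet
  refine ⟨fun t => (Matrix.toEuclideanLin (γ t)).toContinuousLinearMap, ?_, ?_, ?_, ?_, ?_⟩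
  · rw [contDiff_euclidean]
    intro i
    have : ∀ z : ℝ × Eu (p + 1), ((Matrix.toEuclideanLin (γ z.1)).toContinuousLinearMap z.2) i =
        ∑ j, γ z.1 i j * z.2 j := by
      intro z
      simp [Matrix.toLpLin_apply, Matrix.mulVec, dotProduct]
    simp only [this]
    refine ContDiff.sum fun j _ => ((h1 i j).comp contDiff_fst).mul ?_
    exact (EuclideanSpace.proj (𝕜 := ℝ) j).contDiff.comp contDiff_snd
  · intro t ht v
    simp [h2 t ht]
  · intro t ht
    simp [h3 t ht, h3 1 le_rfl]
  · intro i
    ext j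
    have h5 : B' * (B'⁻¹ * B) = B := by rw [← mul_assoc, Matrix.mul_nonsing_inv _ hu, one_mul]
    have h6 := congrFun (congrFun h5 i) j
    rw [Matrix.mul_apply] at h6
    simp only [h3 1 le_rfl, LinearMap.coe_toContinuousLinearMap', Matrix.toLpLin_apply,
      Matrix.mulVec, dotProduct, Matrix.transpose_apply]
    rw [show b i j = B i j from rfl, ← h6]
    exact Finset.sum_congr rfl fun k _ => mul_comm _ _
  · intro t v hv
    have h5 : (γ t).mulVec v.ofLp = 0 := by
      have := congrArg WithLp.ofLp hv
      simpa [Matrix.toLpLin_apply] using this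
    have := Matrix.eq_zero_of_mulVec_eq_zero (h4 t) h5
    ext i; simpa using congrFun this i

end GLsec
end Part8

section Part9
open scoped ContDiff
open Filter

section LB

variable {E : Type*} [NormedAddCommGroup E] [InnerProductSpace ℝ E] {m p : ℕ}

theorem cobordant_empty (M : Set E) (ν ν' : Fin p → E → E) :
    FramedCobordant M m p ∅ ν ∅ ν' := by
  refine ⟨∅, fun _ z => z, 1 / 4, by norm_num, by norm_num, isCompact_empty, empty_subset _, ?_, ?_,
    ?_, ?_, ?_, ?_, ?_⟩
  · simp
  · simp
  · intro x hx; simp at hx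
  · intro i x hx; simp at hx
  · intro z hz; simp at hz
  · intro x t hx; simp at hx
  · intro x t hx; simp at hx

variable [FiniteDimensional ℝ E]

theorem level_end {M : Set E} (hM : IsMfd M) {ζ : E × ℝ → Eu p} (hζ : ContDiff ℝ ∞ ζ)
    {ζ₀ : E → Eu p} (hζ₀ : ContDiff ℝ ∞ ζ₀) {Og : Set (E × ℝ)} (hO : IsOpen Og) {Og₀ : Set E}
    (hO₀ : IsOpen Og₀) (hreg : RegLevel (M ×ˢ (univ : Set ℝ)) Og ζ) (hreg₀ : RegLevel M Og₀ ζ₀)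
    {x : E} {t : ℝ} (hz : (x, t) ∈ levelSet (M ×ˢ (univ : Set ℝ)) Og ζ)
    (hx : x ∈ levelSet M Og₀ ζ₀) (hloc : ∀ᶠ z in 𝓝 (x, t), ζ z = ζ₀ z.1)
    {u : E × ℝ} {n : E} {e : Eu p} (hu : u ∈ SubTangent (M ×ˢ (univ : Set ℝ)) (x, t))
    (huo : ∀ k ∈ SubTangent (levelSet (M ×ˢ (univ : Set ℝ)) Og ζ) (x, t), prodB E u k = 0)
    (hue : fderiv ℝ ζ (x, t) u = e) (hn : n ∈ SubTangent M x)
    (hno : ∀ k ∈ SubTangent (levelSet M Og₀ ζ₀) x, ⟪n, k⟫ = 0)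
    (hne : fderiv ℝ ζ₀ x n = e) : u = (n, 0) := by
  have hd : HasFDerivAt ζ ((fderiv ℝ ζ₀ x).comp (ContinuousLinearMap.fst ℝ E ℝ)) (x, t) := by
    have h1 : HasFDerivAt (fun z : E × ℝ => ζ₀ z.1) ((fderiv ℝ ζ₀ x).comp
        (ContinuousLinearMap.fst ℝ E ℝ)) (x, t) :=
      HasFDerivAt.comp (x, t) (hζ₀.differentiable (by simp) x).hasFDerivAt hasFDerivAt_fst
    exact h1.congr_of_eventuallyEq hloc
  refine level_unique hM.prod_univ hO prodB_posdef hζ hreg hz hu ?_ huo ?_ ?_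
  · rw [mem_subTangent_prod hM hx.1]; exact hn
  · intro k hk
    rw [level_tangent hM.prod_univ hO hζ hreg hz, mem_subTangent_prod hM hx.1, hd.fderiv] at hk
    have : k.1 ∈ SubTangent (levelSet M Og₀ ζ₀) x := by
      rw [level_tangent hM hO₀ hζ₀ hreg₀ hx]; exact hk
    rw [prodB_apply, prodInner, hno _ this]; simp
  · rw [hue, hd.fderiv]; exact hne.symm

theorem cob_of_level {M : Set E} (hM : IsSubmanifold M m) (hMc : IsCompact M)
    {ζ : E × ℝ → Eu p} (hζ : ContDiff ℝ ∞ ζ) {h : E × ℝ → ℝ} (hh : Continuous h)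
    (hreg : RegLevel (M ×ˢ (univ : Set ℝ)) {z | 0 < h z} ζ)
    (hnz : ∀ x ∈ M, ∀ t, ζ (x, t) = 0 → h (x, t) ≠ 0)
    {ζ₀ ζ₁ : E → Eu p} (hζ₀ : ContDiff ℝ ∞ ζ₀) (hζ₁ : ContDiff ℝ ∞ ζ₁)
    {h₀ h₁ : E → ℝ} (hh₀ : Continuous h₀) (hh₁ : Continuous h₁)
    (e₀ : ∀ x t, t < 1 / 6 → ζ (x, t) = ζ₀ x ∧ h (x, t) = h₀ x)
    (e₁ : ∀ x t, 5 / 6 < t → ζ (x, t) = ζ₁ x ∧ h (x, t) = h₁ x)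
    (hreg₀ : RegLevel M {z | 0 < h₀ z} ζ₀) (hreg₁ : RegLevel M {z | 0 < h₁ z} ζ₁)
    {N N' : Set E} {ν ν' : Fin p → E → E}
    (hN : N = levelSet M {z | 0 < h₀ z} ζ₀) (hN' : N' = levelSet M {z | 0 < h₁ z} ζ₁)
    (hν : ∀ x ∈ N, ∀ i, ν i x ∈ SubTangent M x ∧ (∀ k ∈ SubTangent N x, ⟪ν i x, k⟫ = 0) ∧
      fderiv ℝ ζ₀ x (ν i x) = EuclideanSpace.single i 1)
    (hν' : ∀ x ∈ N', ∀ i, ν' i x ∈ SubTangent M x ∧ (∀ k ∈ SubTangent N' x, ⟪ν' i x, k⟫ = 0) ∧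
      fderiv ℝ ζ₁ x (ν' i x) = EuclideanSpace.single i 1) :
    FramedCobordant M m p N ν N' ν' := by
  classical
  have hO₀ : IsOpen {z | 0 < h₀ z} := isOpen_lt continuous_const hh₀
  have hO₁ : IsOpen {z | 0 < h₁ z} := isOpen_lt continuous_const hh₁
  have hO : IsOpen {z | 0 < h z} := isOpen_lt continuous_const hh
  have hle : N.Nonempty ∨ N'.Nonempty → (Module.finrank ℝ E - m) + p ≤ Module.finrank ℝ E ∧
      (m ≤ Module.finrank ℝ E ∨ Module.finrank ℝ E = 0) := by
    have gen : ∀ (ζ₀ : E → Eu p) (Og : Set E), IsOpen Og → ContDiff ℝ ∞ ζ₀ → RegLevel M Og ζ₀ →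
        (levelSet M Og ζ₀).Nonempty → (Module.finrank ℝ E - m) + p ≤ Module.finrank ℝ E ∧
      (m ≤ Module.finrank ℝ E ∨ Module.finrank ℝ E = 0) := by
      rintro ζ₀ Og hO hζ₀ hr ⟨x, hx⟩
      refine ⟨?_, dim_dichotomy hM hMc ⟨x, hx.1⟩⟩
      obtain ⟨U, Φ, h1, h2, h3, h4, h5⟩ := hM x hx.1
      obtain ⟨U', -, h6, h7, -⟩ := level_locDef hO hζ₀ hr hx h2 (LocDef.of_def h1 h3 h4 h5)
      have := finrank_le_of_surj (h7.surj x h6)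
      simpa using this
    rintro (h1 | h1)
    · exact gen ζ₀ _ hO₀ hζ₀ hreg₀ (hN ▸ h1)
    · exact gen ζ₁ _ hO₁ hζ₁ hreg₁ (hN' ▸ h1)
  by_cases hne : N.Nonempty ∨ N'.Nonempty
  swap
  · rw [not_or, not_nonempty_iff_eq_empty, not_nonempty_iff_eq_empty] at hne
    rw [hne.1, hne.2]
    exact cobordant_empty M ν ν'
  obtain ⟨hle1, hdim⟩ := hle hne
  let L := levelSet (M ×ˢ (univ : Set ℝ)) {z | 0 < h z} ζ
  let Og2 : Set (E × ℝ) := {z | 0 < h z} ∩ univ ×ˢ Ioo (0 : ℝ) 1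
  have hO2 : IsOpen Og2 := hO.inter (isOpen_univ.prod isOpen_Ioo)
  let X := L ∩ univ ×ˢ Icc (0 : ℝ) 1
  have hmem : ∀ x t, (x, t) ∈ X ↔ x ∈ M ∧ (0 < h (x, t) ∧ ζ (x, t) = 0) ∧ 0 ≤ t ∧ t ≤ 1 := by
    intro x t
    simp [X, L, levelSet, and_assoc]
  have hX2 : X ∩ univ ×ˢ Ioo (0 : ℝ) 1 = levelSet (M ×ˢ (univ : Set ℝ)) Og2 ζ := by
    ext ⟨x, t⟩
    have := hmem x t
    simp only [mem_inter_iff, this, levelSet, Og2, mem_ofPred_eq, mem_prod, mem_univ, true_and, and_true,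
      mem_Ioo]
    constructor
    · rintro ⟨⟨h1, ⟨h2, h3⟩, h4⟩, h5⟩; exact ⟨h1, ⟨h2, h5⟩, h3⟩
    · rintro ⟨h1, ⟨h2, h5⟩, h3⟩; exact ⟨⟨h1, ⟨h2, h3⟩, h5.1.le, h5.2.le⟩, h5⟩
  have hreg2 : RegLevel (M ×ˢ (univ : Set ℝ)) Og2 ζ := fun x hx => hreg x ⟨hx.1, hx.2.1.1, hx.2.2⟩
  obtain ⟨u, hus, hu⟩ := level_frame hM.isMfd.prod_univ hO prodB_posdef hζ hreg
  have hXL : X ⊆ L := inter_subset_left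
  have mem0 : ∀ x t, t < 1 / 6 → ((0 < h (x, t) ∧ ζ (x, t) = 0) ↔ (0 < h₀ x ∧ ζ₀ x = 0)) := by
    intro x t ht; rw [(e₀ x t ht).1, (e₀ x t ht).2]
  have mem1 : ∀ x t, 5 / 6 < t → ((0 < h (x, t) ∧ ζ (x, t) = 0) ↔ (0 < h₁ x ∧ ζ₁ x = 0)) := by
    intro x t ht; rw [(e₁ x t ht).1, (e₁ x t ht).2]
  refine ⟨X, u, 1 / 6, by norm_num, by norm_num, ?_, ?_, ?_, ?_, ?_, ?_, ?_, ?_, ?_⟩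
  · have : X = (M ×ˢ Icc (0 : ℝ) 1) ∩ ({z | 0 ≤ h z} ∩ ζ ⁻¹' {0}) := by
      ext ⟨x, t⟩
      rw [hmem]
      constructor
      · rintro ⟨h1, ⟨h2, h3⟩, h4⟩
        exact ⟨⟨h1, h4⟩, le_of_lt h2, h3⟩
      · rintro ⟨⟨h1, h4⟩, h2, h3⟩
        exact ⟨h1, ⟨lt_of_le_of_ne h2 (hnz x h1 t h3).symm, h3⟩, h4⟩
    rw [this]
    exact (hMc.prod isCompact_Icc).inter_right
      ((isClosed_le continuous_const hh).inter (isClosed_singleton.preimage hζ.continuous))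
  · rintro ⟨x, t⟩ hz
    have := (hmem x t).1 hz
    exact ⟨this.1, this.2.2⟩
  · ext ⟨x, t⟩
    simp only [mem_inter_iff, hmem, mem_prod, mem_univ, true_and, mem_Iio, mem_Ico, hN, levelSet,
      mem_ofPred_eq]
    constructor
    · rintro ⟨⟨h1, h2, h3⟩, h4⟩
      rw [mem0 x t h4] at h2
      exact ⟨⟨h1, h2⟩, h3.1, h4⟩
    · rintro ⟨⟨h1, h2⟩, h3, h4⟩
      rw [← mem0 x t h4] at h2
      exact ⟨⟨h1, h2, h3, by linarith⟩, h4⟩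
  · ext ⟨x, t⟩
    simp only [mem_inter_iff, hmem, mem_prod, mem_univ, true_and, mem_Ioi, mem_Ioc, hN', levelSet,
      mem_ofPred_eq]
    constructor
    · rintro ⟨⟨h1, h2, h3⟩, h4⟩
      rw [mem1 x t (by linarith)] at h2
      exact ⟨⟨h1, h2⟩, h4, h3.2⟩
    · rintro ⟨⟨h1, h2⟩, h4, h3⟩
      rw [← mem1 x t (by linarith)] at h2
      exact ⟨⟨h1, h2, by linarith, h3⟩, h4⟩
  · rw [hX2]
    refine isSubmanifold_of (k := (Module.finrank ℝ E - m) + p) ?_ fun z hz => ?_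
    · rw [Module.finrank_prod, Module.finrank_self]; omega
    obtain ⟨U, Φ, h1, h2, h3, h4, h5⟩ := hM z.1 hz.1.1
    have hL1 := (LocDef.of_def h1 h3 h4 h5).prod_univ
    obtain ⟨U', -, h6, h7, -⟩ := level_locDef hO2 hζ hreg2 hz (U := U ×ˢ univ) ⟨h2, mem_univ _⟩ hL1
    exact ⟨U', _, inferInstance, inferInstance, inferInstance, _, by simp, h6, h7⟩
  · exact fun i => (hus i).mono hXL
  · intro z hz
    rw [hX2] at hz ⊢
    have hzL : z ∈ L := ⟨hz.1, hz.2.1.1, hz.2.2⟩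
    have hT := level_tangent hM.isMfd.prod_univ hO2 hζ hreg2 hz
    refine ⟨fun i => (hu z hzL i).1, fun i v hv => ?_, frame_indep fun i => (hu z hzL i).2.2,
      frame_spans hT (fun i => (hu z hzL i).1) fun i => (hu z hzL i).2.2⟩
    rw [← prodB_apply]
    refine (hu z hzL i).2.1 v ?_
    rw [level_tangent hM.isMfd.prod_univ hO hζ hreg hzL, ← hT]
    exact hv
  · intro x t hxt ht i
    have h1 := (hmem x t).1 hxt
    have hx : x ∈ levelSet M {z | 0 < h₀ z} ζ₀ := ⟨h1.1, (mem0 x t ht).1 h1.2.1⟩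
    have h2 := hν x (hN ▸ hx) i
    have h3 := hu (x, t) (hXL hxt) i
    refine level_end hM.isMfd hζ hζ₀ hO hO₀ hreg hreg₀ (hXL hxt) hx ?_ h3.1 h3.2.1 h3.2.2 h2.1
      (hN ▸ h2.2.1) h2.2.2
    have : ∀ᶠ z : E × ℝ in 𝓝 (x, t), z.2 < 1 / 6 :=
      (continuous_snd.tendsto (x, t)).eventually (gt_mem_nhds ht)
    filter_upwards [this] with z hz
    exact (e₀ z.1 z.2 hz).1
  · intro x t hxt ht i
    have ht : 5 / 6 < t := by linarith
    have h1 := (hmem x t).1 hxt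
    have hx : x ∈ levelSet M {z | 0 < h₁ z} ζ₁ := ⟨h1.1, (mem1 x t ht).1 h1.2.1⟩
    have h2 := hν' x (hN' ▸ hx) i
    have h3 := hu (x, t) (hXL hxt) i
    refine level_end hM.isMfd hζ hζ₁ hO hO₁ hreg hreg₁ (hXL hxt) hx ?_ h3.1 h3.2.1 h3.2.2 h2.1
      (hN' ▸ h2.2.1) h2.2.2
    have : ∀ᶠ z : E × ℝ in 𝓝 (x, t), 5 / 6 < z.2 :=
      (continuous_snd.tendsto (x, t)).eventually (lt_mem_nhds ht)
    filter_upwards [this] with z hz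
    exact (e₁ z.1 z.2 hz).1

theorem reg_end {M : Set E} (hM : IsMfd M) {ζ : E × ℝ → Eu p} (hζ : ContDiff ℝ ∞ ζ)
    {ζ₀ : E → Eu p} {x : E} {t : ℝ} (hx : x ∈ M) (he : ∀ x, ζ (x, t) = ζ₀ x) {c : Eu p}
    (h : ∃ v ∈ SubTangent M x, fderiv ℝ ζ₀ x v = c) :
    ∃ v ∈ SubTangent (M ×ˢ (univ : Set ℝ)) (x, t), fderiv ℝ ζ (x, t) v = c := by
  obtain ⟨v, hv, hv'⟩ := h
  refine ⟨(v, 0), (mem_subTangent_prod hM hx _).2 hv, ?_⟩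
  have h1 : HasFDerivAt (fun x => ζ (x, t)) ((fderiv ℝ ζ (x, t)).comp
      (ContinuousLinearMap.inl ℝ E ℝ)) x :=
    HasFDerivAt.comp x (hζ.differentiable (by simp) (x, t)).hasFDerivAt (hasFDerivAt_prodMk_left x t)
  have h2 : (fun x => ζ (x, t)) = ζ₀ := funext he
  rw [h2] at h1
  rw [h1.fderiv] at hv'
  simpa using hv'

/-- Smooth homotopic maps have framed cobordant Pontryagin manifolds. -/
theorem cob_of_homotopic {M : Set E} (hM : IsSubmanifold M m) (hMc : IsCompact M)
    {f g : E → Eu (p + 1)} (hfg : SmoothHomotopicOn M f g (sphereSet p))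
    {y w N ν y' w' N' ν'} (hf : IsPontryaginManifold m p f M y w N ν)
    (hg : IsPontryaginManifold m p g M y' w' N' ν') : FramedCobordant M m p N ν N' ν' := by
  obtain ⟨H, hH, hHs, hH0, hH1⟩ := hfg
  obtain ⟨F, hF, hHF⟩ := hH.exists_global (hMc.isClosed.prod isClosed_univ)
  have hfs : ∀ x ∈ M, f x ∈ sphereSet p := fun x hx => hH0 x hx ▸ hHs x hx 0
  have hgs : ∀ x ∈ M, g x ∈ sphereSet p := fun x hx => hH1 x hx ▸ hHs x hx 1
  have hF0 : ContDiff ℝ ∞ fun x : E => F (x, 0) := hF.comp (contDiff_id.prodMk contDiff_const)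
  have hF1 : ContDiff ℝ ∞ fun x : E => F (x, 1) := hF.comp (contDiff_id.prodMk contDiff_const)
  have hfF : EqOn f (fun x => F (x, 0)) M := fun x hx => by
    rw [← hH0 x hx]; exact hHF ⟨hx, mem_univ _⟩
  have hgF : EqOn g (fun x => F (x, 1)) M := fun x hx => by
    rw [← hH1 x hx]; exact hHF ⟨hx, mem_univ _⟩
  obtain ⟨P, hP, hP0, hP1, hPb, hPi⟩ := exists_iso_path hf.basis.2 hg.basis.2
  have hPy : P 1 y' = y := hPb 0
  have hPw : ∀ i, P 1 (w' i) = w i := fun i => hPb i.succ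
  obtain ⟨η, τ, hc⟩ := exists_coords hf.basis.2.ne'
  have hc' : Coords y' w' (η.comp (P 1)) (τ.comp (P 1)) := by
    refine ⟨by simp [hPy, hc.ηy], by simp [hPw, hc.ηw], by simp [hPy, hc.τy], by simp [hPw, hc.τw], ?_⟩
    intro v
    rw [← sub_eq_zero]
    apply hPi 1
    simp only [map_sub, map_add, map_sum, map_smul, hPy, hPw, ContinuousLinearMap.comp_apply]
    rw [sub_eq_zero]
    exact hc.decomp _
  obtain ⟨hN, hreg₀, hν⟩ := pont_reg hF0 hfF hfs hf hc
  obtain ⟨hN', hreg₁, hν'⟩ := pont_reg hF1 hgF hgs hg hc'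
  let χ : ℝ → ℝ := fun t => Real.smoothTransition (3 * t - 1)
  have hχ : ContDiff ℝ ∞ χ := Real.smoothTransition.contDiff.comp (by fun_prop)
  let G : E × ℝ → Eu (p + 1) := fun z => P (χ z.2) (F (z.1, χ z.2))
  have hG : ContDiff ℝ ∞ G := by
    have h1 : ContDiff ℝ ∞ fun z : E × ℝ => χ z.2 := hχ.comp contDiff_snd
    exact hP.comp (h1.prodMk (hF.comp (contDiff_fst.prodMk h1)))
  have hG0 : ∀ x t, t ≤ 1 / 3 → G (x, t) = F (x, 0) := by
    intro x t ht
    have : χ t = 0 := Real.smoothTransition.zero_of_nonpos (by linarith)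
    simp only [G, this]
    exact hP0 0 le_rfl _
  have hG1 : ∀ x t, 2 / 3 ≤ t → G (x, t) = P 1 (F (x, 1)) := by
    intro x t ht
    have : χ t = 1 := Real.smoothTransition.one_of_one_le (by linarith)
    simp only [G, this]
  have hGnz : ∀ x ∈ M, ∀ t, G (x, t) ≠ 0 := by
    intro x hx t h0
    have h1 := hPi _ _ h0
    have h2 := hHs x hx (χ t)
    rw [hHF (mk_mem_prod hx (mem_univ _)), h1] at h2
    simp [sphereSet] at h2
  let a : ℝ → ℝ := fun t => expNegInvGlue (t - 1 / 6) * expNegInvGlue (5 / 6 - t)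
  have ha : ContDiff ℝ ∞ a :=
    (expNegInvGlue.contDiff.comp (by fun_prop)).mul (expNegInvGlue.contDiff.comp (by fun_prop))
  have ha0 : ∀ t, t ≤ 1 / 6 → a t = 0 := by
    intro t ht
    simp only [a]
    rw [expNegInvGlue.zero_of_nonpos (by linarith : t - 1 / 6 ≤ 0), zero_mul]
  have ha1 : ∀ t, 5 / 6 ≤ t → a t = 0 := by
    intro t ht
    simp only [a]
    rw [expNegInvGlue.zero_of_nonpos (by linarith : 5 / 6 - t ≤ 0), mul_zero]
  have hapos : ∀ t, 1 / 6 < t → t < 5 / 6 → 0 < a t := fun t h1 h2 =>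
    mul_pos (expNegInvGlue.pos_of_pos (by linarith)) (expNegInvGlue.pos_of_pos (by linarith))
  have hHs' : ContDiff ℝ ∞ fun z : E × ℝ => a z.2 * η (G z) :=
    (ha.comp contDiff_snd).mul (η.contDiff.comp hG)
  have hTs' : ContDiff ℝ ∞ fun z : E × ℝ => τ (G z) := τ.contDiff.comp hG
  obtain ⟨q, hq⟩ := sard_quot hM.isMfd.prod_univ hHs' hTs'
  let ζ : E × ℝ → Eu p := fun z => τ (G z) - (a z.2 * η (G z)) • q
  have hζ : ContDiff ℝ ∞ ζ := hTs'.sub (hHs'.smul contDiff_const)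
  have hζd : ∀ z, fderiv ℝ ζ z = fderiv ℝ (fun z : E × ℝ => τ (G z)) z -
      (fderiv ℝ (fun z : E × ℝ => a z.2 * η (G z)) z).smulRight q := by
    intro z
    exact ((hTs'.differentiable (by simp) z).hasFDerivAt.sub
      ((hHs'.differentiable (by simp) z).hasFDerivAt.smul_const q)).fderiv
  have hζ0 : ∀ x t, t ≤ 1 / 6 → ζ (x, t) = τ (F (x, 0)) := by
    intro x t ht
    simp only [ζ, ha0 t ht, hG0 x t (by linarith), zero_mul, zero_smul, sub_zero]
  have hζ1 : ∀ x t, 5 / 6 ≤ t → ζ (x, t) = (τ.comp (P 1)) (F (x, 1)) := by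
    intro x t ht
    simp only [ζ, ha1 t ht, hG1 x t (by linarith), zero_mul, zero_smul, sub_zero,
      ContinuousLinearMap.comp_apply]
  have hreg : RegLevel (M ×ˢ (univ : Set ℝ)) {z | 0 < η (G z)} ζ := by
    rintro ⟨x, t⟩ ⟨hx, hxh, hxζ⟩ c
    simp only [mem_ofPred_eq] at hxh
    by_cases ht0 : t ≤ 1 / 6
    · refine reg_end hM.isMfd hζ hx.1 (fun x => hζ0 x t ht0) (hreg₀ x ⟨hx.1, ?_, ?_⟩ c)
      · rw [hG0 x t (by linarith)] at hxh; exact hxh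
      · rw [hζ0 x t ht0] at hxζ; exact hxζ
    by_cases ht1 : 5 / 6 ≤ t
    · refine reg_end hM.isMfd hζ hx.1 (fun x => hζ1 x t ht1) (hreg₁ x ⟨hx.1, ?_, ?_⟩ c)
      · rw [hG1 x t (by linarith)] at hxh; exact hxh
      · rw [hζ1 x t ht1] at hxζ; exact hxζ
    · push Not at ht0 ht1
      obtain ⟨v, hv, hv'⟩ := hq (x, t) hx (mul_pos (hapos t ht0 ht1) hxh) (sub_eq_zero.1 hxζ) c
      exact ⟨v, hv, by rw [hζd]; simpa using hv'⟩
  have hFd : ∀ s x, HasFDerivAt (fun x => F (x, s)) (fderiv ℝ (fun x => F (x, s)) x) x := by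
    intro s x
    have : ContDiff ℝ ∞ fun x : E => F (x, s) := hF.comp (contDiff_id.prodMk contDiff_const)
    exact (this.differentiable (by simp) x).hasFDerivAt
  refine cob_of_level hM hMc hζ (h := fun z => η (G z)) (η.continuous.comp hG.continuous) hreg ?_
    (τ.contDiff.comp hF0) ((τ.comp (P 1)).contDiff.comp hF1)
    (h₀ := fun x => η (F (x, 0))) (h₁ := fun x => η.comp (P 1) (F (x, 1)))
    (η.continuous.comp hF0.continuous) ((η.comp (P 1)).continuous.comp hF1.continuous)
    (fun x t ht => ⟨hζ0 x t ht.le, ?_⟩) (fun x t ht => ⟨hζ1 x t ht.le, ?_⟩) hreg₀ hreg₁ hN hN' ?_ ?_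
  · intro x hx t h1 h2
    simp only [ζ] at h1
    rw [h2] at h1
    exact hGnz x hx t (hc.eq_zero h2 (by simpa using h1))
  · simp only [hG0 x t (by linarith)]
  · simp only [hG1 x t (by linarith), ContinuousLinearMap.comp_apply]
  · intro x hx i
    refine ⟨hf.framed.framing.mem_tangent i x hx, hf.framed.framing.orth i x hx, ?_⟩
    have : fderiv ℝ (τ ∘ fun x => F (x, 0)) x = τ.comp (fderiv ℝ (fun x => F (x, 0)) x) :=
      (τ.hasFDerivAt.comp x (hFd 0 x)).fderiv
    rw [this, ContinuousLinearMap.comp_apply, hν x hx, hc.τw]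
  · intro x hx i
    refine ⟨hg.framed.framing.mem_tangent i x hx, hg.framed.framing.orth i x hx, ?_⟩
    have : fderiv ℝ ((τ.comp (P 1)) ∘ fun x => F (x, 1)) x =
        (τ.comp (P 1)).comp (fderiv ℝ (fun x => F (x, 1)) x) :=
      ((τ.comp (P 1)).hasFDerivAt.comp x (hFd 1 x)).fderiv
    rw [this, ContinuousLinearMap.comp_apply, hν' x hx, hc'.τw]

end LB
end Part9

section Part10
open scoped ContDiff
open Filter

section Tube

variable {V : Type*} [NormedAddCommGroup V] [NormedSpace ℝ V] [FiniteDimensional ℝ V] {p : ℕ}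

theorem coincide {A B : Type*} [NormedAddCommGroup A] [NormedSpace ℝ A] [FiniteDimensional ℝ A]
    [NormedAddCommGroup B] [NormedSpace ℝ B] [FiniteDimensional ℝ B]
    {X U U' : Set V} {Ψ : V → B} {G : V → A} (hX : LocDef X U Ψ) {x : V} (hxU : x ∈ U) (hx : x ∈ X)
    (hU' : IsOpen U') (hG : ContDiffOn ℝ ∞ G U') (hxU' : x ∈ U') (hs : Surjective (fderiv ℝ G x))
    (hker : ∀ v, fderiv ℝ G x v = 0 → fderiv ℝ Ψ x v = 0)
    (hzero : ∀ᶠ z in 𝓝 x, z ∈ X → G z = 0) : ∀ᶠ z in 𝓝 x, G z = 0 → z ∈ X := by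
  have hGx : HasFDerivAt G (fderiv ℝ G x) x :=
    ((hG.contDiffAt (hU'.mem_nhds hxU')).differentiableAt (by simp)).hasFDerivAt
  have hker' : ∀ v, fderiv ℝ Ψ x v = 0 → fderiv ℝ G x v = 0 := by
    intro v hv
    have h1 : HasDerivOn (fun _ : V => (0 : A)) X x (fderiv ℝ G x) :=
      ⟨G, hzero.mono fun z hz hzX => (hz hzX).symm, (hzero.self_of_nhds hx).symm, hGx⟩
    have h2 : HasDerivOn (fun _ : V => (0 : A)) X x (0 : V →L[ℝ] A) :=
      hasDerivOn_of_eqOn hx (fun z hz => rfl) (hasFDerivAt_const (0 : A) x)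
    have := hasDerivOn_unique h1 h2 (v := v) (by
      rw [hX.tangent hxU hx, LinearMap.mem_ker]; exact hv)
    simpa using this
  obtain ⟨Q, e, hQ, hxe, heU, he, -⟩ := exists_param hX.isOpen hX.smooth hxU (hX.surj x hxU)
  have hsm : ContDiffOn ℝ ∞ (fun z => (G z, Q (z - x))) U' :=
    hG.prodMk (Q.contDiff.comp (contDiff_id.sub contDiff_const)).contDiffOn
  have hd : HasFDerivAt (fun z => (G z, Q (z - x))) ((fderiv ℝ G x).prod Q) x :=
    hGx.prodMk (Q.hasFDerivAt.comp x ((hasFDerivAt_id x).sub_const x))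
  have hbij : Bijective (fderiv ℝ (fun z => (G z, Q (z - x))) x) := by
    rw [hd.fderiv]
    constructor
    · rw [injective_iff_map_eq_zero]
      intro v hv
      have h1 : fderiv ℝ G x v = 0 := congrArg Prod.fst hv
      have h2 : Q v = 0 := congrArg Prod.snd hv
      have h3 := hQ ⟨v, hker v h1⟩
      rw [h2] at h3
      exact (congrArg Subtype.val h3).symm
    · rintro ⟨a, t⟩
      obtain ⟨v0, hv0⟩ := hs a
      refine ⟨v0 + ((t : V) - (Q v0 : V)), ?_⟩
      have h1 : fderiv ℝ G x (t : V) = 0 := hker' _ t.2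
      have h2 : fderiv ℝ G x (Q v0 : V) = 0 := hker' _ (Q v0).2
      ext1
      · simp [hv0, h1, h2]
      · simp [hQ]
  obtain ⟨e', hxe', -, he', -⟩ := exists_smooth_inverse hU' hsm hxU' hbij
  have hex : e x = (0, 0) := by
    rw [he, (hX.mem_iff x hxU).1 hx]; simp
  have hlim : Tendsto (fun z => ((0 : B), Q (z - x))) (𝓝 x) (𝓝 (e x)) := by
    have : ContinuousAt (fun z => ((0 : B), Q (z - x))) x := by fun_prop
    have h := this.tendsto
    simp only [sub_self, map_zero] at h
    rwa [hex]
  have hlim2 : Tendsto (fun z => e.symm ((0 : B), Q (z - x))) (𝓝 x) (𝓝 x) := by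
    have := e.symm.continuousAt (x := e x) (e.map_source hxe)
    have h2 := this.tendsto.comp hlim
    rwa [e.left_inv hxe] at h2
  filter_upwards [hlim.eventually (e.open_target.mem_nhds (e.map_source hxe)),
    hlim2.eventually (e.open_source.mem_nhds hxe), hlim2.eventually (e'.open_source.mem_nhds hxe'),
    hlim2.eventually hzero, e'.open_source.mem_nhds hxe'] with z h1 h2 h3 h4 h5 hGz
  have h6 : e (e.symm ((0 : B), Q (z - x))) = (0, Q (z - x)) := e.right_inv h1
  rw [he] at h6
  have h7 : e.symm ((0 : B), Q (z - x)) ∈ X := (hX.mem_iff _ (heU h2)).2 (congrArg Prod.fst h6)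
  have h8 : z = e.symm ((0 : B), Q (z - x)) := by
    apply e'.injOn h5 h3
    have h9 : Q (e.symm ((0 : B), Q (z - x)) - x) = Q (z - x) := congrArg Prod.snd h6
    rw [he', he', hGz, h4 h7, h9]
  rw [h8]
  exact h7

open scoped Manifold in
theorem exists_bump {K W : Set V} (hK : IsClosed K) (hW : IsOpen W) (hKW : K ⊆ W) :
    ∃ ρ : V → ℝ, ContDiff ℝ ∞ ρ ∧ (∀ z, 0 ≤ ρ z ∧ ρ z ≤ 1) ∧ (∃ O, IsOpen O ∧ K ⊆ O ∧ ∀ z ∈ O, ρ z = 1) ∧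
      ∃ O, IsOpen O ∧ Wᶜ ⊆ O ∧ ∀ z ∈ O, ρ z = 0 := by
  obtain ⟨f, h0, h1, h2⟩ := exists_contMDiffMap_zero_one_nhds_of_isClosed (n := (⊤ : ℕ∞)) 𝓘(ℝ, V)
    hW.isClosed_compl hK (disjoint_left.2 fun z hz hzK => hz (hKW hzK))
  refine ⟨f, f.contMDiff.contDiff, h2, ?_, ?_⟩
  · obtain ⟨O, h3, h4, h5⟩ := mem_nhdsSet_iff_exists.1 h1
    exact ⟨O, h3, h4, h5⟩
  · obtain ⟨O, h3, h4, h5⟩ := mem_nhdsSet_iff_exists.1 h0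
    exact ⟨O, h3, h4, h5⟩

/-- `φ` vanishes on `X` and is dual to the frame at `z`. -/
def GoodAt (X : Set V) (u : Fin p → V → V) (φ : V → Eu p) (z : V) : Prop :=
  z ∈ X → φ z = 0 ∧ ∀ i, fderiv ℝ φ z (u i z) = EuclideanSpace.single i 1

theorem GoodAt.congr {X : Set V} {u : Fin p → V → V} {φ φ' : V → Eu p} {z : V} (h : GoodAt X u φ z)
    (he : ∀ᶠ z' in 𝓝 z, φ' z' = φ z') : GoodAt X u φ' z := by
  intro hz
  have he' : φ' =ᶠ[𝓝 z] φ := he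
  rw [he'.fderiv_eq, he.self_of_nhds]
  exact h hz

theorem GoodAt.mix {X : Set V} {u : Fin p → V → V} {φ₁ φ₂ : V → Eu p} {ρ : V → ℝ} {z : V}
    (h₁ : ContDiff ℝ ∞ φ₁) (h₂ : ContDiff ℝ ∞ φ₂) (hρ : ContDiff ℝ ∞ ρ)
    (g₁ : (∀ᶠ z' in 𝓝 z, ρ z' = 0) ∨ GoodAt X u φ₁ z)
    (g₂ : (∀ᶠ z' in 𝓝 z, ρ z' = 1) ∨ GoodAt X u φ₂ z) :
    GoodAt X u (fun z => φ₂ z + ρ z • (φ₁ z - φ₂ z)) z := by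
  rcases g₁ with g₁ | g₁
  · rcases g₂ with g₂ | g₂
    · have := g₁.self_of_nhds; rw [g₂.self_of_nhds] at this; norm_num at this
    · exact g₂.congr (g₁.mono fun z' hz' => by simp [hz'])
  rcases g₂ with g₂ | g₂
  · exact g₁.congr (g₂.mono fun z' hz' => by simp [hz'])
  intro hz
  obtain ⟨a1, b1⟩ := g₁ hz
  obtain ⟨a2, b2⟩ := g₂ hz
  refine ⟨by simp [a1, a2], fun i => ?_⟩
  have d1 := (h₁.differentiable (by simp) z).hasFDerivAt
  have d2 := (h₂.differentiable (by simp) z).hasFDerivAt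
  have d3 := (hρ.differentiable (by simp) z).hasFDerivAt
  have := d2.add (d3.smul (d1.sub d2))
  have e : fderiv ℝ (fun z => φ₂ z + ρ z • (φ₁ z - φ₂ z)) z = _ := this.fderiv
  rw [e]
  simp [a1, a2, b1, b2]

theorem good_local {X : Set V} (hX : IsMfd X) {u : Fin p → V → V} (hu : ∀ i, ContDiff ℝ ∞ (u i))
    (hind : ∀ x ∈ X, ∀ c : Eu p, ∑ i, c i • u i x ∈ SubTangent X x → c = 0) {x : V} (hx : x ∈ X) :
    ∃ φ : V → Eu p, ContDiff ℝ ∞ φ ∧ ∀ᶠ z in 𝓝 x, GoodAt X u φ z := by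
  obtain ⟨k, U, Ψ, hxU, hL⟩ := hX x hx
  let T : V → Eu p →L[ℝ] Eu k := fun z =>
    ∑ i, (EuclideanSpace.proj (𝕜 := ℝ) i : Eu p →L[ℝ] ℝ).smulRight (fderiv ℝ Ψ z (u i z))
  have hT : ∀ z c, T z c = ∑ i, c i • fderiv ℝ Ψ z (u i z) := by
    intro z c; simp [T]
  have hTi : ∀ z i, T z (EuclideanSpace.single i 1) = fderiv ℝ Ψ z (u i z) := by
    intro z i
    rw [hT, Finset.sum_eq_single i]
    · simp
    · intro j _ hj; simp [hj]
    · simp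
  have hTs : ContDiffOn ℝ ∞ T U := by
    refine ContDiffOn.sum fun i _ => ?_
    have h1 : ContDiffOn ℝ ∞ (fun z => fderiv ℝ Ψ z (u i z)) U :=
      (hL.smooth.fderiv_of_isOpen hL.isOpen (by simp)).clm_apply (hu i).contDiffOn
    exact contDiffOn_const.smulRight h1
  have hinj : Injective (T x) := by
    rw [injective_iff_map_eq_zero]
    intro c hc
    apply hind x hx
    rw [hL.tangent hxU hx, LinearMap.mem_ker]
    rw [hT] at hc
    simpa using hc
  obtain ⟨A₀, hA₀⟩ : ∃ A₀ : Eu k →L[ℝ] Eu p, A₀.comp (T x) = ContinuousLinearMap.id ℝ (Eu p) := by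
    obtain ⟨g, hg⟩ := LinearMap.exists_leftInverse_of_injective (T x : Eu p →ₗ[ℝ] Eu k)
      (LinearMap.ker_eq_bot.2 hinj)
    refine ⟨g.toContinuousLinearMap, ?_⟩
    ext1 c
    exact LinearMap.congr_fun hg c
  let R : V → Eu p →L[ℝ] Eu p := fun z => A₀.comp (T z)
  have hRs : ContDiffOn ℝ ∞ R U := contDiffOn_const.clm_comp hTs
  have hRo : IsOpen (U ∩ R ⁻¹' range ((↑) : (Eu p ≃L[ℝ] Eu p) → Eu p →L[ℝ] Eu p)) :=
    hRs.continuousOn.isOpen_inter_preimage hL.isOpen ContinuousLinearEquiv.isOpen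
  set O := U ∩ R ⁻¹' range ((↑) : (Eu p ≃L[ℝ] Eu p) → Eu p →L[ℝ] Eu p) with hO
  have hxO : x ∈ O := ⟨hxU, ContinuousLinearEquiv.refl ℝ _, by simp only [R, hA₀]; rfl⟩
  let S : V → Eu p →L[ℝ] Eu p := fun z => (R z).inverse
  have hSs : ContDiffOn ℝ ∞ S O := by
    intro z hz
    obtain ⟨hzU, e, he⟩ := hz
    have h1 : ContDiffAt ℝ ∞ ContinuousLinearMap.inverse (R z) := by
      rw [← he]; exact contDiffAt_map_inverse e
    exact (h1.comp z (hRs.contDiffAt (hL.isOpen.mem_nhds hzU))).contDiffWithinAt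
  have hφs : ContDiffOn ℝ ∞ (fun z => S z (A₀ (Ψ z))) O :=
    hSs.clm_apply (A₀.contDiff.comp_contDiffOn (hL.smooth.mono fun z hz => hz.1))
  obtain ⟨φ, hφ, hφe⟩ := exists_global_ext hRo hφs hxO
  refine ⟨φ, hφ, ?_⟩
  filter_upwards [hφe.eventually_nhds, hRo.mem_nhds hxO] with z hz hzO
  refine GoodAt.congr (φ := fun z => S z (A₀ (Ψ z))) (fun hzX => ?_) hz
  have h0 : Ψ z = 0 := (hL.mem_iff z hzO.1).1 hzX
  refine ⟨by simp [h0], fun i => ?_⟩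
  have d1 : HasFDerivAt S (fderiv ℝ S z) z :=
    ((hSs.contDiffAt (hRo.mem_nhds hzO)).differentiableAt (by simp)).hasFDerivAt
  have d2 : HasFDerivAt (fun z => A₀ (Ψ z)) (A₀.comp (fderiv ℝ Ψ z)) z :=
    A₀.hasFDerivAt.comp z (hL.hasFDerivAt hzO.1)
  have e := (d1.clm_apply d2).fderiv
  rw [e]
  obtain ⟨hzU, e, he⟩ := hzO
  have h5 : S z (R z (EuclideanSpace.single i 1)) = EuclideanSpace.single i 1 := by
    simp only [S, ← he, ContinuousLinearMap.inverse_equiv]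
    simp
  simp only [R, ContinuousLinearMap.comp_apply, hTi] at h5
  simp [h0, h5]

theorem good_compact {X K : Set V} (hX : IsMfd X) (hK : IsCompact K) (hKX : K ⊆ X)
    {u : Fin p → V → V} (hu : ∀ i, ContDiff ℝ ∞ (u i))
    (hind : ∀ x ∈ X, ∀ c : Eu p, ∑ i, c i • u i x ∈ SubTangent X x → c = 0) :
    ∃ φ : V → Eu p, ContDiff ℝ ∞ φ ∧ ∃ W, IsOpen W ∧ K ⊆ W ∧ ∀ z ∈ W, GoodAt X u φ z := by
  have key : ∃ φ : V → Eu p, ContDiff ℝ ∞ φ ∧ ∃ W, IsOpen W ∧ closure K ⊆ W ∧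
      ∀ z ∈ W, GoodAt X u φ z := by
    refine hK.induction_on (p := fun s => ∃ φ : V → Eu p, ContDiff ℝ ∞ φ ∧ ∃ W, IsOpen W ∧
      closure s ⊆ W ∧ ∀ z ∈ W, GoodAt X u φ z) ?_ ?_ ?_ ?_
    · exact ⟨fun _ => 0, contDiff_const, ∅, isOpen_empty, by simp, by simp⟩
    · rintro s t hst ⟨φ, h1, W, h2, h3, h4⟩
      exact ⟨φ, h1, W, h2, (closure_mono hst).trans h3, h4⟩
    · rintro s t ⟨φ₁, a1, W₁, a2, a3, a4⟩ ⟨φ₂, b1, W₂, b2, b3, b4⟩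
      obtain ⟨ρ, c1, c2, ⟨O, c3, c4, c5⟩, ⟨O', c6, c7, c8⟩⟩ := exists_bump isClosed_closure a2 a3
      refine ⟨fun z => φ₂ z + ρ z • (φ₁ z - φ₂ z), b1.add (c1.smul (a1.sub b1)), O ∪ W₂,
        c3.union b2, ?_, ?_⟩
      · rw [closure_union]; exact union_subset_union c4 b3
      · intro z hz
        refine GoodAt.mix a1 b1 c1 ?_ ?_
        · by_cases h : z ∈ W₁
          · exact Or.inr (a4 z h)
          · left; filter_upwards [c6.mem_nhds (c7 h)] with z' hz' using c8 z' hz'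
        · rcases hz with hz | hz
          · left; filter_upwards [c3.mem_nhds hz] with z' hz' using c5 z' hz'
          · exact Or.inr (b4 z hz)
    · intro x hx
      obtain ⟨φ, h1, h2⟩ := good_local hX hu hind (hKX hx)
      obtain ⟨W, h3, h4, h5⟩ := _root_.eventually_nhds_iff.1 h2
      obtain ⟨r, hr, hrW⟩ := Metric.nhds_basis_closedBall.mem_iff.1 (h4.mem_nhds h5)
      exact ⟨closedBall x r, mem_nhdsWithin_of_mem_nhds (closedBall_mem_nhds x hr), φ, h1, W, h4,
        by rw [isClosed_closedBall.closure_eq]; exact hrW, h3⟩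
  obtain ⟨φ, h1, W, h2, h3, h4⟩ := key
  exact ⟨φ, h1, W, h2, subset_closure.trans h3, h4⟩

/-- Near a point of `X`, the zeros of `φ` on `M` are the points of `X`. -/
theorem good_zero {M X : Set V} (hM : IsMfd M) (hX : IsMfd X) {u : Fin p → V → V} {φ : V → Eu p}
    (hφ : ContDiff ℝ ∞ φ) {x : V} (hx : x ∈ X) (hXM : X ⊆ M)
    (hg : ∀ᶠ z in 𝓝 x, GoodAt X u φ z)
    (hspan : SubTangent X x ⊔ Submodule.span ℝ (range fun i => u i x) = SubTangent M x) :
    ∀ᶠ z in 𝓝 x, z ∈ M → φ z = 0 → z ∈ X := by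
  obtain ⟨k, U, Ψ, hxU, hL⟩ := hX x hx
  obtain ⟨k', U', Φ, hxU', hL'⟩ := hM x (hXM hx)
  have hφd := (hφ.differentiable (by simp) x).hasFDerivAt
  have hd : HasFDerivAt (fun z => (Φ z, φ z)) ((fderiv ℝ Φ x).prod (fderiv ℝ φ x)) x :=
    (hL'.hasFDerivAt hxU').prodMk hφd
  have hgx := hg.self_of_nhds hx
  have huM : ∀ i, fderiv ℝ Φ x (u i x) = 0 := by
    intro i
    have : u i x ∈ SubTangent M x := by
      rw [← hspan]
      exact Submodule.mem_sup_right (Submodule.subset_span ⟨i, rfl⟩)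
    rw [hL'.tangent hxU' (hXM hx)] at this
    exact this
  have hφT : ∀ v ∈ SubTangent X x, fderiv ℝ φ x v = 0 := by
    intro v hv
    have h1 : HasDerivOn (fun _ : V => (0 : Eu p)) X x (fderiv ℝ φ x) :=
      ⟨φ, hg.mono fun z hz hzX => ((hz hzX).1).symm, hgx.1.symm, hφd⟩
    have h2 : HasDerivOn (fun _ : V => (0 : Eu p)) X x (0 : V →L[ℝ] Eu p) :=
      hasDerivOn_of_eqOn hx (fun z hz => rfl) (hasFDerivAt_const (0 : Eu p) x)
    simpa using hasDerivOn_unique h1 h2 hv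
  have hsum : ∀ c : Eu p, fderiv ℝ φ x (∑ i, c i • u i x) = c := by
    intro c
    rw [map_sum]
    simp only [map_smul, hgx.2]
    exact eucl_sum_single c
  have hsumΦ : ∀ c : Eu p, fderiv ℝ Φ x (∑ i, c i • u i x) = 0 := by
    intro c
    rw [map_sum]
    simp [huM]
  have hc := coincide (G := fun z => (Φ z, φ z)) hL hxU hx hL'.isOpen
    (hL'.smooth.prodMk hφ.contDiffOn) hxU' ?_ ?_ ?_
  · filter_upwards [hc, hL'.isOpen.mem_nhds hxU'] with z hz hzU hzM hz0
    exact hz (by rw [(hL'.mem_iff z hzU).1 hzM, hz0]; rfl)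
  · rw [hd.fderiv]
    rintro ⟨a, c⟩
    obtain ⟨v0, hv0⟩ := hL'.surj x hxU' a
    refine ⟨v0 + ∑ i, (c - fderiv ℝ φ x v0) i • u i x, ?_⟩
    rw [ContinuousLinearMap.prod_apply, map_add, map_add, hsum, hsumΦ, hv0]
    simp
  · intro v hv
    rw [hd.fderiv] at hv
    have h1 : fderiv ℝ Φ x v = 0 := congrArg Prod.fst hv
    have h2 : fderiv ℝ φ x v = 0 := congrArg Prod.snd hv
    have hvM : v ∈ SubTangent M x := by rw [hL'.tangent hxU' (hXM hx)]; exact h1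
    rw [← hspan] at hvM
    obtain ⟨a, ha, b, hb, rfl⟩ := Submodule.mem_sup.1 hvM
    obtain ⟨c, rfl⟩ := (Submodule.mem_span_range_iff_exists_fun ℝ).1 hb
    have h3 := hsum (WithLp.toLp 2 c)
    rw [map_add, hφT a ha, zero_add] at h2
    rw [show ∑ i, (WithLp.toLp 2 c : Eu p) i • u i x = ∑ i, c i • u i x from rfl, h2] at h3
    have h4 : ∀ i, c i = 0 := fun i => by
      have := congrArg (fun w : Eu p => w i) h3
      simpa using this.symm
    simp only [h4, zero_smul, Finset.sum_const_zero, add_zero]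
    rw [hL.tangent hxU hx] at ha
    exact ha
  · filter_upwards [hg, hL'.isOpen.mem_nhds hxU'] with z hz hzU hzX
    rw [(hL'.mem_iff z hzU).1 (hXM hzX), (hz hzX).1]; rfl

end Tube
end Part10

section Part11
open scoped ContDiff
open Filter

section NHsec
variable {p : ℕ}

/-- The linear embedding of `ℝ × ℝ^p` as `ℝ^{p+1}`. -/
def emb (p : ℕ) : (ℝ × Eu p) →L[ℝ] Eu (p + 1) :=
  (ContinuousLinearMap.fst ℝ ℝ (Eu p)).smulRight (e0 p) +
    ∑ i, ((EuclideanSpace.proj (𝕜 := ℝ) i : Eu p →L[ℝ] ℝ).comp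
      (ContinuousLinearMap.snd ℝ ℝ (Eu p))).smulRight (eS p i)

theorem emb_apply (a : ℝ) (v : Eu p) : emb p (a, v) = a • e0 p + ∑ i, v i • eS p i := by
  simp [emb]

theorem emb_zero (a : ℝ) (v : Eu p) : emb p (a, v) 0 = a := by
  rw [emb_apply]; simp [e0, eS, (Fin.succ_ne_zero _).symm]

theorem emb_succ (a : ℝ) (v : Eu p) (i : Fin p) : emb p (a, v) i.succ = v i := by
  rw [emb_apply]; simp [e0, eS, Pi.single_apply]

theorem emb_eq_zero {a : ℝ} {v : Eu p} (h : emb p (a, v) = 0) : a = 0 ∧ v = 0 := by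
  constructor
  · rw [← emb_zero a v, h]; simp
  · ext i; rw [← emb_succ a v, h]; simp

variable {E : Type*} [NormedAddCommGroup E] [InnerProductSpace ℝ E]

/-- Nonvanishing smooth homotopy. -/
def NH (M : Set E) (a b : E → Eu (p + 1)) : Prop :=
  ∃ H : E × ℝ → Eu (p + 1), ContDiff ℝ ∞ H ∧ (∀ x ∈ M, ∀ t, H (x, t) ≠ 0) ∧
    (∀ x ∈ M, ∀ t ≤ 0, H (x, t) = a x) ∧ (∀ x ∈ M, ∀ t, 1 ≤ t → H (x, t) = b x)

theorem NH.symm {M : Set E} {a b : E → Eu (p + 1)} (h : NH M a b) : NH M b a := by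
  obtain ⟨H, h1, h2, h3, h4⟩ := h
  refine ⟨fun z => H (z.1, 1 - z.2), by fun_prop, fun x hx t => h2 x hx _,
    fun x hx t ht => h4 x hx _ (by linarith), fun x hx t ht => h3 x hx _ (by linarith)⟩

theorem NH.trans {M : Set E} {a b c : E → Eu (p + 1)} (h : NH M a b) (h' : NH M b c) : NH M a c := by
  obtain ⟨H, h1, h2, h3, h4⟩ := h
  obtain ⟨H', h1', h2', h3', h4'⟩ := h'
  have hA : ∀ x ∈ M, ∀ t, t ≤ 2 / 3 → H (x, 3 * t) + H' (x, 3 * t - 2) - H (x, 1) = H (x, 3 * t) := by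
    intro x hx t ht
    rw [h3' x hx _ (by linarith), h4 x hx 1 le_rfl]; simp
  have hB : ∀ x ∈ M, ∀ t, 1 / 3 ≤ t →
      H (x, 3 * t) + H' (x, 3 * t - 2) - H (x, 1) = H' (x, 3 * t - 2) := by
    intro x hx t ht
    rw [h4 x hx (3 * t) (by linarith), h4 x hx 1 le_rfl]; simp
  refine ⟨fun z => H (z.1, 3 * z.2) + H' (z.1, 3 * z.2 - 2) - H (z.1, 1), by fun_prop,
    fun x hx t => ?_, fun x hx t ht => ?_, fun x hx t ht => ?_⟩
  · rcases le_total t (1 / 2) with ht | ht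
    · simp only; rw [hA x hx t (by linarith)]; exact h2 x hx _
    · simp only; rw [hB x hx t (by linarith)]; exact h2' x hx _
  · simp only; rw [hA x hx t (by linarith)]; exact h3 x hx _ (by linarith)
  · simp only; rw [hB x hx t (by linarith)]; exact h4' x hx _ (by linarith)

theorem NH.of_path {M : Set E} {G : E × ℝ → Eu (p + 1)} (hG : ContDiff ℝ ∞ G) {t₀ t₁ : ℝ}
    (h01 : t₀ ≤ t₁) (h : ∀ x ∈ M, ∀ t, t₀ ≤ t → t ≤ t₁ → G (x, t) ≠ 0) :
    NH M (fun x => G (x, t₀)) (fun x => G (x, t₁)) := by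
  refine ⟨fun z => G (z.1, t₀ + Real.smoothTransition z.2 * (t₁ - t₀)), ?_, fun x hx t => ?_,
    fun x hx t ht => ?_, fun x hx t ht => ?_⟩
  · have : ContDiff ℝ ∞ Real.smoothTransition := Real.smoothTransition.contDiff
    fun_prop
  · have h1 := Real.smoothTransition.nonneg t
    have h2 := Real.smoothTransition.le_one t
    exact h x hx _ (by nlinarith) (by nlinarith)
  · simp only; rw [Real.smoothTransition.zero_of_nonpos ht]; simp
  · simp only; rw [Real.smoothTransition.one_of_one_le ht]; simp

theorem NH.of_line {M : Set E} {A B : E → Eu (p + 1)} (hA : ContDiff ℝ ∞ A) (hB : ContDiff ℝ ∞ B)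
    (h : ∀ x ∈ M, ∀ t : ℝ, 0 ≤ t → t ≤ 1 → (1 - t) • A x + t • B x ≠ 0) : NH M A B := by
  have := NH.of_path (M := M) (G := fun z => (1 - z.2) • A z.1 + z.2 • B z.1) (by fun_prop) zero_le_one h
  simpa using this

theorem normalise_smooth {V : Type*} [NormedAddCommGroup V] [NormedSpace ℝ V] {H : V → Eu (p + 1)}
    (hH : ContDiff ℝ ∞ H) : ContDiffOn ℝ ∞ (fun z => ‖H z‖⁻¹ • H z) {z | H z ≠ 0} := by
  intro z hz
  refine (ContDiffAt.smul (ContDiffAt.inv (hH.contDiffAt.norm ℝ hz) (norm_ne_zero_iff.2 hz))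
    hH.contDiffAt).contDiffWithinAt

theorem normalise_smoothOnSet {V : Type*} [NormedAddCommGroup V] [NormedSpace ℝ V] {M : Set V}
    {H : V → Eu (p + 1)} (hH : ContDiff ℝ ∞ H) (h : ∀ z ∈ M, H z ≠ 0) :
    SmoothOnSet (fun z => ‖H z‖⁻¹ • H z) M := fun x hx =>
  ⟨{z | H z ≠ 0}, _, isOpen_ne_fun hH.continuous continuous_const, h x hx, normalise_smooth hH, fun _ _ => rfl⟩

theorem normalise_mem {v : Eu (p + 1)} (h : v ≠ 0) : ‖v‖⁻¹ • v ∈ sphereSet p := by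
  simp [sphereSet, norm_smul, h]

theorem NH.homotopic {M : Set E} {f g : E → Eu (p + 1)} (h : NH M f g)
    (hf : ∀ x ∈ M, f x ∈ sphereSet p) (hg : ∀ x ∈ M, g x ∈ sphereSet p) :
    SmoothHomotopicOn M f g (sphereSet p) := by
  obtain ⟨H, h1, h2, h3, h4⟩ := h
  refine ⟨fun z => ‖H z‖⁻¹ • H z, normalise_smoothOnSet h1 fun z hz => h2 z.1 hz.1 z.2,
    fun x hx t => normalise_mem (h2 x hx t), fun x hx => ?_, fun x hx => ?_⟩
  · have : ‖f x‖ = 1 := by simpa [sphereSet] using hf x hx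
    simp [h3 x hx 0 le_rfl, this]
  · have : ‖g x‖ = 1 := by simpa [sphereSet] using hg x hx
    simp [h4 x hx 1 le_rfl, this]

theorem NH.to_emb {M : Set E} {F : E → Eu (p + 1)} (hF : ContDiff ℝ ∞ F) (h0 : ∀ x ∈ M, F x ≠ 0)
    {y : Eu (p + 1)} {w : Fin p → Eu (p + 1)} (hw : PosOrientedTangentBasis p y w)
    {η : Eu (p + 1) →L[ℝ] ℝ} {τ : Eu (p + 1) →L[ℝ] Eu p} (hc : Coords y w η τ) :
    NH M F (fun x => emb p (η (F x), τ (F x))) := by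
  obtain ⟨P, h1, h2, h3, h4, h5⟩ := exists_iso_path (b := Fin.cons (e0 p) (eS p)) (b' := Fin.cons y w)
    (by rw [e_det]; exact one_pos) hw.2
  refine ⟨fun z => P z.2 (F z.1), ?_, fun x hx t h => h0 x hx (h5 _ _ h), fun x hx t ht => h2 t ht _,
    fun x hx t ht => ?_⟩
  · exact h1.comp (f := fun z : E × ℝ => (z.2, F z.1)) (by fun_prop)
  · simp only
    rw [h3 t ht, emb_apply]
    conv_lhs => rw [hc.decomp (F x)]
    have h6 := h4 0
    have h7 := fun i : Fin p => h4 i.succ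
    simp only [Fin.cons_zero, Fin.cons_succ] at h6 h7
    simp only [map_add, map_smul, map_sum, h6, h7]

/-- Orthogonal independent frames are complementary to the tangent space. -/
theorem hind_of {V : Type*} [NormedAddCommGroup V] [NormedSpace ℝ V] (B : V →L[ℝ] V →L[ℝ] ℝ)
    (hB : ∀ u, B u u = 0 → u = 0) {T : Submodule ℝ V} {u : Fin p → V}
    (ho : ∀ i, ∀ v ∈ T, B (u i) v = 0) (hi : LinearIndependent ℝ u) (c : Eu p)
    (h : ∑ i, c i • u i ∈ T) : c = 0 := by
  have h1 : ∑ i, c i • u i = 0 := by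
    have key : ∀ v ∈ T, B (∑ i, c i • u i) v = 0 := by
      intro v hv
      simp only [map_sum, map_smul, sum_apply, smul_apply]
      exact Finset.sum_eq_zero fun i _ => by rw [ho i _ hv, smul_zero]
    exact hB _ (key _ h)
  have := Fintype.linearIndependent_iff.1 hi _ h1
  ext i; simpa using this i

end NHsec
end Part11

section Part12
open scoped ContDiff
open Filter

section Thom
variable {p : ℕ}

theorem thom_bump {V : Type*} [NormedAddCommGroup V] [NormedSpace ℝ V] [FiniteDimensional ℝ V]
    {M X K W₁ : Set V} (hM : IsMfd M) (hX : IsMfd X) (hXM : X ⊆ M) (hK : IsCompact K) (hKX : K ⊆ X)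
    {u : Fin p → V → V} {φ : V → Eu p} (hφ : ContDiff ℝ ∞ φ) (hW₁ : IsOpen W₁) (hKW : K ⊆ W₁)
    (hg : ∀ z ∈ W₁, GoodAt X u φ z)
    (hspan : ∀ x ∈ X, SubTangent X x ⊔ Submodule.span ℝ (range fun i => u i x) = SubTangent M x) :
    ∃ ρ : V → ℝ, ContDiff ℝ ∞ ρ ∧ (∀ z, 0 ≤ ρ z ∧ ρ z ≤ 1) ∧
      (∃ O, IsOpen O ∧ K ⊆ O ∧ ∀ z ∈ O, ρ z = 1) ∧ ∀ z ∈ M, φ z = 0 → ρ z = 0 ∨ z ∈ X := by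
  obtain ⟨ρ, h1, h2, h3, O, -, h5, h6⟩ := exists_bump (W := interior {z | z ∈ M → φ z = 0 → z ∈ X})
    hK.isClosed isOpen_interior (fun x hx => mem_interior_iff_mem_nhds.2
      (good_zero hM hX hφ (hKX hx) hXM
        (Filter.mem_of_superset (hW₁.mem_nhds (hKW hx)) hg) (hspan x (hKX hx))))
  refine ⟨ρ, h1, h2, h3, fun z hz hφz => ?_⟩
  by_cases h : z ∈ interior {z | z ∈ M → φ z = 0 → z ∈ X}
  · exact Or.inr (interior_subset h hz hφz)
  · exact Or.inl (h6 z (h5 h))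

variable {E : Type*} [NormedAddCommGroup E] [InnerProductSpace ℝ E] {m : ℕ} [FiniteDimensional ℝ E]

theorem good_end {M : Set E} {f F : E → Eu (p + 1)} (hF : ContDiff ℝ ∞ F) (hfF : EqOn f F M)
    (hfs : ∀ x ∈ M, f x ∈ sphereSet p) {y : Eu (p + 1)} {w : Fin p → Eu (p + 1)} {N : Set E}
    {ν : Fin p → E → E} (h : IsPontryaginManifold m p f M y w N ν)
    {η : Eu (p + 1) →L[ℝ] ℝ} {τ : Eu (p + 1) →L[ℝ] Eu p} (hc : Coords y w η τ)
    {X : Set (E × ℝ)} {u : Fin p → E × ℝ → E × ℝ} {z : E × ℝ} (hz : z ∈ X → z.1 ∈ N)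
    (hu : z ∈ X → ∀ i, u i z = (ν i z.1, 0)) :
    GoodAt X u (fun z => τ (F z.1)) z := by
  intro hzX
  obtain ⟨h1, -, h3⟩ := pont_reg hF hfF hfs h hc
  have hx := hz hzX
  refine ⟨?_, fun i => ?_⟩
  · have := hx; rw [h1] at this; exact this.2.2
  · have hFd := (hF.differentiable (by simp) z.1).hasFDerivAt
    have hd : HasFDerivAt (fun z : E × ℝ => τ (F z.1))
        (τ.comp ((fderiv ℝ F z.1).comp (ContinuousLinearMap.fst ℝ E ℝ))) z :=
      τ.hasFDerivAt.comp z (hFd.comp z hasFDerivAt_fst)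
    rw [hd.fderiv, hu hzX i]
    simp [h3 _ hx, hc.τw]

theorem end_line {M N : Set E} {f F : E → Eu (p + 1)} (hF : ContDiff ℝ ∞ F) (hfF : EqOn f F M)
    (hfs : ∀ x ∈ M, f x ∈ sphereSet p) {y : Eu (p + 1)} {w : Fin p → Eu (p + 1)}
    {ν : Fin p → E → E} (h : IsPontryaginManifold m p f M y w N ν)
    {η : Eu (p + 1) →L[ℝ] ℝ} {τ : Eu (p + 1) →L[ℝ] Eu p} (hc : Coords y w η τ)
    {r : E → ℝ} (hr : ContDiff ℝ ∞ r) (hr0 : ∀ x, 0 ≤ r x) (hr1 : ∀ x ∈ N, r x = 1)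
    (hrN : ∀ x ∈ M, τ (F x) = 0 → r x = 0 ∨ x ∈ N) :
    NH M F (fun x => emb p (2 * r x - 1, r x • τ (F x))) := by
  obtain ⟨h1, -, h3⟩ := pont_reg hF hfF hfs h hc
  have hF0 : ∀ x ∈ M, F x ≠ 0 := by
    intro x hx h0
    have := hfs x hx
    rw [hfF hx, h0] at this
    simp [sphereSet] at this
  refine (NH.to_emb hF hF0 h.basis hc).trans (NH.of_line (by fun_prop) (by fun_prop) ?_)
  intro x hx t ht0 ht1 he
  rw [← map_smul, ← map_smul, ← map_add] at he
  obtain ⟨ha, hb⟩ := emb_eq_zero (a := (1 - t) * η (F x) + t * (2 * r x - 1))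
    (v := (1 - t) • τ (F x) + t • r x • τ (F x)) he
  rw [smul_smul, ← add_smul, smul_eq_zero] at hb
  by_cases hτ : τ (F x) = 0
  · have hη : η (F x) ≠ 0 := fun h0 => hF0 x hx (hc.eq_zero h0 hτ)
    by_cases hxN : x ∈ N
    · have hpos : 0 < η (F x) := by
        have := hxN; rw [h1] at this; exact this.2.1
      rw [hr1 x hxN] at ha
      rcases eq_or_lt_of_le ht0 with ht | ht
      · rw [← ht] at ha; linarith
      · nlinarith
    · have hneg : η (F x) < 0 := by
        by_contra hcon
        apply hxN; rw [h1]
        exact ⟨hx, lt_of_le_of_ne (not_lt.1 hcon) hη.symm, hτ⟩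
      rw [(hrN x hx hτ).resolve_right hxN] at ha
      rcases eq_or_lt_of_le ht0 with ht | ht
      · rw [← ht] at ha; linarith
      · nlinarith
  · have h5 := hb.resolve_right hτ
    have h6 : t = 1 := by nlinarith [mul_nonneg ht0 (hr0 x)]
    rw [h6] at h5 ha
    linarith

theorem homotopic_of_cob {M : Set E} (hM : IsSubmanifold M m) (hMc : IsCompact M) {f g : E → Eu (p + 1)}
    (hfsm : SmoothOnSet f M) (hfs : ∀ x ∈ M, f x ∈ sphereSet p)
    (hgsm : SmoothOnSet g M) (hgs : ∀ x ∈ M, g x ∈ sphereSet p)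
    {y y' : Eu (p + 1)} {w w' : Fin p → Eu (p + 1)} {N N' : Set E} {ν ν' : Fin p → E → E}
    (hf : IsPontryaginManifold m p f M y w N ν) (hg : IsPontryaginManifold m p g M y' w' N' ν')
    (hcob : FramedCobordant M m p N ν N' ν') : SmoothHomotopicOn M f g (sphereSet p) := by
  obtain ⟨Xc, u₀, ε, hε0, hε1, hXcc, hXcM, hL, hR, hXm, hus, hfr, huL, huR⟩ := hcob
  obtain ⟨F, hF, hfF⟩ := hfsm.exists_global hMc.isClosed
  obtain ⟨G, hG, hgG⟩ := hgsm.exists_global hMc.isClosed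
  obtain ⟨η, τ, hc⟩ := exists_coords hf.basis.2.ne'
  obtain ⟨η', τ', hc'⟩ := exists_coords hg.basis.2.ne'
  choose u hu huu using fun i => (hus i).exists_global hXcc.isClosed
  set X : Set (E × ℝ) := Xc ∩ (univ ×ˢ Ioo (0 : ℝ) 1) with hXdef
  have hX : IsMfd X := hXm.isMfd
  have hMM : IsMfd (M ×ˢ (univ : Set ℝ)) := hM.isMfd.prod_univ
  have hXM : X ⊆ M ×ˢ (univ : Set ℝ) := fun z hz => ⟨(hXcM hz.1).1, mem_univ _⟩
  have huX : ∀ z ∈ X, ∀ i, u i z = u₀ i z := fun z hz i => (huu i hz.1).symm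
  have hind : ∀ z ∈ X, ∀ c : Eu p, ∑ i, c i • u i z ∈ SubTangent X z → c = 0 := by
    intro z hz c hcz
    obtain ⟨-, h2, h3, -⟩ := hfr z hz
    refine hind_of (prodB E) prodB_posdef (T := SubTangent X z) (u := fun i => u₀ i z) (fun i v hv => ?_) h3 c ?_
    · rw [prodB_apply]; exact h2 i v hv
    · simpa only [huX z hz] using hcz
  have hspan : ∀ z ∈ X, SubTangent X z ⊔ Submodule.span ℝ (range fun i => u i z)
      = SubTangent (M ×ˢ (univ : Set ℝ)) z := by
    intro z hz
    have := (hfr z hz).2.2.2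
    simpa only [huX z hz] using this
  -- the middle part
  set t₀ := ε / 4 with ht₀
  set t₁ := 1 - ε / 4 with ht₁
  let K : Set (E × ℝ) := Xc ∩ (univ ×ˢ Icc t₀ t₁)
  have hK : IsCompact K := hXcc.inter_right (isClosed_univ.prod isClosed_Icc)
  have hKX : K ⊆ X := fun z hz => ⟨hz.1, mem_univ _, by
    have := hz.2.2.1; linarith, by have := hz.2.2.2; linarith⟩
  obtain ⟨φm, hφm, W, hW, hKW, hgm⟩ := good_compact hX hK hKX hu hind
  obtain ⟨ρ₀, hρ₀, -, ⟨O₀, -, hO₀, hρ₀1⟩, P₀, hP₀, hP₀', hρ₀0⟩ := exists_bump (K := {t₀}) (W := Iio ε)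
    isClosed_singleton isOpen_Iio (by simp only [singleton_subset_iff, mem_Iio]; linarith)
  obtain ⟨ρ₁, hρ₁, -, ⟨O₁, -, hO₁, hρ₁1⟩, P₁, hP₁, hP₁', hρ₁0⟩ := exists_bump (K := {t₁}) (W := Ioi (1 - ε))
    isClosed_singleton isOpen_Ioi (by simp only [singleton_subset_iff, mem_Ioi]; linarith)
  have hg0 : ∀ z : E × ℝ, z.2 < ε → GoodAt X u (fun z => τ (F z.1)) z := by
    intro z hz
    refine good_end hF hfF hfs hf hc (fun hzX => ?_) (fun hzX i => ?_)
    · have : z ∈ Xc ∩ (univ ×ˢ Iio ε) := ⟨hzX.1, mem_univ _, hz⟩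
      rw [hL] at this; exact this.1
    · rw [huX z hzX]; exact huL z.1 z.2 hzX.1 hz i
  have hg1 : ∀ z : E × ℝ, 1 - ε < z.2 → GoodAt X u (fun z => τ' (G z.1)) z := by
    intro z hz
    refine good_end hG hgG hgs hg hc' (fun hzX => ?_) (fun hzX i => ?_)
    · have : z ∈ Xc ∩ (univ ×ˢ Ioi (1 - ε)) := ⟨hzX.1, mem_univ _, hz⟩
      rw [hR] at this; exact this.1
    · rw [huX z hzX]; exact huR z.1 z.2 hzX.1 hz i
  let φa : E × ℝ → Eu p := fun z => φm z + ρ₀ z.2 • (τ (F z.1) - φm z)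
  have hφa : ContDiff ℝ ∞ φa := by fun_prop
  let φ : E × ℝ → Eu p := fun z => φa z + ρ₁ z.2 • (τ' (G z.1) - φa z)
  have hφ : ContDiff ℝ ∞ φ := by fun_prop
  have hga : ∀ z ∈ W, GoodAt X u φa z := by
    intro z hz
    refine GoodAt.mix (φ₁ := fun z => τ (F z.1)) (ρ := fun z => ρ₀ z.2) (by fun_prop) hφm (by fun_prop) ?_ (Or.inr (hgm z hz))
    by_cases h : z.2 < ε
    · exact Or.inr (hg0 z h)
    · left
      exact continuous_snd.continuousAt.eventually
        (Filter.mem_of_superset (hP₀.mem_nhds (hP₀' h)) hρ₀0)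
  have hgφ : ∀ z ∈ W, GoodAt X u φ z := by
    intro z hz
    refine GoodAt.mix (φ₁ := fun z => τ' (G z.1)) (ρ := fun z => ρ₁ z.2) (by fun_prop) hφa (by fun_prop) ?_ (Or.inr (hga z hz))
    by_cases h : 1 - ε < z.2
    · exact Or.inr (hg1 z h)
    · left
      exact continuous_snd.continuousAt.eventually
        (Filter.mem_of_superset (hP₁.mem_nhds (hP₁' h)) hρ₁0)
  obtain ⟨ρ, hρ, hρ01, ⟨O, -, hKO, hρ1⟩, hρX⟩ := thom_bump hMM hX hXM hK hKX hφ hW hKW hgφ hspan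
  have hφ0 : ∀ x, φ (x, t₀) = τ (F x) := by
    intro x
    have h1 : ρ₀ t₀ = 1 := hρ₀1 _ (hO₀ rfl)
    have h2 : ρ₁ t₀ = 0 := hρ₁0 _ (hP₁' (by simp only [mem_compl_iff, mem_Ioi]; linarith))
    simp [φ, φa, h1, h2]
  have hφ1 : ∀ x, φ (x, t₁) = τ' (G x) := by
    intro x
    have h2 : ρ₁ t₁ = 1 := hρ₁1 _ (hO₁ rfl)
    simp [φ, φa, h2]
  have hmid : NH M (fun x => emb p (2 * ρ (x, t₀) - 1, ρ (x, t₀) • φ (x, t₀)))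
      (fun x => emb p (2 * ρ (x, t₁) - 1, ρ (x, t₁) • φ (x, t₁))) := by
    refine NH.of_path (G := fun z => emb p (2 * ρ z - 1, ρ z • φ z)) (by fun_prop) (by linarith) ?_
    intro x hx t h0 h1 he
    obtain ⟨ha, hb⟩ := emb_eq_zero he
    rcases smul_eq_zero.1 hb with hb | hb
    · rw [hb] at ha; norm_num at ha
    · rcases hρX _ (mk_mem_prod hx (mem_univ t)) hb with h | h
      · rw [h] at ha; norm_num at ha
      · rw [hρ1 _ (hKO ⟨h.1, mem_univ _, h0, h1⟩)] at ha; norm_num at ha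
  have hA : NH M F (fun x => emb p (2 * ρ (x, t₀) - 1, ρ (x, t₀) • τ (F x))) := by
    refine end_line hF hfF hfs hf hc (r := fun x => ρ (x, t₀)) (by fun_prop) (fun x => (hρ01 _).1) (fun x hx => ?_)
      (fun x hx h0 => ?_)
    · have : (x, t₀) ∈ Xc ∩ (univ ×ˢ Iio ε) := by
        rw [hL]; exact ⟨hx, by simp only; linarith, by simp only; linarith⟩
      exact hρ1 _ (hKO ⟨this.1, mem_univ _, by simp only; linarith, by simp only; linarith⟩)
    · refine (hρX _ (mk_mem_prod hx (mem_univ t₀)) (by rw [hφ0]; exact h0)).imp_right fun h => ?_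
      have : (x, t₀) ∈ Xc ∩ (univ ×ˢ Iio ε) := ⟨h.1, mem_univ _, by simp only [mem_Iio]; linarith⟩
      rw [hL] at this; exact this.1
  have hB : NH M G (fun x => emb p (2 * ρ (x, t₁) - 1, ρ (x, t₁) • τ' (G x))) := by
    refine end_line hG hgG hgs hg hc' (r := fun x => ρ (x, t₁)) (by fun_prop) (fun x => (hρ01 _).1) (fun x hx => ?_)
      (fun x hx h0 => ?_)
    · have : (x, t₁) ∈ Xc ∩ (univ ×ˢ Ioi (1 - ε)) := by
        rw [hR]; exact ⟨hx, by simp only; linarith, by simp only; linarith⟩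
      exact hρ1 _ (hKO ⟨this.1, mem_univ _, by simp only; linarith, by simp only; linarith⟩)
    · refine (hρX _ (mk_mem_prod hx (mem_univ t₁)) (by rw [hφ1]; exact h0)).imp_right fun h => ?_
      have : (x, t₁) ∈ Xc ∩ (univ ×ˢ Ioi (1 - ε)) := ⟨h.1, mem_univ _, by simp only [mem_Ioi]; linarith⟩
      rw [hR] at this; exact this.1
  simp only [hφ0, hφ1] at hmid
  obtain ⟨H, h1, h2, h3, h4⟩ := (hA.trans hmid).trans hB.symm
  exact NH.homotopic ⟨H, h1, h2, fun x hx t ht => (h3 x hx t ht).trans (hfF hx).symm,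
    fun x hx t ht => (h4 x hx t ht).trans (hgG hx).symm⟩ hfs hgs

end Thom
end Part12

section Part13
open scoped ContDiff
open Filter

section Realise
variable {p : ℕ}
variable {E : Type*} [NormedAddCommGroup E] [InnerProductSpace ℝ E] {m : ℕ} [FiniteDimensional ℝ E]

theorem norm_emb_sq (a : ℝ) (v : Eu p) : ‖emb p (a, v)‖ ^ 2 = a ^ 2 + ‖v‖ ^ 2 := by
  rw [EuclideanSpace.norm_sq_eq, EuclideanSpace.norm_sq_eq, Fin.sum_univ_succ]
  simp only [emb_zero, emb_succ, Real.norm_eq_abs, sq_abs]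

theorem emb_one_zero : emb p (1, 0) = e0 p := by rw [emb_apply]; simp

theorem emb_single (i : Fin p) : emb p (0, EuclideanSpace.single i 1) = eS p i := by
  rw [emb_apply]; simp

theorem deriv_normalise {φ : E → Eu p} {x : E} {A : E →L[ℝ] Eu p} (h : HasFDerivAt φ A x) (h0 : φ x = 0) :
    HasFDerivAt (fun z => ‖emb p (1, φ z)‖⁻¹ • emb p (1, φ z))
      ((emb p).comp ((0 : E →L[ℝ] ℝ).prod A)) x := by
  have h1 : HasFDerivAt (fun z => emb p (1, φ z)) ((emb p).comp ((0 : E →L[ℝ] ℝ).prod A)) x :=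
    (emb p).hasFDerivAt.comp x ((hasFDerivAt_const (1 : ℝ) x).prodMk h)
  have h2 : HasFDerivAt (fun z => 1 + ‖φ z‖ ^ 2) (0 : E →L[ℝ] ℝ) x := by
    have := (h.norm_sq).const_add 1
    rw [h0] at this
    refine this.congr_fderiv ?_
    ext v; simp
  have h3 : HasFDerivAt (fun z => (√(1 + ‖φ z‖ ^ 2))⁻¹) (0 : E →L[ℝ] ℝ) x := by
    have h4 := (hasDerivAt_inv (x := √(1 + ‖φ x‖ ^ 2)) (by simp [h0])).comp_hasFDerivAt x
      (h2.sqrt (by simp [h0]))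
    refine h4.congr_fderiv ?_
    simp
  have h5 : (fun z => ‖emb p (1, φ z)‖⁻¹ • emb p (1, φ z)) =
      fun z => (√(1 + ‖φ z‖ ^ 2))⁻¹ • emb p (1, φ z) := by
    ext1 z
    rw [← Real.sqrt_sq (norm_nonneg (emb p (1, φ z))), norm_emb_sq]; simp
  rw [h5]
  have h6 := h3.fun_smul h1
  refine h6.congr_fderiv ?_
  ext v; simp [h0]

theorem realise {M : Set E} (hM : IsSubmanifold M m) {N : Set E} {ν : Fin p → E → E}
    (h : IsFramedSubmanifold M m N p ν) :
    ∃ f : E → Eu (p + 1), SmoothOnSet f M ∧ (∀ x ∈ M, f x ∈ sphereSet p) ∧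
      IsPontryaginManifold m p f M (e0 p) (eS p) N ν := by
  choose u hu huu using fun i => (h.framing.smooth i).exists_global h.compact.isClosed
  have huX : ∀ z ∈ N, ∀ i, u i z = ν i z := fun z hz i => (huu i hz).symm
  have hN : IsMfd N := h.submanifold.isMfd
  have hind : ∀ z ∈ N, ∀ c : Eu p, ∑ i, c i • u i z ∈ SubTangent N z → c = 0 := by
    intro z hz c hcz
    refine hind_of (innerSL ℝ) innerSL_posdef (T := SubTangent N z) (u := fun i => ν i z) (fun i v hv => ?_)
      (h.framing.indep z hz) c ?_
    · exact h.framing.orth i z hz v hv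
    · simpa only [huX z hz] using hcz
  have hspan : ∀ z ∈ N, SubTangent N z ⊔ Submodule.span ℝ (range fun i => u i z) = SubTangent M z := by
    intro z hz
    simpa only [huX z hz] using h.framing.spans z hz
  obtain ⟨φ, hφ, W, hW, hKW, hg⟩ := good_compact hN h.compact Subset.rfl hu hind
  obtain ⟨ρ, hρ, hρ01, ⟨O, hO, hNO, hρ1⟩, hρX⟩ :=
    thom_bump hM.isMfd hN h.subset h.compact Subset.rfl hφ hW hKW hg hspan
  let H : E → Eu (p + 1) := fun z => emb p (2 * ρ z - 1, ρ z • φ z)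
  have hH : ContDiff ℝ ∞ H := by fun_prop
  have hH0 : ∀ z ∈ M, H z ≠ 0 := by
    intro x hx he
    obtain ⟨ha, hb⟩ := emb_eq_zero he
    rcases smul_eq_zero.1 hb with hb | hb
    · rw [hb] at ha; norm_num at ha
    · rcases hρX _ hx hb with h | h
      · rw [h] at ha; norm_num at ha
      · rw [hρ1 _ (hNO h)] at ha; norm_num at ha
  have hφN : ∀ x ∈ N, φ x = 0 := fun x hx => (hg x (hKW hx) hx).1
  have hpre : N = {x ∈ M | ‖H x‖⁻¹ • H x = e0 p} := by
    ext x
    constructor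
    · intro hx
      refine ⟨h.subset hx, ?_⟩
      have : H x = e0 p := by
        simp only [H, hρ1 x (hNO hx), hφN x hx, smul_zero]
        rw [← emb_one_zero]; norm_num
      rw [this]
      have : ‖e0 p‖ = 1 := by simpa [sphereSet] using e0_mem (p := p)
      rw [this]; simp
    · rintro ⟨hx, he⟩
      have hn : 0 < ‖H x‖ := norm_pos_iff.2 (hH0 x hx)
      have he' : H x = emb p (‖H x‖, 0) := by
        rw [emb_apply]
        simp only [PiLp.zero_apply, zero_smul, Finset.sum_const_zero, add_zero]
        rw [← he, smul_smul, mul_inv_cancel₀ hn.ne', one_smul]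
      have h1 : 2 * ρ x - 1 = ‖H x‖ := by
        rw [← emb_zero (2 * ρ x - 1) (ρ x • φ x), ← emb_zero ‖H x‖ (0 : Eu p), ← he']
      have h2 : ρ x • φ x = 0 := by
        ext i
        rw [← emb_succ (2 * ρ x - 1) (ρ x • φ x), ← emb_succ ‖H x‖ (0 : Eu p), ← he']
      have h3 : ρ x ≠ 0 := by intro h0; rw [h0] at h1; linarith
      exact (hρX x hx ((smul_eq_zero.1 h2).resolve_left h3)).resolve_left h3
  have hder : ∀ x ∈ N, HasDerivOn (fun z => ‖H z‖⁻¹ • H z) M x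
      ((emb p).comp ((0 : E →L[ℝ] ℝ).prod (fderiv ℝ φ x))) := by
    intro x hx
    refine ⟨_, Eventually.of_forall fun _ _ => rfl, rfl, ?_⟩
    refine (deriv_normalise (hφ.differentiable (by simp) x).hasFDerivAt (hφN x hx)).congr_of_eventuallyEq ?_
    filter_upwards [hO.mem_nhds (hNO hx)] with z hz
    simp only [H, hρ1 z hz, one_smul]
    norm_num
  have hLν : ∀ x ∈ N, ∀ i, ((emb p).comp ((0 : E →L[ℝ] ℝ).prod (fderiv ℝ φ x))) (ν i x) = eS p i := by
    intro x hx i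
    have := (hg x (hKW hx) hx).2 i
    rw [huX x hx i] at this
    simp only [ContinuousLinearMap.comp_apply, ContinuousLinearMap.prod_apply, this]
    exact emb_single i
  refine ⟨fun z => ‖H z‖⁻¹ • H z, normalise_smoothOnSet hH hH0, fun x hx => normalise_mem (hH0 x hx),
    h, e0_mem, e_basis, ?_, hpre, fun x hx => ⟨_, hder x hx, hLν x hx⟩⟩
  intro x hx he
  have hxN : x ∈ N := by rw [hpre]; exact ⟨hx, he⟩
  refine ⟨_, hder x hxN, fun v hv => ?_⟩
  rw [mem_sphere_tangent e0_mem] at hv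
  refine ⟨∑ i : Fin p, v i.succ • ν i x,
    Submodule.sum_mem _ fun i _ => Submodule.smul_mem _ _ (h.framing.mem_tangent i x hxN), ?_⟩
  rw [map_sum]
  simp only [map_smul, ContinuousLinearMap.coe_coe, hLν x hxN]
  have hv0 : v 0 = 0 := by simpa [e0, EuclideanSpace.inner_single_left] using hv
  ext j
  refine Fin.cases ?_ (fun j => ?_) j
  · simp [eS, hv0, (Fin.succ_ne_zero _).symm]
  · simp [eS, Pi.single_apply]

end Realise
end Part13

section Part14
open scoped ContDiff
open Filter

section Core
variable {E : Type*} [NormedAddCommGroup E] [InnerProductSpace ℝ E]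

theorem homotopic_refl {p : ℕ} {M : Set E} {f : E → Eu (p + 1)} (hf : SmoothOnSet f M)
    (hfs : ∀ x ∈ M, f x ∈ sphereSet p) : SmoothHomotopicOn M f f (sphereSet p) := by
  refine ⟨fun z => f z.1, ?_, fun x hx _ => hfs x hx, fun _ _ => rfl, fun _ _ => rfl⟩
  rintro z ⟨hz, -⟩
  obtain ⟨U, g, h1, h2, h3, h4⟩ := hf z.1 hz
  refine ⟨U ×ˢ univ, fun z => g z.1, h1.prod isOpen_univ, ⟨h2, mem_univ _⟩,
    h3.comp contDiff_fst.contDiffOn fun _ h => h.1, fun z' h => h4 ⟨h.1.1, h.2.1⟩⟩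

theorem empty_framed (m p : ℕ) (ν : Fin p → E → E) : IsFramedSubmanifold (∅ : Set E) m ∅ p ν where
  subset := Subset.rfl
  compact := isCompact_empty
  submanifold := fun x hx => hx.elim
  framing := ⟨fun _ x hx => hx.elim, fun _ x hx => hx.elim, fun _ x hx => hx.elim,
    fun x hx => hx.elim, fun x hx => hx.elim⟩

theorem empty_pont (m p : ℕ) (f : E → Eu (p + 1)) (ν : Fin p → E → E) :
    IsPontryaginManifold m p f (∅ : Set E) (e0 p) (eS p) ∅ ν where
  framed := empty_framed m p ν
  mem_sphere := e0_mem
  basis := e_basis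
  regular := fun x hx => hx.elim
  preimage := by ext; simp
  pullback := fun x hx => hx.elim

theorem core {M : Set E} {m : ℕ} (p : ℕ) (hM : IsSubmanifold M m) (hMc : IsCompact M) :
    (∀ f : E → Eu (p + 1), SmoothOnSet f M → (∀ x ∈ M, f x ∈ sphereSet p) →
      ∃ y w N ν, IsPontryaginManifold m p f M y w N ν) ∧
    (∀ (f g : E → Eu (p + 1)) y w N ν y' w' N' ν', SmoothHomotopicOn M f g (sphereSet p) →
      IsPontryaginManifold m p f M y w N ν → IsPontryaginManifold m p g M y' w' N' ν' →
      FramedCobordant M m p N ν N' ν') ∧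
    (∀ (f g : E → Eu (p + 1)) y w N ν y' w' N' ν', SmoothOnSet f M → (∀ x ∈ M, f x ∈ sphereSet p) →
      SmoothOnSet g M → (∀ x ∈ M, g x ∈ sphereSet p) →
      IsPontryaginManifold m p f M y w N ν → IsPontryaginManifold m p g M y' w' N' ν' →
      FramedCobordant M m p N ν N' ν' → SmoothHomotopicOn M f g (sphereSet p)) ∧
    (∀ N ν, IsFramedSubmanifold M m N p ν → ∃ f : E → Eu (p + 1), SmoothOnSet f M ∧
      (∀ x ∈ M, f x ∈ sphereSet p) ∧ IsPontryaginManifold m p f M (e0 p) (eS p) N ν) := by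
  rcases finiteDimensional_or_empty hM hMc with hE | rfl
  · exact ⟨fun f hf hfs => exists_pont hM hMc hf hfs,
      fun f g y w N ν y' w' N' ν' h hf hg => cob_of_homotopic hM hMc h hf hg,
      fun f g y w N ν y' w' N' ν' h1 h2 h3 h4 hf hg h => homotopic_of_cob hM hMc h1 h2 h3 h4 hf hg h,
      fun N ν h => realise hM h⟩
  · refine ⟨fun f hf hfs => ⟨_, _, _, _, empty_pont m p f fun _ _ => 0⟩, ?_, ?_, ?_⟩
    · intro f g y w N ν y' w' N' ν' h hf hg
      obtain rfl : N = ∅ := subset_empty_iff.1 hf.framed.subset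
      obtain rfl : N' = ∅ := subset_empty_iff.1 hg.framed.subset
      exact cobordant_empty _ _ _
    · intro f g y w N ν y' w' N' ν' _ _ _ _ hf hg h
      exact ⟨fun _ => 0, fun z hz => hz.1.elim, fun x hx => hx.elim, fun x hx => hx.elim, fun x hx => hx.elim⟩
    · intro N ν h
      obtain rfl : N = ∅ := subset_empty_iff.1 h.subset
      exact ⟨fun _ => 0, fun z hz => hz.elim, fun x hx => hx.elim, empty_pont m p _ ν⟩

end Core
end Part14

/-- **The Pontryagin–Thom correspondence.**
(i) The framed cobordism class of the Pontryagin manifold of `f` does not depend on the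
choice of regular value and positively oriented tangent basis;
(ii) two smooth maps are smoothly homotopic iff their Pontryagin manifolds are framed
cobordant;
hence (iii) the Pontryagin construction is a bijection `[M, S^p] ≅ Π^p_fr(M)`. -/
theorem pontryagin_thom (hM : IsSubmanifold M m) (hMc : IsCompact M) :
    (∀ (f : E → EuclideanSpace ℝ (Fin (p + 1))), SmoothOnSet f M →
      (∀ x ∈ M, f x ∈ sphereSet p) →
      ∀ y w N ν y' w' N' ν',
        IsPontryaginManifold m p f M y w N ν →
        IsPontryaginManifold m p f M y' w' N' ν' →
        FramedCobordant M m p N ν N' ν') ∧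
    (∀ (f g : E → EuclideanSpace ℝ (Fin (p + 1))), SmoothOnSet f M →
      (∀ x ∈ M, f x ∈ sphereSet p) → SmoothOnSet g M →
      (∀ x ∈ M, g x ∈ sphereSet p) →
      (SmoothHomotopicOn M f g (sphereSet p) ↔
        ∃ y w N ν y' w' N' ν',
          IsPontryaginManifold m p f M y w N ν ∧
          IsPontryaginManifold m p g M y' w' N' ν' ∧
          FramedCobordant M m p N ν N' ν')) ∧
    (∃ Φ : SmoothMapClasses M p → FramedCobordismClasses M m p,
      Function.Bijective Φ ∧
      ∀ (f : SmoothSphereMap M p) (y w N ν)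
        (h : IsPontryaginManifold m p f.1 M y w N ν),
        Φ (Quot.mk _ f) = Quot.mk _ (⟨(N, ν), h.framed⟩ : FramedPair M m p)) := by
  obtain ⟨hA, hB, hC, hD⟩ := core p hM hMc
  have h1 : ∀ (f : E → EuclideanSpace ℝ (Fin (p + 1))), SmoothOnSet f M →
      (∀ x ∈ M, f x ∈ sphereSet p) →
      ∀ y w N ν y' w' N' ν',
        IsPontryaginManifold m p f M y w N ν →
        IsPontryaginManifold m p f M y' w' N' ν' →
        FramedCobordant M m p N ν N' ν' :=
    fun f hf hfs y w N ν y' w' N' ν' h h' =>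
      hB f f y w N ν y' w' N' ν' (homotopic_refl hf hfs) h h'
  refine ⟨h1, ?_, ?_⟩
  · intro f g hf hfs hg hgs
    constructor
    · intro h
      obtain ⟨y, w, N, ν, hP⟩ := hA f hf hfs
      obtain ⟨y', w', N', ν', hP'⟩ := hA g hg hgs
      exact ⟨y, w, N, ν, y', w', N', ν', hP, hP', hB f g y w N ν y' w' N' ν' h hP hP'⟩
    · rintro ⟨y, w, N, ν, y', w', N', ν', hP, hP', hc⟩
      exact hC f g y w N ν y' w' N' ν' hf hfs hg hgs hP hP' hc
  · choose Y W NN V hP using fun f : SmoothSphereMap M p => hA f.1 f.2.1 f.2.2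
    choose R hR1 hR2 hR3 using fun a : FramedPair M m p => hD a.1.1 a.1.2 a.2
    let Φ : SmoothMapClasses M p → FramedCobordismClasses M m p :=
      Quot.lift (fun f => Quot.mk _ (⟨(NN f, V f), (hP f).framed⟩ : FramedPair M m p))
        fun f g hfg => Quot.sound (hB f.1 g.1 _ _ _ _ _ _ _ _ hfg (hP f) (hP g))
    let Ψ : FramedCobordismClasses M m p → SmoothMapClasses M p :=
      Quot.lift (fun a => Quot.mk _ (⟨R a, hR1 a, hR2 a⟩ : SmoothSphereMap M p))
        fun a b hab => Quot.sound
          (hC (R a) (R b) _ _ _ _ _ _ _ _ (hR1 a) (hR2 a) (hR1 b) (hR2 b) (hR3 a) (hR3 b) hab)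
    have hΨΦ : LeftInverse Ψ Φ := by
      intro q
      induction q using Quot.ind with
      | _ f =>
        refine Quot.sound ?_
        exact hC _ f.1 _ _ _ _ _ _ _ _ (hR1 _) (hR2 _) f.2.1 f.2.2 (hR3 _) (hP f)
          (h1 f.1 f.2.1 f.2.2 _ _ _ _ _ _ _ _ (hP f) (hP f))
    have hspec : ∀ (f : SmoothSphereMap M p) (y w N ν)
        (h : IsPontryaginManifold m p f.1 M y w N ν),
        Φ (Quot.mk _ f) = Quot.mk _ (⟨(N, ν), h.framed⟩ : FramedPair M m p) :=
      fun f y w N ν h => Quot.sound (h1 f.1 f.2.1 f.2.2 _ _ _ _ _ _ _ _ (hP f) h)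
    have hΦΨ : RightInverse Ψ Φ := by
      intro q
      induction q using Quot.ind with
      | _ a => exact hspec ⟨R a, hR1 a, hR2 a⟩ _ _ _ _ (hR3 a)
    exact ⟨Φ, ⟨hΨΦ.injective, hΦΨ.surjective⟩, hspec⟩

end Paper
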